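/- There exist δ > 0, a constant c > 0, and a set S of positive integers of density one such that for every N ∈ S, ord(A,N) ≥ c·N^{1/2}·exp((log N)^δ). -/

import Mathlib

open Matrix

/-- `matOrd A N` is the order of `A` modulo `N`: the least `k ≥ 1`
with `A^k ≡ I (mod N)`. -/
noncomputable def matOrd (A : Matrix (Fin 2) (Fin 2) ℤ) (N : ℕ) : ℕ :=
  sInf {k | 0 < k ∧ ∀ i j, (N : ℤ) ∣ (A ^ k - 1) i j}

/-- A set of positive integers has density one. -/
def DensityOne (S : Set ℕ) : Prop :=
  Filter.Tendsto (fun x : ℕ => ((S ∩ Set.Icc 1 x).ncard : ℝ) / x)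
    Filter.atTop (nhds 1)

set_option linter.all false

namespace LargeOrd

/-! ### Part 1: orders of the matrix -/

/-- reduction of an integer matrix modulo `N` -/
def red (N : ℕ) (A : Matrix (Fin 2) (Fin 2) ℤ) : Matrix (Fin 2) (Fin 2) (ZMod N) :=
  (Int.castRingHom (ZMod N)).mapMatrix A

theorem red_pow_eq_one_iff (A : Matrix (Fin 2) (Fin 2) ℤ) (N k : ℕ) :
    (∀ i j, (N : ℤ) ∣ (A ^ k - 1) i j) ↔ (red N A) ^ k = 1 := by
  have h : (red N A) ^ k - 1 = (Int.castRingHom (ZMod N)).mapMatrix (A ^ k - 1) := by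
    rw [map_sub, map_pow, map_one]; rfl
  rw [← sub_eq_zero, h]
  constructor
  · intro H
    ext i j
    simp only [RingHom.mapMatrix_apply, Matrix.map_apply, Matrix.zero_apply, eq_intCast]
    exact (ZMod.intCast_zmod_eq_zero_iff_dvd _ _).2 (H i j)
  · intro H i j
    have := congrFun (congrFun H i) j
    simp only [RingHom.mapMatrix_apply, Matrix.map_apply, Matrix.zero_apply, eq_intCast] at this
    exact (ZMod.intCast_zmod_eq_zero_iff_dvd _ _).1 this

theorem red_det (A : Matrix (Fin 2) (Fin 2) ℤ) (hA : A.det = 1) (N : ℕ) : (red N A).det = 1 := by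
  unfold red
  rw [← RingHom.map_det, hA, map_one]

theorem red_orderOf_pos (A : Matrix (Fin 2) (Fin 2) ℤ) (hA : A.det = 1) (N : ℕ) (hN : 0 < N) :
    0 < orderOf (red N A) := by
  haveI : NeZero N := ⟨hN.ne'⟩
  have hu : IsUnit (red N A) := by
    rw [Matrix.isUnit_iff_isUnit_det, red_det A hA]; exact isUnit_one
  obtain ⟨u, hu⟩ := hu
  rw [← hu, orderOf_units]
  exact orderOf_pos u

theorem matOrd_eq (A : Matrix (Fin 2) (Fin 2) ℤ) (hA : A.det = 1) (N : ℕ) (hN : 0 < N) :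
    matOrd A N = orderOf (red N A) := by
  have hp := red_orderOf_pos A hA N hN
  unfold matOrd
  apply le_antisymm
  · apply Nat.sInf_le
    exact ⟨hp, (red_pow_eq_one_iff A N _).2 (pow_orderOf_eq_one _)⟩
  · have hne : {k | 0 < k ∧ ∀ i j, (N : ℤ) ∣ (A ^ k - 1) i j}.Nonempty :=
      ⟨_, hp, (red_pow_eq_one_iff A N _).2 (pow_orderOf_eq_one _)⟩
    have := Nat.sInf_mem hne
    exact orderOf_le_of_pow_eq_one this.1 ((red_pow_eq_one_iff A N _).1 this.2)

theorem matOrd_pos (A : Matrix (Fin 2) (Fin 2) ℤ) (hA : A.det = 1) (N : ℕ) (hN : 0 < N) :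
    0 < matOrd A N := by
  rw [matOrd_eq A hA N hN]; exact red_orderOf_pos A hA N hN

theorem matOrd_spec (A : Matrix (Fin 2) (Fin 2) ℤ) (hA : A.det = 1) (N : ℕ) (hN : 0 < N) :
    ∀ i j, (N : ℤ) ∣ (A ^ (matOrd A N) - 1) i j := by
  rw [red_pow_eq_one_iff, matOrd_eq A hA N hN]; exact pow_orderOf_eq_one _

theorem matOrd_dvd (A : Matrix (Fin 2) (Fin 2) ℤ) (hA : A.det = 1) (M N : ℕ) (hN : 0 < N)
    (h : M ∣ N) : matOrd A M ∣ matOrd A N := by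
  have hM : 0 < M := Nat.pos_of_dvd_of_pos h hN
  rw [matOrd_eq A hA M hM]
  apply orderOf_dvd_of_pow_eq_one
  rw [← red_pow_eq_one_iff]
  intro i j
  exact (Int.natCast_dvd_natCast.2 h).trans (matOrd_spec A hA N hN i j)

theorem cayley {R : Type*} [CommRing R] (B : Matrix (Fin 2) (Fin 2) R) (hB : B.det = 1) :
    B * B = B.trace • B - 1 := by
  rw [Matrix.det_fin_two] at hB
  rw [Matrix.trace_fin_two]
  ext i j
  fin_cases i <;> fin_cases j <;>
    simp [Matrix.mul_apply, Fin.sum_univ_two, Matrix.one_apply] <;>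
    first | ring1 | linear_combination hB | linear_combination (-1) * hB

theorem frob (p : ℕ) [Fact p.Prime] (hp2 : p ≠ 2) (B : Matrix (Fin 2) (Fin 2) (ZMod p))
    (hB : B.det = 1) (hD : B.trace ^ 2 - 4 ≠ 0) : B ^ (p - 1) = 1 ∨ B ^ (p + 1) = 1 := by
  have hp := Fact.out (p := p.Prime)
  set t := B.trace with ht
  have hc := cayley B hB
  rw [← ht] at hc
  have h2 : (2 : ZMod p) ≠ 0 := by
    intro h
    have : ((2 : ℕ) : ZMod p) = 0 := by exact_mod_cast h
    rw [ZMod.natCast_eq_zero_iff] at this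
    exact hp2 ((Nat.prime_dvd_prime_iff_eq hp Nat.prime_two).1 this)
  have hu : IsUnit B := by
    rw [Matrix.isUnit_iff_isUnit_det, hB]; exact isUnit_one
  set E : Matrix (Fin 2) (Fin 2) (ZMod p) := (2 : ZMod p) • B - t • 1 with hE
  have hE2 : E ^ 2 = (t ^ 2 - 4) • 1 := by
    rw [hE, sq, sub_mul, mul_sub, mul_sub, smul_mul_smul_comm, hc]
    simp only [smul_mul_assoc, mul_smul_comm, one_mul, mul_one, smul_sub, smul_smul]
    module
  have hodd : p = 2 * (p / 2) + 1 := by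
    have := hp.eq_two_or_odd; omega
  have hEp : E ^ p = (t ^ 2 - 4) ^ (p / 2) • E := by
    have hpe : E ^ p = E ^ (2 * (p / 2) + 1) := congrArg (E ^ ·) hodd
    rw [hpe, pow_succ, pow_mul, hE2, smul_pow, one_pow, smul_mul_assoc, one_mul]
  have hBE : (2 : ZMod p) • B = E + t • 1 := by rw [hE]; simp
  have hcomm : Commute E (t • (1 : Matrix (Fin 2) (Fin 2) (ZMod p))) := by
    rw [Commute, SemiconjBy]; simp
  have h2B : (2 : ZMod p) • B ^ p = (t ^ 2 - 4) ^ (p / 2) • E + t • 1 := by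
    have h : ((2 : ZMod p) • B) ^ p = (E + t • 1) ^ p := by rw [hBE]
    rw [add_pow_char_of_commute p hcomm, hEp, smul_pow, smul_pow, ZMod.pow_card, ZMod.pow_card,
      one_pow] at h
    exact h
  rcases ZMod.pow_div_two_eq_neg_one_or_one p hD with h | h
  · left
    rw [h, one_smul, ← hBE] at h2B
    have h3 : B ^ p = B := by
      have := congrArg (fun M => (2 : ZMod p)⁻¹ • M) h2B
      simpa [smul_smul, inv_mul_cancel₀ h2] using this
    have h4 : B ^ (p - 1) * B = 1 * B := by
      rw [← pow_succ, Nat.sub_add_cancel hp.one_le, h3, one_mul]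
    exact hu.mul_right_cancel h4
  · right
    rw [h, hE] at h2B
    have h3 : B ^ p = t • 1 - B := by
      have h5 : (2 : ZMod p) • B ^ p = (2 : ZMod p) • (t • 1 - B) := by
        rw [h2B]; module
      have := congrArg (fun M => (2 : ZMod p)⁻¹ • M) h5
      simpa only [smul_smul, inv_mul_cancel₀ h2, one_smul] using this
    rw [pow_succ, h3, sub_mul, hc]
    simp

theorem matOrd_dvd_pm (A : Matrix (Fin 2) (Fin 2) ℤ) (hA : A.det = 1) (htr : 2 < |A.trace|) :
    ∃ p0 : ℕ, ∀ p : ℕ, p.Prime → p0 < p → matOrd A p ∣ p - 1 ∨ matOrd A p ∣ p + 1 := by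
  refine ⟨max 2 (A.trace ^ 2 - 4).natAbs, fun p hp hlt => ?_⟩
  haveI : Fact p.Prime := ⟨hp⟩
  have h1 : p ≠ 2 := by have := le_max_left 2 (A.trace ^ 2 - 4).natAbs; omega
  have h2 : (A.trace ^ 2 - 4).natAbs < p := lt_of_le_of_lt (le_max_right _ _) hlt
  have hne : A.trace ^ 2 - 4 ≠ 0 := by
    have h3 : 2 ^ 2 < |A.trace| ^ 2 := by gcongr
    rw [sq_abs] at h3
    omega
  have htred : (red p A).trace = ((A.trace : ℤ) : ZMod p) := by
    simp [red, Matrix.trace_fin_two]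
  have hD : (red p A).trace ^ 2 - 4 ≠ 0 := by
    rw [htred]
    intro h
    have h4 : ((A.trace ^ 2 - 4 : ℤ) : ZMod p) = 0 := by push_cast; exact h
    rw [ZMod.intCast_zmod_eq_zero_iff_dvd] at h4
    have h5 := Int.natAbs_dvd_natAbs.2 h4
    rw [Int.natAbs_natCast] at h5
    have := Nat.le_of_dvd (Int.natAbs_pos.2 hne) h5
    omega
  rw [matOrd_eq A hA p hp.pos]
  rcases frob p h1 (red p A) (red_det A hA p) hD with h | h
  · left; exact orderOf_dvd_of_pow_eq_one h
  · right; exact orderOf_dvd_of_pow_eq_one h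

theorem trace_rec (A : Matrix (Fin 2) (Fin 2) ℤ) (hA : A.det = 1) (n : ℕ) :
    (A ^ (n + 2)).trace = A.trace * (A ^ (n + 1)).trace - (A ^ n).trace := by
  have : A ^ (n + 2) = A.trace • A ^ (n + 1) - A ^ n := by
    rw [pow_add, sq, cayley A hA, mul_sub, mul_one, mul_smul_comm, pow_succ]
  rw [this, Matrix.trace_sub, Matrix.trace_smul, smul_eq_mul]

theorem trace_grow (A : Matrix (Fin 2) (Fin 2) ℤ) (hA : A.det = 1) (htr : 2 < |A.trace|) (n : ℕ) :
    2 ≤ |(A ^ n).trace| ∧ |(A ^ n).trace| < |(A ^ (n + 1)).trace| ∧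
      |(A ^ n).trace| ≤ (|A.trace| + 2) ^ (n + 1) ∧
      |(A ^ (n + 1)).trace| ≤ (|A.trace| + 2) ^ (n + 2) := by
  induction n with
  | zero =>
    have h0 : (A ^ 0).trace = 2 := by simp [Matrix.trace_fin_two]
    rw [h0]
    simp only [zero_add, pow_one]
    refine ⟨by norm_num, by simpa using htr, by simp, ?_⟩
    nlinarith [abs_nonneg A.trace]
  | succ n ih =>
    obtain ⟨h1, h2, h3, h4⟩ := ih
    have hr := trace_rec A hA n
    have e1 : |A.trace| * |(A ^ (n + 1)).trace| ≤ |(A ^ (n + 2)).trace| + |(A ^ n).trace| := by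
      rw [← abs_mul]
      have : A.trace * (A ^ (n + 1)).trace = (A ^ (n + 2)).trace + (A ^ n).trace := by
        rw [hr]; ring
      rw [this]; exact abs_add_le _ _
    have e2 : |(A ^ (n + 2)).trace| ≤ |A.trace| * |(A ^ (n + 1)).trace| + |(A ^ n).trace| := by
      rw [hr, ← abs_mul]; exact abs_sub _ _
    refine ⟨by omega, ?_, h4, ?_⟩
    · show |(A ^ (n + 1)).trace| < |(A ^ (n + 2)).trace|
      nlinarith
    · show |(A ^ (n + 2)).trace| ≤ _
      calc _ ≤ |A.trace| * |(A ^ (n + 1)).trace| + |(A ^ n).trace| := e2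
        _ ≤ |A.trace| * (|A.trace| + 2) ^ (n + 2) + (|A.trace| + 2) ^ (n + 2) := by
            gcongr; omega
        _ ≤ (|A.trace| + 2) ^ (n + 1 + 2) := by
            have : 0 < (|A.trace| + 2) ^ (n + 2) := by positivity
            rw [show n + 1 + 2 = (n + 2) + 1 from rfl, pow_succ _ (n + 2)]
            nlinarith

theorem det_pow_sub_one (A : Matrix (Fin 2) (Fin 2) ℤ) (hA : A.det = 1) (n : ℕ) :
    (A ^ n - 1).det = 2 - (A ^ n).trace := by
  have h : (A ^ n).det = 1 := by rw [Matrix.det_pow, hA, one_pow]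
  rw [Matrix.det_fin_two] at h
  rw [Matrix.det_fin_two, Matrix.trace_fin_two]
  simp [Matrix.sub_apply, Matrix.one_apply]
  linear_combination h

theorem small_order_count (A : Matrix (Fin 2) (Fin 2) ℤ) (hA : A.det = 1) (htr : 2 < |A.trace|) :
    ∃ C : ℕ, ∀ (z : ℕ) (P : Finset ℕ), (∀ p ∈ P, p.Prime ∧ matOrd A p ≤ z) →
      P.card ≤ C * z ^ 2 := by
  set c : ℕ := (|A.trace| + 2).toNat + 2 with hc
  have hc' : (c : ℤ) = |A.trace| + 4 := by
    rw [hc]; push_cast; rw [Int.toNat_of_nonneg (by positivity)]; ring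
  obtain ⟨C, hC⟩ : ∃ C : ℕ, c ≤ 2 ^ C := ⟨c, Nat.lt_two_pow_self.le⟩
  refine ⟨2 * C, fun z P hP => ?_⟩
  set F : ℕ → ℕ := fun n => ((A ^ n - 1).det).natAbs with hF
  have hFne : ∀ n, 1 ≤ n → F n ≠ 0 := by
    intro n hn
    simp only [hF]
    rw [det_pow_sub_one A hA, Int.natAbs_ne_zero]
    obtain ⟨m, rfl⟩ := Nat.exists_eq_add_of_le' hn
    have := trace_grow A hA htr m
    intro h
    have h2 : (A ^ (m + 1)).trace = 2 := by omega
    rw [h2] at this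
    have := this.2.1
    simp at this
    omega
  have hFle : ∀ n, F n ≤ c ^ (n + 1) := by
    intro n
    have h1 : (F n : ℤ) ≤ (c : ℤ) ^ (n + 1) := by
      simp only [hF]
      rw [det_pow_sub_one A hA, Int.natCast_natAbs]
      have h2 := (trace_grow A hA htr n).2.2.1
      have h3 : |2 - (A ^ n).trace| ≤ 2 + |(A ^ n).trace| := by
        have := abs_sub (2 : ℤ) (A ^ n).trace
        simpa using this
      have h4 : (|A.trace| + 2) ^ (n + 1) + 2 ≤ (c : ℤ) ^ (n + 1) := by
        rw [hc', show |A.trace| + 4 = (|A.trace| + 2) + 2 by ring]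
        have h5 : ((|A.trace| + 2) : ℤ) ^ (n + 1) + 2 ^ (n + 1) ≤ ((|A.trace| + 2) + 2) ^ (n + 1) := by
          exact pow_add_pow_le (by positivity) (by positivity) (by omega)
        have h6 : (2 : ℤ) ≤ 2 ^ (n + 1) := by
          rw [pow_succ]; have : (0:ℤ) < 2 ^ n := by positivity
          omega
        linarith
      linarith
    exact_mod_cast h1
  have hdvd : ∏ p ∈ P, p ∣ ∏ n ∈ Finset.Icc 1 z, F n := by
    apply Finset.prod_primes_dvd
    · intro p hp; exact (hP p hp).1.prime
    · intro p hp
      obtain ⟨hpp, hz⟩ := hP p hp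
      have hpos := matOrd_pos A hA p hpp.pos
      apply Dvd.dvd.trans _ (Finset.dvd_prod_of_mem F (Finset.mem_Icc.2 ⟨hpos, hz⟩))
      simp only [hF]
      have hs := matOrd_spec A hA p hpp.pos
      rw [← Int.natCast_dvd]
      rw [Matrix.det_fin_two]
      exact dvd_sub (Dvd.dvd.mul_right (hs 0 0) _) (Dvd.dvd.mul_right (hs 0 1) _)
  have hne : ∏ n ∈ Finset.Icc 1 z, F n ≠ 0 :=
    Finset.prod_ne_zero_iff.2 fun n hn => hFne n (Finset.mem_Icc.1 hn).1
  have hle := Nat.le_of_dvd (Nat.pos_of_ne_zero hne) hdvd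
  have h1 : 2 ^ P.card ≤ ∏ p ∈ P, p := by
    rw [← Finset.prod_const]
    exact Finset.prod_le_prod' fun p hp => (hP p hp).1.two_le
  have h2 : ∏ n ∈ Finset.Icc 1 z, F n ≤ (2 ^ C) ^ ((z + 1) * z) := by
    calc _ ≤ ∏ n ∈ Finset.Icc 1 z, (2 ^ C) ^ (z + 1) := by
          apply Finset.prod_le_prod'
          intro n hn
          calc F n ≤ c ^ (n + 1) := hFle n
            _ ≤ (2 ^ C) ^ (n + 1) := Nat.pow_le_pow_left hC _
            _ ≤ _ := Nat.pow_le_pow_right (by positivity) (by have := (Finset.mem_Icc.1 hn).2; omega)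
      _ = _ := by rw [Finset.prod_const, Nat.card_Icc, Nat.add_sub_cancel, ← pow_mul]
  have h3 : 2 ^ P.card ≤ 2 ^ (C * ((z + 1) * z)) := by
    rw [pow_mul]; exact h1.trans (hle.trans h2)
  have h4 := (Nat.pow_le_pow_iff_right (by norm_num)).1 h3
  calc P.card ≤ C * ((z + 1) * z) := h4
    _ ≤ 2 * C * z ^ 2 := by
      rcases Nat.eq_zero_or_pos z with h | h
      · simp [h]
      · nlinarith [Nat.zero_le C, mul_le_mul_right h C, Nat.mul_le_mul_left (C*z) h]

end LargeOrd

set_option linter.all false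

namespace LargeOrd

/-! ### Part 2: Chebyshev bounds in blocks `(4^j, 4^(j+1)]` -/

theorem aux_pow_ineq (j : ℕ) (hj : 8 ≤ j) : 4 * (j + 2) + 16 * (j + 1) * 2 ^ j ≤ 4 ^ j := by
  induction j, hj using Nat.le_induction with
  | base => norm_num
  | succ n hn ih =>
    rw [pow_succ 2, pow_succ 4]
    have : 1 ≤ 2 ^ n := Nat.one_le_two_pow
    nlinarith

theorem primes_block (j : ℕ) (hj : 8 ≤ j) :
    (1 / 2 : ℝ) * 4 ^ j / j ≤ (((Finset.Ioc (4 ^ j) (4 ^ (j + 1))).filter Nat.Prime).card : ℝ) := by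
  set P := (Finset.Ioc (4 ^ j) (4 ^ (j + 1))).filter Nat.Prime with hP
  have hlog4 : (0 : ℝ) < Real.log 4 := Real.log_pos (by norm_num)
  have hlog2 : Real.log 4 = 2 * Real.log 2 := by
    rw [show (4 : ℝ) = 2 ^ 2 by norm_num, Real.log_pow]; norm_num
  have hth : Chebyshev.theta ((4 ^ (j + 1) : ℕ) : ℝ) =
      Chebyshev.theta ((4 ^ j : ℕ) : ℝ) + ∑ p ∈ P, Real.log p := by
    rw [Chebyshev.theta, Chebyshev.theta, Nat.floor_natCast, Nat.floor_natCast, hP,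
      ← Finset.sum_union]
    · congr 1
      rw [← Finset.filter_union]
      congr 1
      ext n
      have : 4 ^ j ≤ 4 ^ (j + 1) := Nat.pow_le_pow_right (by norm_num) (by omega)
      simp only [Finset.mem_Ioc, Finset.mem_union]; omega
    · rw [Finset.disjoint_left]
      intro n h1 h2
      simp only [Finset.mem_filter, Finset.mem_Ioc] at h1 h2; omega
  have h1 := Chebyshev.theta_ge (4 ^ (j + 1))
  have h2 := Chebyshev.theta_le_log4_mul_x (x := ((4 ^ j : ℕ) : ℝ)) (by positivity)
  have h3 : ∑ p ∈ P, Real.log p ≤ P.card * ((j + 1) * Real.log 4) := by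
    rw [← nsmul_eq_mul]
    apply Finset.sum_le_card_nsmul
    intro p hp
    simp only [hP, Finset.mem_filter, Finset.mem_Ioc] at hp
    have : Real.log p ≤ Real.log ((4 : ℝ) ^ (j + 1)) := by
      apply Real.log_le_log
      · exact_mod_cast hp.2.pos
      · exact_mod_cast hp.1.2
    rw [Real.log_pow] at this
    exact_mod_cast this
  have h4 : Real.log (((4 ^ (j + 1) : ℕ) : ℝ) + 1) ≤ (j + 2) * Real.log 4 := by
    have : Real.log (((4 ^ (j + 1) : ℕ) : ℝ) + 1) ≤ Real.log ((4 : ℝ) ^ (j + 2)) := by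
      apply Real.log_le_log (by positivity)
      push_cast
      have : (1 : ℝ) ≤ 4 ^ (j + 1) := one_le_pow₀ (by norm_num)
      rw [pow_succ 4 (j + 1)]; linarith
    rw [Real.log_pow] at this
    exact_mod_cast this
  have h5 : √((4 ^ (j + 1) : ℕ) : ℝ) = 2 ^ (j + 1) := by
    rw [Real.sqrt_eq_iff_mul_self_eq (by positivity) (by positivity)]
    push_cast
    rw [← mul_pow]; norm_num
  have h6 : Real.log ((4 ^ (j + 1) : ℕ) : ℝ) = (j + 1) * Real.log 4 := by
    push_cast; rw [Real.log_pow]; push_cast; ring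
  rw [h5, h6, hth] at h1
  have h7 : (4 * (j + 2) + 16 * (j + 1) * 2 ^ j : ℝ) ≤ 4 ^ j := by exact_mod_cast aux_pow_ineq j hj
  push_cast at h1 h2
  have h8 : (4 : ℝ) ^ j * (3 / 4) * Real.log 4 ≤ (P.card * (j + 1)) * Real.log 4 := by
    have e1 : (4 : ℝ) ^ (j + 1) * Real.log 2 = 2 * 4 ^ j * Real.log 4 := by
      rw [hlog2, pow_succ]; ring
    have e2 : 2 * (2 : ℝ) ^ (j + 1) * ((j + 1) * Real.log 4) = 4 * (j + 1) * 2 ^ j * Real.log 4 := by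
      rw [pow_succ]; ring
    push_cast at h4
    rw [e1, e2] at h1
    have := mul_le_mul_of_nonneg_right h7 hlog4.le
    nlinarith
  have h9 := le_of_mul_le_mul_right h8 hlog4
  have hj' : (8 : ℝ) ≤ j := by exact_mod_cast hj
  rw [div_le_iff₀ (by linarith)]
  have h10 : (P.card : ℝ) * (j + 1) ≤ P.card * (3 / 2 * j) := by gcongr; linarith
  linarith

theorem recip_lower (G : ℕ → Prop) [DecidablePred G] (c : ℝ) (hc : 0 < c) (j0 : ℕ)
    (h : ∀ j ≥ j0, c * 4 ^ j / j ≤ (((Finset.Ioc (4 ^ j) (4 ^ (j + 1))).filter G).card : ℝ))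
    (J1 J2 : ℕ) (h1 : j0 ≤ J1) (h1' : 1 ≤ J1) (h2 : J1 ≤ J2) :
    c / 4 * Real.log (J2 / J1) ≤ ∑ p ∈ (Finset.Ioc (4 ^ J1) (4 ^ J2)).filter G, (1 / p : ℝ) := by
  have hJ1 : (0 : ℝ) < J1 := by exact_mod_cast h1'
  induction J2, h2 using Nat.le_induction with
  | base => rw [div_self hJ1.ne']; simp
  | succ n hn ih =>
    have hn0 : (0 : ℝ) < n := lt_of_lt_of_le hJ1 (by exact_mod_cast hn)
    have hun : (Finset.Ioc (4 ^ J1) (4 ^ (n + 1))).filter G =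
        (Finset.Ioc (4 ^ J1) (4 ^ n)).filter G ∪ (Finset.Ioc (4 ^ n) (4 ^ (n + 1))).filter G := by
      rw [← Finset.filter_union]
      congr 1
      ext m
      have a1 : 4 ^ n ≤ 4 ^ (n + 1) := Nat.pow_le_pow_right (by norm_num) (by omega)
      have a2 : 4 ^ J1 ≤ 4 ^ n := Nat.pow_le_pow_right (by norm_num) (by omega)
      simp only [Finset.mem_Ioc, Finset.mem_union]; omega
    have hdis : Disjoint ((Finset.Ioc (4 ^ J1) (4 ^ n)).filter G)
        ((Finset.Ioc (4 ^ n) (4 ^ (n + 1))).filter G) := by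
      rw [Finset.disjoint_left]
      intro m a1 a2
      simp only [Finset.mem_filter, Finset.mem_Ioc] at a1 a2; omega
    rw [hun, Finset.sum_union hdis]
    have hb : c / 4 * (1 / n) ≤ ∑ p ∈ (Finset.Ioc (4 ^ n) (4 ^ (n + 1))).filter G, (1 / p : ℝ) := by
      calc c / 4 * (1 / n) = (c * 4 ^ n / n) * (1 / 4 ^ (n + 1)) := by
            rw [pow_succ]; field_simp
        _ ≤ (((Finset.Ioc (4 ^ n) (4 ^ (n + 1))).filter G).card : ℝ) * (1 / 4 ^ (n + 1)) := by
            gcongr; exact h n (by omega)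
        _ ≤ _ := by
            rw [← nsmul_eq_mul]
            apply Finset.card_nsmul_le_sum
            intro p hp
            simp only [Finset.mem_filter, Finset.mem_Ioc] at hp
            have hp0 : 0 < p := by omega
            have hp0' : (0 : ℝ) < p := by exact_mod_cast hp0
            apply one_div_le_one_div_of_le hp0'
            exact_mod_cast hp.1.2
    have hl : Real.log ((n + 1 : ℕ) / J1) ≤ Real.log (n / J1) + 1 / n := by
      have : ((n + 1 : ℕ) : ℝ) / J1 = (n / J1) * (1 + 1 / n) := by
        push_cast; field_simp
      rw [this, Real.log_mul (by positivity) (by positivity)]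
      have := Real.log_le_sub_one_of_pos (x := 1 + 1 / (n : ℝ)) (by positivity)
      linarith
    have : c / 4 * Real.log ((n + 1 : ℕ) / J1) ≤ c / 4 * (Real.log (n / J1) + 1 / n) := by gcongr
    linarith

end LargeOrd

set_option linter.all false
namespace LargeOrd

/-! ### Part 3: an upper bound sieve in arithmetic progressions -/

theorem count_ap (d v x l : ℕ) (hd : 0 < d) (hl : 0 < l) (h : Nat.Coprime d l) :
    |(((Finset.Ioc 0 x).filter (fun n => n ≡ v [MOD d] ∧ l ∣ n)).card : ℝ) - x / (d * l)| ≤ 1 := by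
  obtain ⟨u, hu1, hu2⟩ := Nat.chineseRemainder h v 0
  have e : (Finset.Ioc 0 x).filter (fun n => n ≡ v [MOD d] ∧ l ∣ n) =
      (Finset.Ioc 0 x).filter (fun n => n ≡ u [MOD (d * l)]) := by
    apply Finset.filter_congr
    intro n _
    rw [← Nat.modEq_and_modEq_iff_modEq_mul h, ← Nat.modEq_zero_iff_dvd]
    constructor
    · rintro ⟨a, b⟩; exact ⟨a.trans hu1.symm, b.trans hu2.symm⟩
    · rintro ⟨a, b⟩; exact ⟨a.trans hu1, b.trans hu2⟩
  rw [e]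
  have hdl : 0 < d * l := Nat.mul_pos hd hl
  have hc := Nat.Ioc_filter_modEq_card 0 x hdl u
  have hdq : (0:ℚ) < ((d * l : ℕ) : ℚ) := by exact_mod_cast hdl
  set a : ℚ := ((x:ℚ) - u) / ((d * l : ℕ) : ℚ)
  set b : ℚ := (((0:ℕ):ℚ) - u) / ((d * l : ℕ) : ℚ)
  have hab : a - b = (x : ℚ) / (d * l) := by
    simp only [a, b]; rw [← sub_div]; push_cast; ring
  have hab0 : b ≤ a := by
    have : 0 ≤ a - b := by rw [hab]; positivity
    linarith
  have hfl : ⌊b⌋ ≤ ⌊a⌋ := Int.floor_le_floor hab0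
  rw [max_eq_left (by linarith)] at hc
  set cc := ((Finset.Ioc 0 x).filter (fun n => n ≡ u [MOD (d * l)])).card
  have hc' : (cc : ℚ) = (⌊a⌋ : ℚ) - ⌊b⌋ := by exact_mod_cast hc
  have h1 := Int.floor_le a
  have h2 := Int.lt_floor_add_one a
  have h3 := Int.floor_le b
  have h4 := Int.lt_floor_add_one b
  have : |(cc : ℚ) - x / (d * l)| ≤ 1 := by
    rw [← hab, hc', abs_le]; constructor <;> linarith
  have h5 : ((|(cc : ℚ) - x / (d * l)| : ℚ) : ℝ) ≤ 1 := by exact_mod_cast this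
  push_cast at h5
  exact h5

theorem moebius_sum_eq (r s : ℕ) (hr : 0 < r) (hs : 0 < s) :
    (∑ l ∈ r.divisors, if s ∣ l then (ArithmeticFunction.moebius (r / l) : ℝ) else 0)
      = if r = s then 1 else 0 := by
  rw [← Nat.sum_div_divisors r (fun l => if s ∣ l then (ArithmeticFunction.moebius (r / l) : ℝ) else 0)]
  have e1 : ∀ l ∈ r.divisors, (if s ∣ r / l then (ArithmeticFunction.moebius (r / (r / l)) : ℝ) else 0)
      = if (s ∣ r ∧ l ∣ r / s) then (ArithmeticFunction.moebius l : ℝ) else 0 := by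
    intro l hl
    have hlr := Nat.dvd_of_mem_divisors hl
    rw [Nat.div_div_self hlr hr.ne']
    congr 1
    rw [Nat.dvd_div_iff_mul_dvd hlr]
    apply propext
    constructor
    · intro h
      have hsr : s ∣ r := (Dvd.intro_left l rfl).trans h
      exact ⟨hsr, (Nat.dvd_div_iff_mul_dvd hsr).2 (by rwa [mul_comm])⟩
    · rintro ⟨h1, h2⟩
      have := (Nat.dvd_div_iff_mul_dvd h1).1 h2
      rwa [mul_comm] at this
  rw [Finset.sum_congr rfl e1]
  by_cases hsr : s ∣ r
  · simp only [hsr, true_and]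
    rw [← Finset.sum_filter]
    have hq : 0 < r / s := Nat.div_pos (Nat.le_of_dvd hr hsr) hs
    have : r.divisors.filter (fun l => l ∣ r / s) = (r / s).divisors := by
      ext l; simp only [Finset.mem_filter, Nat.mem_divisors]
      constructor
      · rintro ⟨_, h⟩; exact ⟨h, hq.ne'⟩
      · rintro ⟨h, _⟩; exact ⟨⟨h.trans (Nat.div_dvd_of_dvd hsr), hr.ne'⟩, h⟩
    rw [this]
    have h2 : ((ArithmeticFunction.moebius * (ArithmeticFunction.zeta : ArithmeticFunction ℤ)) (r / s)) = (1 : ArithmeticFunction ℤ) (r / s) := by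
      rw [ArithmeticFunction.moebius_mul_coe_zeta]
    rw [ArithmeticFunction.coe_mul_zeta_apply, ArithmeticFunction.one_apply] at h2
    have h3 : (∑ l ∈ (r / s).divisors, (ArithmeticFunction.moebius l : ℝ)) = if r / s = 1 then 1 else 0 := by
      exact_mod_cast h2
    rw [h3]
    congr 1
    apply propext
    constructor
    · intro h; have := Nat.div_mul_cancel hsr; rw [h] at this; omega
    · rintro rfl; exact Nat.div_self hr
  · simp only [hsr, false_and, if_false, Finset.sum_const_zero]
    rw [if_neg]; rintro rfl; exact hsr dvd_rfl

theorem gcd_sum (m n N : ℕ) (hm : 0 < m) (hN : m ≤ N) :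
    ((Nat.gcd m n : ℕ) : ℝ) = ∑ s ∈ Finset.Icc 1 N, if s ∣ m then (if s ∣ n then (Nat.totient s : ℝ) else 0) else 0 := by
  have h := Nat.sum_totient (Nat.gcd m n)
  rw [← h]
  push_cast
  rw [← Finset.sum_filter, ← Finset.sum_filter, Finset.filter_filter]
  apply Finset.sum_congr _ (fun _ _ => rfl)
  have hg : 0 < Nat.gcd m n := Nat.gcd_pos_of_pos_left _ hm
  ext s
  simp only [Nat.mem_divisors, Finset.mem_filter, Finset.mem_Icc, Nat.dvd_gcd_iff]
  constructor
  · rintro ⟨⟨h1, h2⟩, _⟩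
    exact ⟨⟨Nat.pos_of_dvd_of_pos h1 hm, (Nat.le_of_dvd hm h1).trans hN⟩, h1, h2⟩
  · rintro ⟨_, h1, h2⟩; exact ⟨⟨h1, h2⟩, hg.ne'⟩

theorem ortho (r r' : ℕ) (hr : 0 < r) (hr' : 0 < r') :
    (∑ l ∈ r.divisors, ∑ l' ∈ r'.divisors,
      (ArithmeticFunction.moebius (r / l) : ℝ) * (ArithmeticFunction.moebius (r' / l') : ℝ) * (Nat.gcd l l' : ℕ))
      = if r = r' then (Nat.totient r : ℝ) else 0 := by
  have e : ∀ l ∈ r.divisors, ∀ l' ∈ r'.divisors,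
      (ArithmeticFunction.moebius (r / l) : ℝ) * (ArithmeticFunction.moebius (r' / l') : ℝ) * (Nat.gcd l l' : ℕ)
      = ∑ s ∈ Finset.Icc 1 r, (Nat.totient s : ℝ) * ((if s ∣ l then (ArithmeticFunction.moebius (r / l) : ℝ) else 0) *
         (if s ∣ l' then (ArithmeticFunction.moebius (r' / l') : ℝ) else 0)) := by
    intro l hl l' hl'
    rw [gcd_sum l l' r (Nat.pos_of_mem_divisors hl) (Nat.divisor_le hl), Finset.mul_sum]
    apply Finset.sum_congr rfl
    intro s _
    split_ifs <;> ring
  rw [Finset.sum_congr rfl (fun l hl => Finset.sum_congr rfl (e l hl))]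
  have e2 : ∀ l ∈ r.divisors, (∑ l' ∈ r'.divisors, ∑ s ∈ Finset.Icc 1 r, (Nat.totient s : ℝ) * ((if s ∣ l then (ArithmeticFunction.moebius (r / l) : ℝ) else 0) *
         (if s ∣ l' then (ArithmeticFunction.moebius (r' / l') : ℝ) else 0)))
      = ∑ s ∈ Finset.Icc 1 r, (Nat.totient s : ℝ) * ((if s ∣ l then (ArithmeticFunction.moebius (r / l) : ℝ) else 0) * (if r' = s then 1 else 0)) := by
    intro l hl
    rw [Finset.sum_comm]
    apply Finset.sum_congr rfl
    intro s hs
    rw [← Finset.mul_sum, ← Finset.mul_sum, moebius_sum_eq r' s hr' (Finset.mem_Icc.1 hs).1]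
  rw [Finset.sum_congr rfl e2, Finset.sum_comm]
  have e3 : ∀ s ∈ Finset.Icc 1 r, (∑ l ∈ r.divisors, (Nat.totient s : ℝ) * ((if s ∣ l then (ArithmeticFunction.moebius (r / l) : ℝ) else 0) * (if r' = s then 1 else 0)))
      = if s = r then (if r = r' then (Nat.totient r : ℝ) else 0) else 0 := by
    intro s hs
    rw [← Finset.mul_sum, ← Finset.sum_mul, moebius_sum_eq r s hr (Finset.mem_Icc.1 hs).1]
    by_cases h1 : r = s
    · subst h1; by_cases h2 : r = r'
      · simp [h2]
      · simp [h2, Ne.symm h2]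
    · simp [h1, Ne.symm h1]
  rw [Finset.sum_congr rfl e3, Finset.sum_ite_eq' , if_pos (Finset.mem_Icc.2 ⟨hr, le_rfl⟩)]

end LargeOrd

set_option linter.all false
namespace LargeOrd

def RR (d z : ℕ) : Finset ℕ := (Finset.Icc 1 z).filter (fun r => Nat.Coprime r d ∧ Squarefree r)

noncomputable def SS (d z : ℕ) : ℝ := ∑ r ∈ RR d z, (1 / r : ℝ)

theorem RR_mem {d z r : ℕ} (h : r ∈ RR d z) : 1 ≤ r ∧ r ≤ z ∧ Nat.Coprime r d ∧ Squarefree r := by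
  simp only [RR, Finset.mem_filter, Finset.mem_Icc] at h
  tauto

noncomputable def sa (i : (_ : ℕ) × ℕ) : ℝ :=
  (ArithmeticFunction.moebius i.1 : ℝ) / i.1 * (i.2 * (ArithmeticFunction.moebius (i.1 / i.2) : ℝ))

noncomputable def sI (d z : ℕ) : Finset ((_ : ℕ) × ℕ) := (RR d z).sigma (fun r => r.divisors)

theorem abs_mu (n : ℕ) : |(ArithmeticFunction.moebius n : ℝ)| ≤ 1 := by
  have := ArithmeticFunction.abs_moebius_le_one (n := n)
  exact_mod_cast this

theorem sa_abs (d z : ℕ) (i) (hi : i ∈ sI d z) : |sa i| ≤ 1 := by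
  simp only [sI, Finset.mem_sigma] at hi
  have h1 := RR_mem hi.1
  have h2 := Nat.divisor_le hi.2
  have hp : (0:ℝ) < i.1 := by exact_mod_cast h1.1
  have hle : (i.2:ℝ) ≤ i.1 := by exact_mod_cast h2
  have m1 := abs_mu i.1
  have m2 := abs_mu (i.1 / i.2)
  simp only [sa]
  rw [abs_mul, abs_div, abs_mul, Nat.abs_cast, Nat.abs_cast]
  calc _ ≤ 1 / (i.1:ℝ) * (i.1 * 1) := by gcongr
    _ = 1 := by field_simp

theorem sI_card (d z : ℕ) : ((sI d z).card : ℝ) ≤ z ^ 2 := by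
  have : (sI d z).card ≤ z * z := by
    rw [sI, Finset.card_sigma]
    calc _ ≤ ∑ r ∈ RR d z, z := by
          apply Finset.sum_le_sum; intro r hr
          exact (Nat.card_divisors_le_self r).trans (RR_mem hr).2.1
      _ = (RR d z).card * z := by simp
      _ ≤ z * z := by
          gcongr
          calc _ ≤ (Finset.Icc 1 z).card := Finset.card_filter_le _ _
            _ = z := by simp
  calc ((sI d z).card : ℝ) ≤ ((z * z : ℕ) : ℝ) := by exact_mod_cast this
    _ = z ^ 2 := by push_cast; ring

theorem main_sum (d z : ℕ) :
    ∑ i ∈ sI d z, ∑ i' ∈ sI d z, sa i * sa i' * (1 / (Nat.lcm i.2 i'.2 : ℕ) : ℝ) ≤ SS d z := by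
  rw [sI, Finset.sum_sigma]
  have e1 : ∀ r ∈ RR d z, (∑ l ∈ r.divisors, ∑ i' ∈ (RR d z).sigma (fun r => r.divisors), sa ⟨r, l⟩ * sa i' * (1 / (Nat.lcm l i'.2 : ℕ) : ℝ))
      = ∑ r' ∈ RR d z, (ArithmeticFunction.moebius r : ℝ) / r * ((ArithmeticFunction.moebius r' : ℝ) / r') * (if r = r' then (Nat.totient r : ℝ) else 0) := by
    intro r hr
    have : ∀ l ∈ r.divisors, (∑ i' ∈ (RR d z).sigma (fun r => r.divisors), sa ⟨r, l⟩ * sa i' * (1 / (Nat.lcm l i'.2 : ℕ) : ℝ))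
      = ∑ r' ∈ RR d z, ∑ l' ∈ r'.divisors, sa ⟨r, l⟩ * sa ⟨r', l'⟩ * (1 / (Nat.lcm l l' : ℕ) : ℝ) := by
      intro l hl
      rw [Finset.sum_sigma]
    rw [Finset.sum_congr rfl this, Finset.sum_comm]
    apply Finset.sum_congr rfl
    intro r' hr'
    rw [← ortho r r' (RR_mem hr).1 (RR_mem hr').1, Finset.mul_sum]
    apply Finset.sum_congr rfl
    intro l hl
    rw [Finset.mul_sum]
    apply Finset.sum_congr rfl
    intro l' hl'
    have hl0 := Nat.pos_of_mem_divisors hl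
    have hl0' := Nat.pos_of_mem_divisors hl'
    have hg : ((Nat.gcd l l' : ℕ) : ℝ) * (Nat.lcm l l' : ℕ) = l * l' := by
      exact_mod_cast Nat.gcd_mul_lcm l l'
    have hlc : ((Nat.lcm l l' : ℕ) : ℝ) ≠ 0 := by
      have := Nat.lcm_pos hl0 hl0'
      exact_mod_cast this.ne'
    have hg' : ((Nat.gcd l l' : ℕ) : ℝ) = l * l' * (1 / (Nat.lcm l l' : ℕ)) := by
      field_simp; exact hg
    rw [hg']
    simp only [sa]
    ring
  rw [Finset.sum_congr rfl e1, SS]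
  apply Finset.sum_le_sum
  intro r hr
  have hr1 := RR_mem hr
  simp only [mul_ite, mul_zero, Finset.sum_ite_eq, hr, if_true]
  have hp : (0:ℝ) < r := by exact_mod_cast hr1.1
  have hm : (ArithmeticFunction.moebius r : ℝ) * ArithmeticFunction.moebius r = 1 := by
    have := ArithmeticFunction.moebius_sq_eq_one_of_squarefree hr1.2.2.2
    rw [sq] at this
    exact_mod_cast this
  have ht : (Nat.totient r : ℝ) ≤ r := by exact_mod_cast Nat.totient_le r
  calc _ = ((ArithmeticFunction.moebius r : ℝ) * ArithmeticFunction.moebius r) * ((Nat.totient r : ℝ) / (r * r)) := by ring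
    _ = (Nat.totient r : ℝ) / (r * r) := by rw [hm, one_mul]
    _ ≤ r / (r * r) := by gcongr
    _ = 1 / r := by field_simp

noncomputable def sw (d z n : ℕ) : ℝ := ∑ i ∈ sI d z, if i.2 ∣ n then sa i else 0

theorem sw_eq (d z n : ℕ) (h : ∀ r ∈ RR d z, Nat.Coprime r n) : sw d z n = SS d z := by
  rw [sw, sI, Finset.sum_sigma, SS]
  apply Finset.sum_congr rfl
  intro r hr
  have hr1 := RR_mem hr
  rw [Finset.sum_eq_single 1]
  · simp only [one_dvd, if_true, sa, Nat.div_one]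
    have hm : (ArithmeticFunction.moebius r : ℝ) * ArithmeticFunction.moebius r = 1 := by
      have := ArithmeticFunction.moebius_sq_eq_one_of_squarefree hr1.2.2.2
      rw [sq] at this
      exact_mod_cast this
    calc _ = ((ArithmeticFunction.moebius r : ℝ) * ArithmeticFunction.moebius r) / r := by push_cast; ring
      _ = _ := by rw [hm]
  · intro l hl hl1
    rw [if_neg]
    intro hln
    apply hl1
    exact Nat.eq_one_of_dvd_coprimes (h r hr) (Nat.dvd_of_mem_divisors hl) hln
  · intro h1; exfalso; apply h1; simp; omega

theorem sieve (d v x z : ℕ) (hd : 0 < d) (F : Finset ℕ)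
    (hF : ∀ n ∈ F, n ∈ Finset.Ioc 0 x ∧ n ≡ v [MOD d] ∧ ∀ r ∈ RR d z, Nat.Coprime r n) :
    (F.card : ℝ) * (SS d z) ^ 2 ≤ x / d * SS d z + z ^ 4 := by
  set AA := (Finset.Ioc 0 x).filter (fun n => n ≡ v [MOD d])
  have h1 : (F.card : ℝ) * (SS d z) ^ 2 ≤ ∑ n ∈ AA, (sw d z n) ^ 2 := by
    calc _ = ∑ n ∈ F, (sw d z n) ^ 2 := by
          rw [Finset.sum_congr rfl (fun n hn => by rw [sw_eq d z n (hF n hn).2.2]), Finset.sum_const, nsmul_eq_mul]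
      _ ≤ _ := by
          apply Finset.sum_le_sum_of_subset_of_nonneg
          · intro n hn
            simp only [AA, Finset.mem_filter]
            exact ⟨(hF n hn).1, (hF n hn).2.1⟩
          · intro _ _ _; positivity
  have h2 : ∑ n ∈ AA, (sw d z n) ^ 2 = ∑ i ∈ sI d z, ∑ i' ∈ sI d z, sa i * sa i' *
      (((Finset.Ioc 0 x).filter (fun n => n ≡ v [MOD d] ∧ Nat.lcm i.2 i'.2 ∣ n)).card : ℝ) := by
    have : ∀ n ∈ AA, (sw d z n) ^ 2 = ∑ i ∈ sI d z, ∑ i' ∈ sI d z, sa i * sa i' * (if Nat.lcm i.2 i'.2 ∣ n then (1:ℝ) else 0) := by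
      intro n _
      rw [sq, sw, Finset.sum_mul_sum]
      apply Finset.sum_congr rfl; intro i _
      apply Finset.sum_congr rfl; intro i' _
      by_cases a : i.2 ∣ n <;> by_cases b : i'.2 ∣ n <;> simp [a, b, Nat.lcm_dvd_iff]
    rw [Finset.sum_congr rfl this, Finset.sum_comm]
    apply Finset.sum_congr rfl; intro i _
    rw [Finset.sum_comm]
    apply Finset.sum_congr rfl; intro i' _
    rw [← Finset.mul_sum, Finset.sum_boole, Finset.filter_filter]
  have h3 : ∑ i ∈ sI d z, ∑ i' ∈ sI d z, sa i * sa i' *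
      (((Finset.Ioc 0 x).filter (fun n => n ≡ v [MOD d] ∧ Nat.lcm i.2 i'.2 ∣ n)).card : ℝ)
      ≤ ∑ i ∈ sI d z, ∑ i' ∈ sI d z, (x / d * (sa i * sa i' * (1 / (Nat.lcm i.2 i'.2 : ℕ) : ℝ)) + 1) := by
    apply Finset.sum_le_sum; intro i hi
    apply Finset.sum_le_sum; intro i' hi'
    have a1 := sa_abs d z i hi
    have a2 := sa_abs d z i' hi'
    have cop : ∀ i ∈ sI d z, Nat.Coprime d i.2 ∧ 0 < i.2 := by
      intro i hi
      simp only [sI, Finset.mem_sigma] at hi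
      exact ⟨(Nat.Coprime.coprime_dvd_left (Nat.dvd_of_mem_divisors hi.2) (RR_mem hi.1).2.2.1).symm, Nat.pos_of_mem_divisors hi.2⟩
    have hc := count_ap d v x (Nat.lcm i.2 i'.2) hd (Nat.lcm_pos (cop i hi).2 (cop i' hi').2)
      (Nat.Coprime.coprime_dvd_right (Nat.lcm_dvd_mul _ _) (Nat.Coprime.mul_right (cop i hi).1 (cop i' hi').1))
    set c := (((Finset.Ioc 0 x).filter (fun n => n ≡ v [MOD d] ∧ Nat.lcm i.2 i'.2 ∣ n)).card : ℝ)
    have a3 : |sa i * sa i' * (c - x / (d * (Nat.lcm i.2 i'.2 : ℕ)))| ≤ 1 := by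
      rw [abs_mul, abs_mul]
      calc _ ≤ (1:ℝ) * 1 * 1 := by gcongr
        _ = 1 := by norm_num
    have a4 := (abs_le.1 a3).2
    have : (x:ℝ) / d * (sa i * sa i' * (1 / (Nat.lcm i.2 i'.2 : ℕ) : ℝ)) = sa i * sa i' * (x / (d * (Nat.lcm i.2 i'.2 : ℕ))) := by
      rw [mul_one_div, ← div_div]; ring
    rw [this]; linarith [mul_sub (sa i * sa i') c (x / (d * (Nat.lcm i.2 i'.2 : ℕ)))]
  have h4 : ∑ i ∈ sI d z, ∑ i' ∈ sI d z, (x / d * (sa i * sa i' * (1 / (Nat.lcm i.2 i'.2 : ℕ) : ℝ)) + 1)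
      = x / d * (∑ i ∈ sI d z, ∑ i' ∈ sI d z, sa i * sa i' * (1 / (Nat.lcm i.2 i'.2 : ℕ) : ℝ)) + (sI d z).card * (sI d z).card := by
    simp only [Finset.sum_add_distrib, Finset.mul_sum, Finset.sum_const, nsmul_eq_mul, mul_one]
  have h5 := main_sum d z
  have h6 := sI_card d z
  calc _ ≤ _ := h1
    _ = _ := h2
    _ ≤ _ := h3
    _ = _ := h4
    _ ≤ x / d * SS d z + z ^ 2 * z ^ 2 := by gcongr
    _ = _ := by ring

end LargeOrd

set_option linter.all false
namespace LargeOrd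

noncomputable def hh (d : ℕ) : ℝ := ∑ e ∈ d.divisors, (1 / e : ℝ)

theorem one_le_hh (d : ℕ) (hd : 0 < d) : 1 ≤ hh d := by
  have : (∑ e ∈ ({1} : Finset ℕ), (1 / e : ℝ)) ≤ hh d := by
    apply Finset.sum_le_sum_of_subset_of_nonneg
    · intro e he; simp at he; subst he; simp; omega
    · intros; positivity
  simpa using this

theorem sqf_le (d z : ℕ) (hd : 0 < d) :
    ∑ r ∈ (Finset.Icc 1 z).filter Squarefree, (1 / r : ℝ) ≤ hh d * SS d z := by
  rw [hh, SS, Finset.sum_mul_sum, ← Finset.sum_product']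
  set X := (Finset.Icc 1 z).filter Squarefree
  have hinj : Set.InjOn (fun r : ℕ => (Nat.gcd r d, r / Nat.gcd r d)) (X : Set ℕ) := by
    intro r hr s hs h
    simp only [Prod.mk.injEq] at h
    rw [← Nat.mul_div_cancel' (Nat.gcd_dvd_left r d), ← Nat.mul_div_cancel' (Nat.gcd_dvd_left s d), h.1]
    rw [h.1] at h; rw [h.2]
  calc _ = ∑ r ∈ X, (1 / ((Nat.gcd r d : ℕ):ℝ) * (1 / ((r / Nat.gcd r d : ℕ) : ℝ))) := by
        apply Finset.sum_congr rfl
        intro r hr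
        rw [one_div_mul_one_div]
        congr 1
        exact_mod_cast (Nat.mul_div_cancel' (Nat.gcd_dvd_left r d)).symm
    _ = ∑ y ∈ X.image (fun r : ℕ => (Nat.gcd r d, r / Nat.gcd r d)), (1 / (y.1:ℝ) * (1 / (y.2 : ℝ))) := by
        rw [Finset.sum_image hinj]
    _ ≤ _ := by
        apply Finset.sum_le_sum_of_subset_of_nonneg
        · intro y hy
          obtain ⟨r, hr, rfl⟩ := Finset.mem_image.1 hy
          simp only [X, Finset.mem_filter, Finset.mem_Icc] at hr
          simp only [Finset.mem_product, Nat.mem_divisors, RR, Finset.mem_filter, Finset.mem_Icc]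
          have hg : 0 < Nat.gcd r d := Nat.gcd_pos_of_pos_left _ hr.1.1
          have hmul := Nat.mul_div_cancel' (Nat.gcd_dvd_left r d)
          have hsq : Squarefree (Nat.gcd r d * (r / Nat.gcd r d)) := by rw [hmul]; exact hr.2
          have hcop := (Nat.squarefree_mul_iff.1 hsq).1
          refine ⟨⟨Nat.gcd_dvd_right r d, hd.ne'⟩, ⟨Nat.div_pos (Nat.le_of_dvd hr.1.1 (Nat.gcd_dvd_left r d)) hg, (Nat.div_le_self _ _).trans hr.1.2⟩, ?_, (Nat.squarefree_mul_iff.1 hsq).2.2⟩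
          have h1 : Nat.gcd (r / Nat.gcd r d) d ∣ Nat.gcd r d :=
            Nat.dvd_gcd ((Nat.gcd_dvd_left _ _).trans (Nat.div_dvd_of_dvd (Nat.gcd_dvd_left r d))) (Nat.gcd_dvd_right _ _)
          exact Nat.eq_one_of_dvd_coprimes hcop h1 (Nat.gcd_dvd_left _ _)
        · intros; positivity

theorem sum_inv_sq (z : ℕ) (hz : 1 ≤ z) : ∑ b ∈ Finset.Icc 1 z, (1 / (b:ℝ) ^ 2) ≤ 2 - 1 / (z:ℝ) := by
  induction z, hz using Nat.le_induction with
  | base => norm_num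
  | succ n hn ih =>
    rw [Finset.sum_Icc_succ_top (by omega)]
    have hp : (0:ℝ) < n := by exact_mod_cast hn
    have : 1 / ((n + 1 : ℕ):ℝ) ^ 2 ≤ 1 / n - 1 / ((n + 1 : ℕ) : ℝ) := by
      push_cast
      rw [div_sub_div _ _ (by positivity) (by positivity), div_le_div_iff₀ (by positivity) (by positivity)]
      nlinarith
    linarith

theorem harm_le (z : ℕ) (hz : 1 ≤ z) :
    ∑ n ∈ Finset.Icc 1 z, (1 / n : ℝ) ≤ 2 * ∑ r ∈ (Finset.Icc 1 z).filter Squarefree, (1 / r : ℝ) := by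
  set X := (Finset.Icc 1 z).filter Squarefree
  have hS : 0 ≤ ∑ r ∈ X, (1 / r : ℝ) := Finset.sum_nonneg (fun _ _ => by positivity)
  choose a b hab using Nat.sq_mul_squarefree
  have hinj : Set.InjOn (fun n : ℕ => (b n, a n)) ((Finset.Icc 1 z : Finset ℕ) : Set ℕ) := by
    intro r hr s hs h
    simp only [Prod.mk.injEq] at h
    rw [← (hab r).1, ← (hab s).1, h.1, h.2]
  calc _ = ∑ n ∈ Finset.Icc 1 z, (1 / (b n : ℝ) ^ 2 * (1 / (a n : ℝ))) := by
        apply Finset.sum_congr rfl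
        intro n hn
        rw [one_div_mul_one_div]
        congr 1
        exact_mod_cast (hab n).1.symm
    _ = ∑ y ∈ (Finset.Icc 1 z).image (fun n : ℕ => (b n, a n)), (1 / (y.1 : ℝ) ^ 2 * (1 / (y.2 : ℝ))) := by
        rw [Finset.sum_image hinj]
    _ ≤ ∑ y ∈ (Finset.Icc 1 z) ×ˢ X, (1 / (y.1 : ℝ) ^ 2 * (1 / (y.2 : ℝ))) := by
        apply Finset.sum_le_sum_of_subset_of_nonneg
        · intro y hy
          obtain ⟨n, hn, rfl⟩ := Finset.mem_image.1 hy
          simp only [Finset.mem_Icc] at hn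
          have h := (hab n).1
          have hb0 : b n ≠ 0 := by intro h0; rw [h0] at h; omega
          have ha0 : a n ≠ 0 := by intro h0; rw [h0] at h; omega
          have hb : b n ∣ n := ⟨b n * a n, by rw [← mul_assoc, ← sq]; exact h.symm⟩
          have ha : a n ∣ n := ⟨b n ^ 2, by rw [mul_comm]; exact h.symm⟩
          have hb1 := Nat.le_of_dvd (by omega) hb
          have ha1 := Nat.le_of_dvd (by omega) ha
          simp only [Finset.mem_product, X, Finset.mem_filter, Finset.mem_Icc]
          exact ⟨⟨by omega, by omega⟩, ⟨by omega, by omega⟩, (hab n).2⟩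
        · intros; positivity
    _ = (∑ b ∈ Finset.Icc 1 z, (1 / (b:ℝ) ^ 2)) * ∑ r ∈ X, (1 / r : ℝ) := by
        rw [Finset.sum_mul_sum, ← Finset.sum_product']
    _ ≤ 2 * ∑ r ∈ X, (1 / r : ℝ) := by
        gcongr
        have := sum_inv_sq z hz
        have : (0:ℝ) ≤ 1 / z := by positivity
        linarith

theorem log_le_harm (z : ℕ) : Real.log (z + 1) ≤ ∑ n ∈ Finset.Icc 1 z, (1 / n : ℝ) := by
  have := log_add_one_le_harmonic z
  rw [harmonic_eq_sum_Icc] at this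
  push_cast at this
  simpa using this

theorem SS_lower (d z : ℕ) (hd : 0 < d) (hz : 1 ≤ z) : Real.log z ≤ 2 * hh d * SS d z := by
  have h1 := log_le_harm z
  have h2 := harm_le z hz
  have h3 := sqf_le d z hd
  have hp : (0:ℝ) < z := by exact_mod_cast hz
  have h4 : Real.log z ≤ Real.log (z + 1) := Real.log_le_log hp (by linarith)
  linarith

theorem one_le_SS (d z : ℕ) (hz : 1 ≤ z) : 1 ≤ SS d z := by
  have : (∑ e ∈ ({1} : Finset ℕ), (1 / e : ℝ)) ≤ SS d z := by
    apply Finset.sum_le_sum_of_subset_of_nonneg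
    · intro e he; simp at he; subst he; simp [RR, hz]
    · intros; positivity
  simpa using this

theorem pow5_le (j : ℕ) : j ^ 5 ≤ 8 ^ j := by
  by_cases h : j < 2
  · interval_cases j <;> norm_num
  · push Not at h
    induction j, h using Nat.le_induction with
    | base => norm_num
    | succ n hn ih =>
      have : (n + 1) ^ 5 ≤ 8 * n ^ 5 := by
        have h2 : 2 * (n + 1) ≤ 3 * n := by omega
        have h3 : (2 * (n + 1)) ^ 5 ≤ (3 * n) ^ 5 := Nat.pow_le_pow_left h2 5
        rw [mul_pow, mul_pow] at h3
        omega
      rw [pow_succ 8]; omega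

theorem brun (j d v : ℕ) (hj : 20 ≤ j) (hd : 0 < d) (hd5 : d ^ 5 ≤ 4 ^ (3 * j)) :
    (((Finset.Ioc 0 (4 ^ (j + 1))).filter (fun p => p.Prime ∧ p ≡ v [MOD d])).card : ℝ)
      ≤ 500 * (4 ^ j / j) * (hh d / d) := by
  set m := j / 20 with hm
  have hm1 : 1 ≤ m := by omega
  have hmj : 20 * m ≤ j := by omega
  have hmj' : j ≤ 40 * m := by omega
  set z := 2 ^ m with hz
  have hz1 : 1 ≤ z := Nat.one_le_two_pow
  set F := (Finset.Ioc 0 (4 ^ (j + 1))).filter (fun p => p.Prime ∧ p ≡ v [MOD d])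
  set F1 := F.filter (fun p => z < p)
  have hcard : (F.card : ℝ) ≤ F1.card + z := by
    have : F.card ≤ F1.card + (Finset.Icc 1 z).card := by
      rw [← Finset.card_filter_add_card_filter_not (s := F) (fun p => z < p)]
      gcongr
      intro p hp
      simp only [F, Finset.mem_filter, Finset.mem_Ioc] at hp
      simp only [Finset.mem_Icc]; omega
    simp at this
    exact_mod_cast this
  have hs := sieve d v (4 ^ (j + 1)) z hd F1 (by
    intro n hn
    simp only [F1, F, Finset.mem_filter] at hn
    refine ⟨hn.1.1, hn.1.2.2, ?_⟩
    intro r hr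
    have := RR_mem hr
    exact (Nat.coprime_of_lt_prime (by omega) (by omega) hn.1.2.1).symm)
  have hS1 := one_le_SS d z hz1
  have hSl := SS_lower d z hd hz1
  have hh1 := one_le_hh d hd
  set S := SS d z
  have hdR : (0:ℝ) < d := by exact_mod_cast hd
  have hjR : (0:ℝ) < j := by exact_mod_cast (by omega : 0 < j)
  have hlog : (j:ℝ) / 60 ≤ Real.log z := by
    rw [hz]; push_cast; rw [Real.log_pow]
    have := Real.log_two_gt_d9
    have h2 : (j:ℝ) ≤ 40 * m := by exact_mod_cast hmj'
    nlinarith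
  -- 1/S ≤ 120 hh / j
  have hS2 : 1 / S ≤ 120 * hh d / j := by
    rw [div_le_div_iff₀ (by linarith) hjR]; nlinarith
  have hF1 : (F1.card : ℝ) ≤ 4 ^ (j + 1) / d * (1 / S) + z ^ 4 := by
    have hS0 : 0 < S := by linarith
    have h1 : (F1.card : ℝ) ≤ (((4 ^ (j + 1) : ℕ) : ℝ) / d * S + z ^ 4) / S ^ 2 := by
      rw [le_div_iff₀ (by positivity)]; exact hs
    have h2 : (((4 ^ (j + 1) : ℕ) : ℝ) / d * S + z ^ 4) / S ^ 2 = 4 ^ (j + 1) / d * (1 / S) + z ^ 4 / S ^ 2 := by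
      push_cast; field_simp
    have h3 : (z:ℝ) ^ 4 / S ^ 2 ≤ z ^ 4 := div_le_self (by positivity) (by nlinarith)
    linarith
  have hz4 : (z:ℝ) ^ 4 ≤ 4 ^ j / j * (1 / d) := by
    rw [div_mul_div_comm, mul_one, le_div_iff₀ (by positivity)]
    have : z ^ 4 * (j * d) ≤ 4 ^ j := by
      apply le_of_not_gt
      intro hlt
      have h5 := Nat.pow_lt_pow_left hlt (by norm_num : (5:ℕ) ≠ 0)
      have h6 : (z ^ 4 * (j * d)) ^ 5 ≤ 2 ^ j * (8 ^ j * 4 ^ (3 * j)) := by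
        rw [mul_pow, mul_pow]
        have : (z ^ 4) ^ 5 ≤ 2 ^ j := by
          rw [hz, ← pow_mul, ← pow_mul]; exact Nat.pow_le_pow_right (by norm_num) (by omega)
        exact Nat.mul_le_mul this (Nat.mul_le_mul (pow5_le j) hd5)
      have h7 : 2 ^ j * (8 ^ j * 4 ^ (3 * j)) = (4 ^ j) ^ 5 := by
        rw [show (4:ℕ) = 2 ^ 2 by norm_num, show (8:ℕ) = 2 ^ 3 by norm_num]
        simp only [← pow_mul, ← pow_add]; congr 1; ring
      omega
    exact_mod_cast this
  have hzz : (z:ℝ) ≤ z ^ 4 := by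
    have : (1:ℝ) ≤ z := by exact_mod_cast hz1
    exact le_self_pow₀ this (by norm_num)
  have hmain : (4:ℝ) ^ (j + 1) / d * (1 / S) ≤ 480 * (4 ^ j / j) * (hh d / d) := by
    calc _ ≤ (4:ℝ) ^ (j + 1) / d * (120 * hh d / j) := by gcongr
      _ = _ := by rw [pow_succ]; field_simp; norm_num
  have h1d : 4 ^ j / (j:ℝ) * (1 / d) ≤ 4 ^ j / j * (hh d / d) := by gcongr
  have hpos : 0 ≤ 4 ^ j / (j:ℝ) * (hh d / d) := by positivity
  calc (F.card : ℝ) ≤ 480 * (4 ^ j / j) * (hh d / d) + 2 * (4 ^ j / j * (hh d / d)) := by linarith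
    _ ≤ _ := by nlinarith

end LargeOrd

set_option linter.all false
namespace LargeOrd

/-! ### Part 4: moments of the number of prime factors of shifted primes -/

def omQ (Q : Finset ℕ) (m : ℕ) : ℕ := (Q.filter (fun q => q ∣ m)).card

theorem hh_mul_le (a b : ℕ) : hh (a * b) ≤ hh a * hh b := by
  rw [hh, hh, hh, Finset.sum_mul_sum, ← Finset.sum_product']
  have : ((a * b).divisors) = (a.divisors ×ˢ b.divisors).image (fun x => x.1 * x.2) := by
    rw [Nat.divisors_mul]; rfl
  rw [this]
  calc _ ≤ ∑ x ∈ a.divisors ×ˢ b.divisors, (1 / ((x.1 * x.2 : ℕ) : ℝ)) :=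
        Finset.sum_image_le_of_nonneg (s := a.divisors ×ˢ b.divisors) (g := fun x : ℕ × ℕ => x.1 * x.2) (f := fun e : ℕ => (1 / e : ℝ)) (fun i _ => by positivity)
    _ = _ := by
        apply Finset.sum_congr rfl
        intro x _
        push_cast
        rw [one_div_mul_one_div]

theorem hh_nonneg (a : ℕ) : 0 ≤ hh a := Finset.sum_nonneg (fun _ _ => by positivity)

theorem hh_prime (q : ℕ) (hq : q.Prime) : hh q = 1 + 1 / q := by
  rw [hh, hq.divisors, Finset.sum_pair hq.one_lt.ne]; simp

theorem hh_prod_le (K : Finset ℕ) (hK : ∀ q ∈ K, q.Prime) :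
    hh (∏ q ∈ K, q) ≤ ∏ q ∈ K, (1 + 1 / (q:ℝ)) := by
  induction K using Finset.induction_on with
  | empty => simp [hh]
  | insert a s ha ih =>
    rw [Finset.prod_insert ha, Finset.prod_insert ha]
    refine (hh_mul_le _ _).trans ?_
    rw [hh_prime a (hK a (Finset.mem_insert_self _ _))]
    gcongr
    exact ih (fun q hq => hK q (Finset.mem_insert_of_mem hq))

theorem pow_add_ge (S w : ℝ) (hS : 0 ≤ S) (hw : 0 ≤ w) (k : ℕ) :
    S ^ (k + 1) + (k + 1) * w * S ^ k ≤ (S + w) ^ (k + 1) := by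
  induction k with
  | zero => simp
  | succ n ih =>
    have h := mul_le_mul_of_nonneg_right ih (add_nonneg hS hw)
    have h2 : (S ^ (n + 1) + (n + 1) * w * S ^ n) * (S + w) = S ^ (n + 1 + 1) + ((n + 1 : ℕ) + 1) * w * S ^ (n + 1) + (n + 1) * w * w * S ^ n := by
      push_cast; ring
    have h3 : 0 ≤ ((n:ℝ) + 1) * w * w * S ^ n := by positivity
    rw [pow_succ (S + w) (n + 1)]
    linarith

theorem esymm_le (w : ℕ → ℝ) (hw : ∀ q, 0 ≤ w q) (Q : Finset ℕ) (k : ℕ) :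
    ∑ K ∈ Finset.powersetCard k Q, ∏ q ∈ K, w q ≤ (∑ q ∈ Q, w q) ^ k / (k.factorial : ℝ) := by
  induction Q using Finset.induction_on generalizing k with
  | empty =>
    cases k with
    | zero => simp
    | succ k => rw [Finset.powersetCard_eq_empty.2 (by simp)]; simp
  | insert a s ha ih =>
    cases k with
    | zero => simp
    | succ k =>
      have hS : 0 ≤ ∑ q ∈ s, w q := Finset.sum_nonneg (fun _ _ => hw _)
      rw [Finset.powersetCard_succ_insert ha, Finset.sum_union, Finset.sum_image, Finset.sum_insert ha]
      · have e : ∑ K ∈ Finset.powersetCard k s, ∏ q ∈ insert a K, w q = w a * ∑ K ∈ Finset.powersetCard k s, ∏ q ∈ K, w q := by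
          rw [Finset.mul_sum]
          apply Finset.sum_congr rfl
          intro K hK
          rw [Finset.prod_insert]
          intro h; exact ha ((Finset.mem_powersetCard.1 hK).1 h)
        rw [e]
        have h1 := ih (k + 1)
        have h2 := mul_le_mul_of_nonneg_left (ih k) (hw a)
        have h3 := pow_add_ge _ _ hS (hw a) k
        have hf : (0:ℝ) < ((k + 1).factorial : ℝ) := by exact_mod_cast Nat.factorial_pos _
        have hf' : (0:ℝ) < (k.factorial : ℝ) := by exact_mod_cast Nat.factorial_pos _
        have hfe : ((k + 1).factorial : ℝ) = (k + 1) * k.factorial := by rw [Nat.factorial_succ]; push_cast; ring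
        have h4 : (∑ q ∈ s, w q) ^ (k + 1) / ((k + 1).factorial : ℝ) + w a * ((∑ q ∈ s, w q) ^ k / (k.factorial : ℝ))
            = ((∑ q ∈ s, w q) ^ (k + 1) + (k + 1) * w a * (∑ q ∈ s, w q) ^ k) / ((k + 1).factorial : ℝ) := by
          rw [hfe]; field_simp
        calc _ ≤ _ := add_le_add h1 h2
          _ = _ := h4
          _ ≤ _ := by rw [add_comm (w a)]; gcongr
      · intro K hK L hL h
        have hK' : a ∉ K := fun h => ha ((Finset.mem_powersetCard.1 hK).1 h)
        have hL' : a ∉ L := fun h => ha ((Finset.mem_powersetCard.1 hL).1 h)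
        have h' : insert a K = insert a L := h
        rw [← Finset.erase_insert hK', ← Finset.erase_insert hL', h']
      · rw [Finset.disjoint_left]
        intro K hK hK'
        obtain ⟨L, hL, rfl⟩ := Finset.mem_image.1 hK'
        exact ha ((Finset.mem_powersetCard.1 hK).1 (Finset.mem_insert_self _ _))

def IsShift (f : ℕ → ℕ) : Prop := f = (fun p => p - 1) ∨ f = (fun p => p + 1)

theorem brun' (f : ℕ → ℕ) (hf : IsShift f) (j d : ℕ) (hj : 20 ≤ j) (hd : 0 < d) (hd5 : d ^ 5 ≤ 4 ^ (3 * j)) :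
    (((Finset.Ioc 0 (4 ^ (j + 1))).filter (fun p => p.Prime ∧ d ∣ f p)).card : ℝ)
      ≤ 500 * (4 ^ j / j) * (hh d / d) := by
  have key : ∃ v, ∀ p, p.Prime → d ∣ f p → p ≡ v [MOD d] := by
    rcases hf with rfl | rfl
    · refine ⟨1, fun p hp h => ?_⟩
      exact ((Nat.modEq_iff_dvd' hp.one_le).2 h).symm
    · refine ⟨d - 1, fun p hp h => ?_⟩
      have h1 : p + 1 ≡ (d - 1) + 1 [MOD d] := by
        rw [Nat.sub_add_cancel hd]
        exact ((Nat.modEq_zero_iff_dvd.2 h)).trans (Nat.modEq_zero_iff_dvd.2 dvd_rfl).symm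
      exact Nat.ModEq.add_right_cancel' 1 h1
  obtain ⟨v, hv⟩ := key
  refine le_trans ?_ (brun j d v hj hd hd5)
  norm_cast
  apply Finset.card_le_card
  intro p hp
  simp only [Finset.mem_filter] at hp ⊢
  exact ⟨hp.1, hp.2.1, hv p hp.2.1 hp.2.2⟩

theorem moment_bound (f : ℕ → ℕ) (hf : IsShift f) (j k J2 : ℕ) (hj : 20 ≤ j) (Q : Finset ℕ)
    (hQ : ∀ q ∈ Q, q.Prime ∧ q ≤ 4 ^ J2) (hk : 20 * k * J2 ≤ j) (W : ℕ) (hW : k ≤ W) :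
    (((Finset.Ioc 0 (4 ^ (j + 1))).filter (fun p => p.Prime ∧ W ≤ omQ Q (f p))).card : ℝ) * ((W + 1 - k : ℕ) : ℝ) ^ k
      ≤ 500 * (4 ^ j / j) * (∑ q ∈ Q, (1 + 1 / (q:ℝ)) / q) ^ k := by
  set PP := (Finset.Ioc 0 (4 ^ (j + 1))).filter Nat.Prime
  have h1 : ∀ p, (Nat.choose (omQ Q (f p)) k : ℝ) = ∑ K ∈ Finset.powersetCard k Q, if (∏ q ∈ K, q) ∣ f p then (1:ℝ) else 0 := by
    intro p
    rw [omQ, ← Finset.card_powersetCard, Finset.sum_boole]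
    congr 2
    ext K
    simp only [Finset.mem_powersetCard, Finset.mem_filter]
    constructor
    · rintro ⟨h1, h2⟩
      refine ⟨⟨fun q hq => (Finset.mem_filter.1 (h1 hq)).1, h2⟩, ?_⟩
      apply Finset.prod_primes_dvd
      · intro q hq; exact (hQ q (Finset.mem_filter.1 (h1 hq)).1).1.prime
      · intro q hq; exact (Finset.mem_filter.1 (h1 hq)).2
    · rintro ⟨⟨h1, h2⟩, h3⟩
      refine ⟨fun q hq => Finset.mem_filter.2 ⟨h1 hq, (Finset.dvd_prod_of_mem _ hq).trans h3⟩, h2⟩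
  have h2 : ∑ p ∈ PP, (Nat.choose (omQ Q (f p)) k : ℝ) ≤ 500 * (4 ^ j / j) * ((∑ q ∈ Q, (1 + 1 / (q:ℝ)) / q) ^ k / (k.factorial : ℝ)) := by
    rw [Finset.sum_congr rfl (fun p _ => h1 p), Finset.sum_comm]
    calc _ ≤ ∑ K ∈ Finset.powersetCard k Q, 500 * (4 ^ j / (j:ℝ)) * ∏ q ∈ K, ((1 + 1 / (q:ℝ)) / q) := by
          apply Finset.sum_le_sum
          intro K hK
          rw [Finset.sum_boole, Finset.filter_filter]
          obtain ⟨hK1, hK2⟩ := Finset.mem_powersetCard.1 hK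
          have hpr : ∀ q ∈ K, q.Prime := fun q hq => (hQ q (hK1 hq)).1
          have hpos : 0 < ∏ q ∈ K, q := Finset.prod_pos (fun q hq => (hpr q hq).pos)
          have hle : ∏ q ∈ K, q ≤ (4 ^ J2) ^ k := by
            rw [← hK2]
            exact Finset.prod_le_pow_card _ _ _ (fun q hq => (hQ q (hK1 hq)).2)
          have h5 : (∏ q ∈ K, q) ^ 5 ≤ 4 ^ (3 * j) := by
            calc _ ≤ ((4 ^ J2) ^ k) ^ 5 := Nat.pow_le_pow_left hle 5
              _ = 4 ^ (J2 * k * 5) := by rw [← pow_mul, ← pow_mul]; congr 1; ring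
              _ ≤ _ := Nat.pow_le_pow_right (by norm_num) (by nlinarith)
          refine (brun' f hf j _ hj hpos h5).trans ?_
          rw [Finset.prod_div_distrib]
          push_cast
          have := hh_prod_le K hpr
          gcongr
      _ ≤ _ := by
          rw [← Finset.mul_sum]
          gcongr
          exact esymm_le (fun q => (1 + 1 / (q:ℝ)) / q) (fun q => by positivity) Q k
  set F := (Finset.Ioc 0 (4 ^ (j + 1))).filter (fun p => p.Prime ∧ W ≤ omQ Q (f p))
  have h3 : (F.card : ℝ) * (Nat.choose W k) ≤ ∑ p ∈ PP, (Nat.choose (omQ Q (f p)) k : ℝ) := by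
    calc _ = ∑ p ∈ F, (Nat.choose W k : ℝ) := by simp
      _ ≤ ∑ p ∈ F, (Nat.choose (omQ Q (f p)) k : ℝ) := by
          apply Finset.sum_le_sum
          intro p hp
          exact_mod_cast Nat.choose_le_choose k (Finset.mem_filter.1 hp).2.2
      _ ≤ _ := by
          apply Finset.sum_le_sum_of_subset_of_nonneg
          · intro p hp
            simp only [F, PP, Finset.mem_filter] at hp ⊢
            exact ⟨hp.1, hp.2.1⟩
          · intros; positivity
  have hf' : (0:ℝ) < (k.factorial : ℝ) := by exact_mod_cast Nat.factorial_pos _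
  have h4 : ((W + 1 - k : ℕ) : ℝ) ^ k ≤ k.factorial * (Nat.choose W k : ℝ) := by
    have := Nat.pow_sub_le_descFactorial W k
    rw [Nat.descFactorial_eq_factorial_mul_choose] at this
    exact_mod_cast this
  calc _ ≤ (F.card : ℝ) * (k.factorial * (Nat.choose W k : ℝ)) := by gcongr
    _ = k.factorial * ((F.card : ℝ) * (Nat.choose W k)) := by ring
    _ ≤ k.factorial * (500 * (4 ^ j / j) * ((∑ q ∈ Q, (1 + 1 / (q:ℝ)) / q) ^ k / (k.factorial : ℝ))) := mul_le_mul_of_nonneg_left (h3.trans h2) hf'.le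
    _ = _ := by field_simp

end LargeOrd

set_option linter.all false
namespace LargeOrd

/-! ### Part 5: thin sums -/

noncomputable def gQ (Q : Finset ℕ) (m : ℕ) : ℝ := (1 / 2 : ℝ) ^ omQ Q m

theorem gQ_pos (Q : Finset ℕ) (m : ℕ) : 0 < gQ Q m := by unfold gQ; positivity

theorem gQ_mul_le (Q : Finset ℕ) (d m : ℕ) : gQ Q (d * m) ≤ gQ Q m := by
  unfold gQ
  apply pow_le_pow_of_le_one (by norm_num) (by norm_num)
  apply Finset.card_le_card
  intro q hq
  simp only [Finset.mem_filter] at hq ⊢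
  exact ⟨hq.1, hq.2.mul_left d⟩

theorem gQ_insert (Q : Finset ℕ) (q n : ℕ) (hq : q ∉ Q) :
    gQ (insert q Q) n = gQ Q n * (if q ∣ n then 1 / 2 else 1) := by
  unfold gQ omQ
  rw [Finset.filter_insert]
  split_ifs with h
  · rw [Finset.card_insert_of_notMem (by simp [hq]), pow_succ]
  · rw [mul_one]

theorem gQ_prime_mul (Q : Finset ℕ) (q n : ℕ) (hQ : ∀ r ∈ Q, r.Prime) (hqp : q.Prime) (hq : q ∉ Q) :
    gQ Q (q * n) = gQ Q n := by
  unfold gQ omQ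
  congr 2
  apply Finset.filter_congr
  intro r hr
  rw [(hQ r hr).dvd_mul]
  constructor
  · rintro (h | h)
    · rw [Nat.prime_dvd_prime_iff_eq (hQ r hr) hqp] at h
      subst h; exact absurd hr hq
    · exact h
  · exact Or.inr

noncomputable def DQ (Q : Finset ℕ) (s : ℝ) (N : ℕ) : ℝ := ∑ n ∈ Finset.Icc 1 N, gQ Q n * (n:ℝ) ^ (-s)

theorem DQ_step (Q : Finset ℕ) (q : ℕ) (hQ : ∀ r ∈ Q, r.Prime) (hqp : q.Prime) (hq : q ∉ Q) (s : ℝ) (N : ℕ) :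
    (1 + (q:ℝ) ^ (-s) / 2) * DQ (insert q Q) s N ≤ DQ Q s (q * N) := by
  set a : ℕ → ℝ := fun n => gQ Q n * (n:ℝ) ^ (-s)
  have ha : ∀ n, 0 ≤ a n := fun n => mul_nonneg (gQ_pos _ _).le (by positivity)
  set M := ∑ n ∈ (Finset.Icc 1 (q * N)).filter (fun n => q ∣ n), a n
  have h1 : DQ (insert q Q) s N ≤ DQ Q s (q * N) - 1 / 2 * M := by
    have e1 : DQ (insert q Q) s N ≤ DQ (insert q Q) s (q * N) := by
      apply Finset.sum_le_sum_of_subset_of_nonneg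
      · apply Finset.Icc_subset_Icc_right
        exact Nat.le_mul_of_pos_left _ hqp.pos
      · intro i _ _; exact mul_nonneg (gQ_pos _ _).le (by positivity)
    have e2 : DQ (insert q Q) s (q * N) = DQ Q s (q * N) - 1 / 2 * M := by
      simp only [DQ, M]
      rw [Finset.sum_filter, Finset.mul_sum, ← Finset.sum_sub_distrib]
      apply Finset.sum_congr rfl
      intro n _
      rw [gQ_insert _ _ _ hq]
      simp only [a]
      split_ifs <;> ring
    linarith
  have h2 : (q:ℝ) ^ (-s) * DQ (insert q Q) s N ≤ M := by
    have hinj : Set.InjOn (fun n => q * n) ((Finset.Icc 1 N : Finset ℕ) : Set ℕ) := by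
      intro x _ y _ h; exact Nat.eq_of_mul_eq_mul_left hqp.pos h
    calc (q:ℝ) ^ (-s) * DQ (insert q Q) s N ≤ ∑ n ∈ Finset.Icc 1 N, a (q * n) := by
          rw [DQ, Finset.mul_sum]
          apply Finset.sum_le_sum
          intro n _
          simp only [a]
          rw [gQ_prime_mul Q q n hQ hqp hq, gQ_insert _ _ _ hq]
          push_cast
          rw [Real.mul_rpow (by positivity) (by positivity)]
          have h0 := gQ_pos Q n
          have hc : (if q ∣ n then (1 / 2 : ℝ) else 1) ≤ 1 := by split_ifs <;> norm_num
          have hX : 0 ≤ gQ Q n * ((q:ℝ) ^ (-s) * (n:ℝ) ^ (-s)) := by positivity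
          calc _ = (gQ Q n * ((q:ℝ) ^ (-s) * (n:ℝ) ^ (-s))) * (if q ∣ n then (1 / 2 : ℝ) else 1) := by ring
            _ ≤ (gQ Q n * ((q:ℝ) ^ (-s) * (n:ℝ) ^ (-s))) * 1 := by gcongr
            _ = _ := by ring
      _ = ∑ n ∈ (Finset.Icc 1 N).image (fun n => q * n), a n := by rw [Finset.sum_image hinj]
      _ ≤ M := by
          apply Finset.sum_le_sum_of_subset_of_nonneg
          · intro n hn
            obtain ⟨m, hm, rfl⟩ := Finset.mem_image.1 hn
            simp only [Finset.mem_Icc, Finset.mem_filter] at hm ⊢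
            exact ⟨⟨Nat.mul_pos hqp.pos hm.1, Nat.mul_le_mul_left _ hm.2⟩, dvd_mul_right _ _⟩
          · intro i _ _; exact ha i
  linarith

theorem DQ_bound (Z s : ℝ) (hZ : ∀ N, DQ ∅ s N ≤ Z) (Q : Finset ℕ) (hQ : ∀ r ∈ Q, r.Prime) :
    ∀ N, (∏ q ∈ Q, (1 + (q:ℝ) ^ (-s) / 2)) * DQ Q s N ≤ Z := by
  induction Q using Finset.induction_on with
  | empty => intro N; simpa using hZ N
  | insert q Q hq ih =>
    intro N
    have hQ' : ∀ r ∈ Q, r.Prime := fun r hr => hQ r (Finset.mem_insert_of_mem hr)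
    have h1 := DQ_step Q q hQ' (hQ q (Finset.mem_insert_self _ _)) hq s N
    have h2 := ih hQ' (q * N)
    rw [Finset.prod_insert hq]
    have hp : 0 ≤ ∏ q ∈ Q, (1 + (q:ℝ) ^ (-s) / 2) := Finset.prod_nonneg (fun _ _ => by positivity)
    calc _ = (∏ q ∈ Q, (1 + (q:ℝ) ^ (-s) / 2)) * ((1 + (q:ℝ) ^ (-s) / 2) * DQ (insert q Q) s N) := by ring
      _ ≤ (∏ q ∈ Q, (1 + (q:ℝ) ^ (-s) / 2)) * DQ Q s (q * N) := by gcongr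
      _ ≤ Z := h2

theorem zeta_part (t : ℝ) (ht : 0 < t) (N : ℕ) (hN : 1 ≤ N) :
    ∑ n ∈ Finset.Icc 1 N, (n:ℝ) ^ (-(1 + t)) ≤ 1 + 1 / t - (N:ℝ) ^ (-t) / t := by
  induction N, hN using Nat.le_induction with
  | base => simp
  | succ n hn ih =>
    rw [Finset.sum_Icc_succ_top (by omega)]
    have hp : (0:ℝ) < n := by exact_mod_cast hn
    set M : ℝ := ((n + 1 : ℕ) : ℝ) with hM
    have hM' : M = n + 1 := by rw [hM]; push_cast; ring
    have hMp : 0 < M := by rw [hM']; positivity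
    have h1 : M ^ (-(1 + t)) = M ^ (-t) / M := by
      rw [show -(1 + t) = -t - 1 by ring, Real.rpow_sub hMp, Real.rpow_one]
    have h2 : M ^ (-t) * (1 + t / M) ≤ (n:ℝ) ^ (-t) := by
      have e1 : (n:ℝ) ^ (-t) = M ^ (-t) * Real.exp (t * Real.log (M / n)) := by
        rw [Real.rpow_def_of_pos hp, Real.rpow_def_of_pos hMp, ← Real.exp_add, Real.log_div hMp.ne' hp.ne']
        congr 1; ring
      rw [e1]
      have l1 : 1 - (M / n)⁻¹ ≤ Real.log (M / n) := Real.one_sub_inv_le_log_of_pos (by positivity)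
      have l2 : 1 - (M / n)⁻¹ = 1 / M := by rw [inv_div, hM']; field_simp; ring
      rw [l2] at l1
      have l3 := Real.add_one_le_exp (t * Real.log (M / n))
      have : t / M ≤ t * Real.log (M / n) := by
        calc t / M = t * (1 / M) := by ring
          _ ≤ _ := by gcongr
      gcongr
      linarith
    have h3 : M ^ (-t) / M ≤ ((n:ℝ) ^ (-t) - M ^ (-t)) / t := by
      rw [le_div_iff₀ ht]
      have : M ^ (-t) * (1 + t / M) = M ^ (-t) + M ^ (-t) / M * t := by ring
      linarith
    rw [h1]
    have : ((n:ℝ) ^ (-t) - M ^ (-t)) / t = (n:ℝ) ^ (-t) / t - M ^ (-t) / t := by ring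
    linarith

noncomputable def Gam (Q : Finset ℕ) (x : ℕ) : ℝ := ∑ m ∈ Finset.Icc 1 x, gQ Q m / m

theorem Gam_bound (Q : Finset ℕ) (x : ℕ) (L : ℝ) (hL : 0 < L) (hx : Real.log x ≤ L)
    (hQ : ∀ q ∈ Q, q.Prime ∧ 100 ≤ q ∧ Real.log q ≤ L / 100) :
    Gam Q x ≤ Real.exp 1 * (1 + L) * Real.exp (-(0.49 * ∑ q ∈ Q, (1 / q : ℝ))) := by
  set s : ℝ := 1 + 1 / L with hs
  have h1 : Gam Q x ≤ Real.exp 1 * DQ Q s x := by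
    rw [Gam, DQ, Finset.mul_sum]
    apply Finset.sum_le_sum
    intro m hm
    simp only [Finset.mem_Icc] at hm
    have hmp : (0:ℝ) < m := by exact_mod_cast hm.1
    have hlm : Real.log m ≤ L := (Real.log_le_log hmp (by exact_mod_cast hm.2)).trans hx
    have : 1 / (m:ℝ) ≤ Real.exp 1 * (m:ℝ) ^ (-s) := by
      rw [Real.rpow_def_of_pos hmp, ← Real.exp_add]
      rw [show 1 / (m:ℝ) = Real.exp (- Real.log m) by rw [Real.exp_neg, Real.exp_log hmp, one_div]]
      apply Real.exp_le_exp.2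
      have : Real.log m * (1 / L) ≤ 1 := by rw [mul_one_div, div_le_one hL]; exact hlm
      rw [hs]; nlinarith
    calc gQ Q m / m = gQ Q m * (1 / m) := by ring
      _ ≤ gQ Q m * (Real.exp 1 * (m:ℝ) ^ (-s)) := by have := gQ_pos Q m; gcongr
      _ = _ := by ring
  have h2 : (∏ q ∈ Q, (1 + (q:ℝ) ^ (-s) / 2)) * DQ Q s x ≤ 1 + L := by
    apply DQ_bound
    · intro N
      have hD : DQ ∅ s N = ∑ n ∈ Finset.Icc 1 N, (n:ℝ) ^ (-(1 + 1 / L)) := by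
        simp [DQ, gQ, omQ, hs]
      rw [hD]
      by_cases hN : 1 ≤ N
      · have := zeta_part (1 / L) (by positivity) N hN
        have h0 : 0 ≤ (N:ℝ) ^ (-(1 / L)) / (1 / L) := by positivity
        rw [one_div_one_div] at this
        linarith
      · have : N = 0 := by omega
        subst this; simp; linarith
    · exact fun r hr => (hQ r hr).1
  have h3 : Real.exp (0.49 * ∑ q ∈ Q, (1 / q : ℝ)) ≤ ∏ q ∈ Q, (1 + (q:ℝ) ^ (-s) / 2) := by
    rw [Finset.mul_sum, Real.exp_sum]
    apply Finset.prod_le_prod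
    · intros; positivity
    · intro q hq
      obtain ⟨hqp, hq100, hql⟩ := hQ q hq
      have hq0 : (0:ℝ) < q := by exact_mod_cast hqp.pos
      have hq1 : (100:ℝ) ≤ q := by exact_mod_cast hq100
      have e1 : 0.99 * (1 / (q:ℝ)) ≤ (q:ℝ) ^ (-s) := by
        have : (q:ℝ) ^ (-s) = 1 / q * Real.exp (-(Real.log q / L)) := by
          rw [Real.rpow_def_of_pos hq0]
          rw [show 1 / (q:ℝ) = Real.exp (- Real.log q) by rw [Real.exp_neg, Real.exp_log hq0, one_div], ← Real.exp_add]
          congr 1; rw [hs]; ring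
        rw [this, mul_comm]
        gcongr
        have h4 := Real.add_one_le_exp (-(Real.log q / L))
        have h5 : Real.log q / L ≤ 1 / 100 := by rw [div_le_iff₀ hL]; linarith
        norm_num at *; linarith
      set u := 0.495 * (1 / (q:ℝ)) with hu
      have hu0 : 0 < u := by positivity
      have hu1 : u ≤ 0.005 := by
        rw [hu, mul_one_div, div_le_iff₀ hq0]; linarith
      have e2 : 1 + u ≤ 1 + (q:ℝ) ^ (-s) / 2 := by
        have : u = 0.99 * (1 / (q:ℝ)) / 2 := by rw [hu]; ring
        linarith
      have e3 : Real.exp (0.49 * (1 / (q:ℝ))) ≤ 1 + u := by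
        rw [← Real.le_log_iff_exp_le (by positivity)]
        have l1 := Real.one_sub_inv_le_log_of_pos (show 0 < 1 + u by positivity)
        refine le_trans ?_ l1
        have : 1 - (1 + u)⁻¹ = u / (1 + u) := by field_simp; ring
        rw [this, le_div_iff₀ (by positivity)]
        have : 0.49 * (1 / (q:ℝ)) = u * (98 / 99) := by rw [hu]; ring
        rw [this]; nlinarith
      exact e3.trans e2
  have hD0 : 0 ≤ DQ Q s x := Finset.sum_nonneg (fun m _ => mul_nonneg (gQ_pos _ _).le (by positivity))
  have h4 : Real.exp (0.49 * ∑ q ∈ Q, (1 / q : ℝ)) * DQ Q s x ≤ 1 + L :=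
    (mul_le_mul_of_nonneg_right h3 hD0).trans h2
  have h5 : DQ Q s x ≤ (1 + L) * Real.exp (-(0.49 * ∑ q ∈ Q, (1 / q : ℝ))) := by
    rw [Real.exp_neg, ← div_eq_mul_inv, le_div_iff₀ (Real.exp_pos _)]; linarith
  calc _ ≤ _ := h1
    _ ≤ Real.exp 1 * ((1 + L) * Real.exp (-(0.49 * ∑ q ∈ Q, (1 / q : ℝ)))) := by gcongr
    _ = _ := by ring

end LargeOrd

set_option linter.all false
namespace LargeOrd

theorem hyper_sum (U V : ℕ) (F : ℕ → ℕ → ℝ) :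
    ∑ f ∈ Finset.Ioc U V, ∑ p ∈ f.divisorsAntidiagonal, F p.1 p.2
      = ∑ e ∈ Finset.Icc 1 V, ∑ m ∈ Finset.Ioc (U / e) (V / e), F e m := by
  rw [Finset.sum_sigma', Finset.sum_sigma']
  apply Finset.sum_bij' (fun (x : (_ : ℕ) × (ℕ × ℕ)) _ => (⟨x.2.1, x.2.2⟩ : (_ : ℕ) × ℕ))
    (fun (y : (_ : ℕ) × ℕ) _ => (⟨y.1 * y.2, (y.1, y.2)⟩ : (_ : ℕ) × (ℕ × ℕ)))
  · rintro ⟨f, e, m⟩ h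
    simp only [Finset.mem_sigma, Finset.mem_Ioc, Finset.mem_Icc, Nat.mem_divisorsAntidiagonal] at h ⊢
    obtain ⟨⟨h1, h2⟩, h3, h4⟩ := h
    have he : 0 < e := by rcases Nat.eq_zero_or_pos e with h | h; · simp [h] at h3; omega
                          · exact h
    have hm : 0 < m := by rcases Nat.eq_zero_or_pos m with h | h; · simp [h] at h3; omega
                          · exact h
    refine ⟨⟨he, ?_⟩, ?_, ?_⟩
    · have := Nat.le_mul_of_pos_right e hm; omega
    · rw [Nat.div_lt_iff_lt_mul he, mul_comm]; omega
    · rw [Nat.le_div_iff_mul_le he, mul_comm]; omega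
  · rintro ⟨e, m⟩ h
    simp only [Finset.mem_sigma, Finset.mem_Ioc, Finset.mem_Icc, Nat.mem_divisorsAntidiagonal] at h ⊢
    obtain ⟨⟨h1, h2⟩, h3, h4⟩ := h
    rw [Nat.div_lt_iff_lt_mul h1, mul_comm] at h3
    rw [Nat.le_div_iff_mul_le h1, mul_comm] at h4
    exact ⟨⟨h3, h4⟩, trivial, by omega⟩
  · rintro ⟨f, e, m⟩ h
    simp only [Finset.mem_sigma, Finset.mem_Ioc, Nat.mem_divisorsAntidiagonal] at h
    obtain ⟨_, h3, _⟩ := h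
    subst h3; rfl
  · rintro ⟨e, m⟩ h; rfl
  · rintro ⟨f, e, m⟩ h; rfl

theorem logsum (Q : Finset ℕ) (t : ℕ) :
    ∑ n ∈ Finset.Icc 1 t, gQ Q n * Real.log n ≤ 6 * t * Gam Q t := by
  have e0 : Finset.Icc 1 t = Finset.Ioc 0 t := rfl
  have h1 : ∑ n ∈ Finset.Icc 1 t, gQ Q n * Real.log n ≤
      ∑ n ∈ Finset.Ioc 0 t, ∑ p ∈ n.divisorsAntidiagonal, gQ Q p.1 * ArithmeticFunction.vonMangoldt p.2 := by
    rw [e0]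
    apply Finset.sum_le_sum
    intro n hn
    rw [← ArithmeticFunction.vonMangoldt_sum, Finset.mul_sum,
      ← Nat.sum_divisorsAntidiagonal' (f := fun _ d => gQ Q n * ArithmeticFunction.vonMangoldt d)]
    apply Finset.sum_le_sum
    intro p hp
    have hp' := (Nat.mem_divisorsAntidiagonal.1 hp).1
    apply mul_le_mul_of_nonneg_right _ ArithmeticFunction.vonMangoldt_nonneg
    rw [← hp', mul_comm]; exact gQ_mul_le _ _ _
  refine h1.trans ?_
  rw [hyper_sum 0 t (fun a b => gQ Q a * ArithmeticFunction.vonMangoldt b), Gam, Finset.mul_sum]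
  apply Finset.sum_le_sum
  intro m hm
  have hm1 := (Finset.mem_Icc.1 hm).1
  have hmp : (0:ℝ) < m := by exact_mod_cast hm1
  rw [← Finset.mul_sum, Nat.zero_div]
  have hpsi : ∑ d ∈ Finset.Ioc 0 (t / m), ArithmeticFunction.vonMangoldt d ≤ 6 * ((t:ℝ) / m) := by
    have h := Chebyshev.psi_le_const_mul_self (x := ((t / m : ℕ) : ℝ)) (by positivity)
    rw [Chebyshev.psi, Nat.floor_natCast] at h
    refine h.trans ?_
    have h4 : Real.log 4 ≤ 2 := by
      rw [show (4:ℝ) = 2 ^ 2 by norm_num, Real.log_pow]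
      have := Real.log_two_lt_d9
      push_cast; linarith
    have h5 : ((t / m : ℕ) : ℝ) ≤ (t:ℝ) / m := Nat.cast_div_le
    have : (0:ℝ) ≤ ((t / m : ℕ) : ℝ) := by positivity
    nlinarith
  calc _ ≤ gQ Q m * (6 * ((t:ℝ) / m)) := by have := gQ_pos Q m; gcongr
    _ = _ := by ring

theorem Gam_mono (Q : Finset ℕ) {x y : ℕ} (h : x ≤ y) : Gam Q x ≤ Gam Q y := by
  apply Finset.sum_le_sum_of_subset_of_nonneg
  · exact Finset.Icc_subset_Icc_right h
  · intro i _ _; exact div_nonneg (gQ_pos _ _).le (by positivity)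

theorem Gam_nonneg (Q : Finset ℕ) (x : ℕ) : 0 ≤ Gam Q x :=
  Finset.sum_nonneg (fun i _ => div_nonneg (gQ_pos _ _).le (by positivity))

theorem block1 (Q : Finset ℕ) (u : ℕ) (hu : 2 ≤ u) :
    ∑ n ∈ Finset.Ioc u (2 * u), gQ Q n / n ≤ 12 * Gam Q (2 * u) / Real.log u := by
  have hup : (0:ℝ) < u := by exact_mod_cast (by omega : 0 < u)
  have hl : 0 < Real.log u := Real.log_pos (by exact_mod_cast (by omega : 1 < u))
  have h := logsum Q (2 * u)
  have h2 : (u * Real.log u) * ∑ n ∈ Finset.Ioc u (2 * u), gQ Q n / n ≤ ∑ n ∈ Finset.Icc 1 (2 * u), gQ Q n * Real.log n := by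
    rw [Finset.mul_sum]
    calc _ ≤ ∑ n ∈ Finset.Ioc u (2 * u), gQ Q n * Real.log n := by
          apply Finset.sum_le_sum
          intro n hn
          have hn1 := (Finset.mem_Ioc.1 hn).1
          have hnR : (u:ℝ) ≤ n := by exact_mod_cast hn1.le
          have hnp : (0:ℝ) < n := by linarith
          have hll : Real.log u ≤ Real.log n := Real.log_le_log hup hnR
          have := gQ_pos Q n
          calc _ = gQ Q n * (Real.log u * (u / n)) := by ring
            _ ≤ gQ Q n * (Real.log n * 1) := by
                gcongr
                rw [div_le_one hnp]; exact hnR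
            _ = _ := by ring
      _ ≤ _ := by
          apply Finset.sum_le_sum_of_subset_of_nonneg
          · intro n hn; simp only [Finset.mem_Ioc, Finset.mem_Icc] at hn ⊢; omega
          · intro n hn _
            exact mul_nonneg (gQ_pos _ _).le (Real.log_natCast_nonneg _)
  rw [le_div_iff₀ hl]
  have h3 := h2.trans h
  push_cast at h3
  have h4 : u * ((∑ n ∈ Finset.Ioc u (2 * u), gQ Q n / n) * Real.log u) ≤ u * (12 * Gam Q (2 * u)) := by linarith
  exact le_of_mul_le_mul_left h4 hup

theorem blocks (Q : Finset ℕ) (X B u : ℕ) (hu : 2 ≤ u) (hX : 2 ^ B * u ≤ X) :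
    ∑ n ∈ Finset.Ioc u (2 ^ B * u), gQ Q n / n ≤ B * (12 * Gam Q X / Real.log u) := by
  have hup : (0:ℝ) < u := by exact_mod_cast (by omega : 0 < u)
  have hl : 0 < Real.log u := Real.log_pos (by exact_mod_cast (by omega : 1 < u))
  induction B with
  | zero => simp
  | succ B ih =>
    have hpow : 2 ^ (B + 1) * u = 2 * (2 ^ B * u) := by rw [pow_succ]; ring
    have h1 := ih (by rw [hpow] at hX; omega)
    have hle : u ≤ 2 ^ B * u := Nat.le_mul_of_pos_left _ (by positivity)
    have h2 := block1 Q (2 ^ B * u) (by omega)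
    have e : ∑ n ∈ Finset.Ioc u (2 ^ (B + 1) * u), gQ Q n / n = ∑ n ∈ Finset.Ioc u (2 ^ B * u), gQ Q n / n + ∑ n ∈ Finset.Ioc (2 ^ B * u) (2 * (2 ^ B * u)), gQ Q n / n := by
      rw [hpow]
      exact (Finset.sum_Ioc_consecutive (fun n => gQ Q n / (n:ℝ)) hle (by omega)).symm
    rw [e]
    have h3 : 12 * Gam Q (2 * (2 ^ B * u)) / Real.log ((2 ^ B * u : ℕ) : ℝ) ≤ 12 * Gam Q X / Real.log u := by
      have g1 := Gam_mono Q (show 2 * (2 ^ B * u) ≤ X by rw [hpow] at hX; omega)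
      have g2 := Gam_nonneg Q X
      have l1 : Real.log u ≤ Real.log ((2 ^ B * u : ℕ) : ℝ) := Real.log_le_log hup (by exact_mod_cast hle)
      gcongr
    push_cast at *
    linarith

theorem tail_inv_sq (r V : ℕ) (hr : 1 ≤ r) : ∑ e ∈ Finset.Ioc r V, (1 / (e:ℝ) ^ 2) ≤ 1 / (r:ℝ) := by
  by_cases h : r ≤ V
  · have key : ∑ e ∈ Finset.Ioc r V, (1 / (e:ℝ) ^ 2) ≤ 1 / (r:ℝ) - 1 / (V:ℝ) := by
      induction V, h using Nat.le_induction with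
      | base => simp
      | succ n hn ih =>
        rw [Finset.sum_Ioc_succ_top (by omega)]
        have hp : (0:ℝ) < n := by exact_mod_cast (by omega : 0 < n)
        have : 1 / ((n + 1 : ℕ):ℝ) ^ 2 ≤ 1 / (n:ℝ) - 1 / ((n + 1 : ℕ) : ℝ) := by
          push_cast
          rw [div_sub_div _ _ (by positivity) (by positivity), div_le_div_iff₀ (by positivity) (by positivity)]
          nlinarith
        linarith
    have : (0:ℝ) ≤ 1 / V := by positivity
    linarith
  · rw [Finset.Ioc_eq_empty (by omega)]; simp

theorem thin_sum (Q : Finset ℕ) (U B w X : ℕ) (hU : 4 ≤ U) (hX : 2 ^ (B + 1) * U ≤ X) :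
    ∑ f ∈ (Finset.Ioc U (2 ^ B * U)).filter (fun f => omQ Q f ≤ w), hh f / f
      ≤ 2 ^ w * (25 * (B + 1) * Gam Q X / Real.log (Nat.sqrt U)) := by
  set V := 2 ^ B * U
  set r := Nat.sqrt U
  have hr2 : 2 ≤ r := by rw [Nat.le_sqrt]; omega
  have hrp : (0:ℝ) < r := by exact_mod_cast (by omega : 0 < r)
  have hrU : r * r ≤ U := Nat.sqrt_le U
  have hUV : U ≤ V := Nat.le_mul_of_pos_left _ (by positivity)
  have hVX : V ≤ X := by
    have : 2 ^ (B + 1) * U = 2 * V := by simp only [V]; rw [pow_succ]; ring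
    omega
  have hl : 0 < Real.log r := Real.log_pos (by exact_mod_cast (by omega : 1 < r))
  have hG := Gam_nonneg Q X
  have h1 : ∑ f ∈ (Finset.Ioc U V).filter (fun f => omQ Q f ≤ w), hh f / f ≤
      2 ^ w * ∑ f ∈ Finset.Ioc U V, gQ Q f * (hh f / f) := by
    rw [Finset.mul_sum]
    calc _ ≤ ∑ f ∈ (Finset.Ioc U V).filter (fun f => omQ Q f ≤ w), 2 ^ w * (gQ Q f * (hh f / f)) := by
          apply Finset.sum_le_sum
          intro f hf
          have hw := (Finset.mem_filter.1 hf).2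
          have : 1 ≤ 2 ^ w * gQ Q f := by
            unfold gQ
            calc (1:ℝ) = 2 ^ w * (1 / 2) ^ w := by rw [← mul_pow]; norm_num
              _ ≤ _ := by
                  gcongr 2 ^ w * ?_
                  exact pow_le_pow_of_le_one (by norm_num) (by norm_num) hw
          have h0 : 0 ≤ hh f / f := div_nonneg (hh_nonneg f) (by positivity)
          nlinarith
      _ ≤ _ := by
          apply Finset.sum_le_sum_of_subset_of_nonneg (Finset.filter_subset _ _)
          intro f _ _
          have h0 : 0 ≤ hh f / f := div_nonneg (hh_nonneg f) (by positivity)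
          have := gQ_pos Q f
          positivity
  have h2 : ∑ f ∈ Finset.Ioc U V, gQ Q f * (hh f / f) ≤
      ∑ f ∈ Finset.Ioc U V, ∑ p ∈ f.divisorsAntidiagonal, (1 / (p.1:ℝ) ^ 2) * (gQ Q p.2 / p.2) := by
    apply Finset.sum_le_sum
    intro f hf
    have hf0 := (Finset.mem_Ioc.1 hf).1
    rw [hh, Finset.sum_div, Finset.mul_sum, ← Nat.sum_divisorsAntidiagonal (f := fun e _ => gQ Q f * (1 / (e:ℝ) / f))]
    apply Finset.sum_le_sum
    rintro ⟨e, m⟩ hp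
    obtain ⟨hp1, hp2⟩ := Nat.mem_divisorsAntidiagonal.1 hp
    simp only at hp1 ⊢
    have hg : gQ Q f ≤ gQ Q m := by rw [← hp1]; exact gQ_mul_le _ _ _
    have hg0 := gQ_pos Q f
    calc gQ Q f * (1 / (e:ℝ) / f) ≤ gQ Q m * (1 / (e:ℝ) / f) := by gcongr
      _ = _ := by rw [← hp1]; push_cast; ring
  rw [hyper_sum U V (fun e m => (1 / (e:ℝ) ^ 2) * (gQ Q m / m))] at h2
  set K := 12 * (B + 1) * Gam Q X / Real.log r
  have hK0 : 0 ≤ K := by positivity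
  have h3 : ∀ e ∈ Finset.Icc 1 V, (∑ m ∈ Finset.Ioc (U / e) (V / e), (1 / (e:ℝ) ^ 2) * (gQ Q m / m)) ≤
      (1 / (e:ℝ) ^ 2) * K + (if r < e then (1 / (e:ℝ) ^ 2) * Gam Q X else 0) := by
    intro e he
    have he1 := (Finset.mem_Icc.1 he).1
    rw [← Finset.mul_sum]
    split_ifs with hre
    · have : ∑ m ∈ Finset.Ioc (U / e) (V / e), gQ Q m / m ≤ Gam Q X := by
        apply Finset.sum_le_sum_of_subset_of_nonneg
        · intro m hm
          simp only [Finset.mem_Ioc, Finset.mem_Icc] at hm ⊢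
          have h8 := Nat.div_le_self V e
          exact ⟨by have := Nat.zero_le (U / e); exact lt_of_le_of_lt this hm.1, by omega⟩
        · intro i _ _; exact div_nonneg (gQ_pos _ _).le (by positivity)
      have h6 : (1 / (e:ℝ) ^ 2) * ∑ m ∈ Finset.Ioc (U / e) (V / e), gQ Q m / m ≤ (1 / (e:ℝ) ^ 2) * Gam Q X := by gcongr
      have : 0 ≤ (1 / (e:ℝ) ^ 2) * K := by positivity
      linarith
    · rw [add_zero]
      gcongr
      have hu : r ≤ U / e := by
        rw [Nat.le_div_iff_mul_le he1]
        calc r * e ≤ r * r := Nat.mul_le_mul_left _ (by omega)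
          _ ≤ U := hrU
      set u := U / e
      have hV : V / e ≤ 2 ^ (B + 1) * u := by
        have : U < (u + 1) * e := by
          rw [← Nat.div_lt_iff_lt_mul he1]; omega
        have h7 : V / e ≤ 2 ^ B * (u + 1) := by
          rw [Nat.div_le_iff_le_mul_add_pred he1]
          simp only [V]
          calc 2 ^ B * U ≤ 2 ^ B * ((u + 1) * e) := Nat.mul_le_mul_left _ this.le
            _ = e * (2 ^ B * (u + 1)) := by ring
            _ ≤ _ := Nat.le_add_right _ _
        calc _ ≤ _ := h7
          _ ≤ 2 ^ B * (2 * u) := Nat.mul_le_mul_left _ (by omega)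
          _ = _ := by rw [pow_succ]; ring
      have hX' : 2 ^ (B + 1) * u ≤ X := (Nat.mul_le_mul_left _ (Nat.div_le_self U e)).trans hX
      calc _ ≤ ∑ n ∈ Finset.Ioc u (2 ^ (B + 1) * u), gQ Q n / n := by
            apply Finset.sum_le_sum_of_subset_of_nonneg (Finset.Ioc_subset_Ioc_right hV)
            intro i _ _; exact div_nonneg (gQ_pos _ _).le (by positivity)
        _ ≤ ((B + 1 : ℕ):ℝ) * (12 * Gam Q X / Real.log u) := blocks Q X (B + 1) u (by omega) hX'
        _ ≤ ((B + 1 : ℕ):ℝ) * (12 * Gam Q X / Real.log r) := by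
            have : Real.log r ≤ Real.log u := Real.log_le_log hrp (by exact_mod_cast hu)
            gcongr
        _ = K := by simp only [K]; push_cast; ring
  have h4 := h2.trans (Finset.sum_le_sum h3)
  rw [Finset.sum_add_distrib, ← Finset.sum_mul, ← Finset.sum_filter, ← Finset.sum_mul] at h4
  have h5 : ∑ e ∈ Finset.Icc 1 V, (1 / (e:ℝ) ^ 2) ≤ 2 := by
    have h := sum_inv_sq V (by omega)
    have : (0:ℝ) ≤ 1 / V := by positivity
    linarith
  have h6 : ∑ e ∈ (Finset.Icc 1 V).filter (fun e => r < e), (1 / (e:ℝ) ^ 2) ≤ 1 / (r:ℝ) := by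
    refine le_trans (Finset.sum_le_sum_of_subset_of_nonneg ?_ ?_) (tail_inv_sq r V (by omega))
    · intro e he; simp only [Finset.mem_filter, Finset.mem_Icc, Finset.mem_Ioc] at he ⊢; omega
    · intros; positivity
  have h7 : 1 / (r:ℝ) ≤ 1 / Real.log r := by
    have := Real.log_le_sub_one_of_pos hrp
    gcongr; linarith
  have h8 : (∑ e ∈ Finset.Icc 1 V, (1 / (e:ℝ) ^ 2)) * K ≤ 2 * K := by gcongr
  have h9 : (∑ e ∈ (Finset.Icc 1 V).filter (fun e => r < e), (1 / (e:ℝ) ^ 2)) * Gam Q X ≤ 1 / Real.log r * Gam Q X := by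
    gcongr; exact h6.trans h7
  have h10 : 2 * K + 1 / Real.log r * Gam Q X ≤ 25 * (B + 1) * Gam Q X / Real.log r := by
    have e1 : 25 * (B + 1) * Gam Q X / Real.log r = 2 * K + (B + 1) * (1 / Real.log r * Gam Q X) := by
      simp only [K]; ring
    rw [e1]
    have : 0 ≤ 1 / Real.log r * Gam Q X := by positivity
    have hB : (0:ℝ) ≤ B := by positivity
    nlinarith
  calc _ ≤ _ := h1
    _ ≤ _ := by gcongr; linarith

end LargeOrd

set_option linter.all false
namespace LargeOrd

/-! ### Part 6: many primes have large order -/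

theorem shift_bounds (f : ℕ → ℕ) (hf : IsShift f) (j p : ℕ) (hp : p.Prime) (h1 : 4 ^ j < p) (h2 : p ≤ 4 ^ (j + 1)) :
    4 ^ j ≤ f p ∧ f p ≤ 4 ^ (j + 1) := by
  have hne : p ≠ 4 ^ (j + 1) := by
    rintro rfl
    have h4 : ¬ (4 ^ (j + 1)).Prime := by
      rw [show (4:ℕ) ^ (j + 1) = 2 ^ (2 * (j + 1)) by rw [pow_mul]; norm_num]
      exact Nat.Prime.not_prime_pow (by omega)
    exact h4 hp
  rcases hf with rfl | rfl
  · constructor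
    · show 4 ^ j ≤ p - 1; omega
    · show p - 1 ≤ _; omega
  · constructor
    · show 4 ^ j ≤ p + 1; omega
    · show p + 1 ≤ _; omega

theorem bad_two (f : ℕ → ℕ) (hf : IsShift f) (j J1 J2 : ℕ) (hj : 20 ≤ j) (hJ1 : 9 ≤ J1) (hJ2 : 2000 * J2 ≤ j)
    (Q : Finset ℕ) (hQ : ∀ q ∈ Q, q.Prime ∧ 4 ^ J1 < q ∧ q ≤ 4 ^ J2) :
    (((Finset.Ioc 0 (4 ^ (j + 1))).filter (fun p => p.Prime ∧ ∃ q ∈ Q, q ^ 2 ∣ f p)).card : ℝ) ≤ 1 / 100 * (4 ^ j / j) := by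
  have hsub : (Finset.Ioc 0 (4 ^ (j + 1))).filter (fun p => p.Prime ∧ ∃ q ∈ Q, q ^ 2 ∣ f p) ⊆
      Q.biUnion (fun q => (Finset.Ioc 0 (4 ^ (j + 1))).filter (fun p => p.Prime ∧ q ^ 2 ∣ f p)) := by
    intro p hp
    simp only [Finset.mem_filter, Finset.mem_biUnion] at hp ⊢
    obtain ⟨h1, h2, q, hq, h3⟩ := hp
    exact ⟨q, hq, h1, h2, h3⟩
  have h1 : (((Finset.Ioc 0 (4 ^ (j + 1))).filter (fun p => p.Prime ∧ ∃ q ∈ Q, q ^ 2 ∣ f p)).card : ℝ) ≤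
      ∑ q ∈ Q, (((Finset.Ioc 0 (4 ^ (j + 1))).filter (fun p => p.Prime ∧ q ^ 2 ∣ f p)).card : ℝ) := by
    exact_mod_cast (Finset.card_le_card hsub).trans Finset.card_biUnion_le
  have h2 : ∀ q ∈ Q, (((Finset.Ioc 0 (4 ^ (j + 1))).filter (fun p => p.Prime ∧ q ^ 2 ∣ f p)).card : ℝ) ≤
      2000 * (4 ^ j / j) * (1 / (q:ℝ) ^ 2) := by
    intro q hq
    obtain ⟨hqp, _, hq2⟩ := hQ q hq
    have h := brun' f hf j (q ^ 2) hj (pow_pos hqp.pos 2) (by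
      rw [← pow_mul]
      calc q ^ (2 * 5) ≤ (4 ^ J2) ^ (2 * 5) := Nat.pow_le_pow_left hq2 _
        _ = 4 ^ (J2 * (2 * 5)) := by rw [← pow_mul]
        _ ≤ _ := Nat.pow_le_pow_right (by norm_num) (by omega))
    have hq0 : (1:ℝ) ≤ q := by exact_mod_cast hqp.one_le
    have hhq : hh (q ^ 2) ≤ 4 := by
      rw [sq]
      refine (hh_mul_le q q).trans ?_
      rw [hh_prime q hqp]
      have : 1 / (q:ℝ) ≤ 1 := by rw [div_le_one (by linarith)]; exact hq0
      have h0 : 0 ≤ 1 / (q:ℝ) := by positivity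
      nlinarith
    refine h.trans ?_
    calc _ ≤ 500 * (4 ^ j / (j:ℝ)) * (4 / ((q ^ 2 : ℕ) : ℝ)) := by gcongr
      _ = _ := by push_cast; ring
  have h3 : ∑ q ∈ Q, (1 / (q:ℝ) ^ 2) ≤ 1 / ((4 ^ J1 : ℕ) : ℝ) := by
    refine le_trans (Finset.sum_le_sum_of_subset_of_nonneg ?_ ?_) (tail_inv_sq (4 ^ J1) (4 ^ J2) (Nat.one_le_pow _ _ (by norm_num)))
    · intro q hq; simp only [Finset.mem_Ioc]; exact ⟨(hQ q hq).2.1, (hQ q hq).2.2⟩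
    · intros; positivity
  have h4 : 1 / ((4 ^ J1 : ℕ) : ℝ) ≤ 1 / 200000 := by
    have : 4 ^ 9 ≤ 4 ^ J1 := Nat.pow_le_pow_right (by norm_num) hJ1
    have h5 : (200000:ℝ) ≤ ((4 ^ J1 : ℕ) : ℝ) := by exact_mod_cast (by omega : 200000 ≤ 4 ^ J1)
    gcongr
  calc _ ≤ _ := h1
    _ ≤ _ := Finset.sum_le_sum h2
    _ = 2000 * (4 ^ j / (j:ℝ)) * ∑ q ∈ Q, (1 / (q:ℝ) ^ 2) := by rw [Finset.mul_sum]
    _ ≤ 2000 * (4 ^ j / (j:ℝ)) * (1 / 200000) := by gcongr; exact h3.trans h4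
    _ = _ := by ring

theorem bad_three (f : ℕ → ℕ) (hf : IsShift f) (j J2 : ℕ) (hj : 20 ≤ j) (hJ2 : 2000 * J2 ≤ j)
    (Q : Finset ℕ) (hQ : ∀ q ∈ Q, q.Prime ∧ 100 ≤ q ∧ q ≤ 4 ^ J2)
    (hE : 2000 ≤ ∑ q ∈ Q, (1 / q : ℝ)) (W : ℕ) (hW : 1.25 * ∑ q ∈ Q, (1 / q : ℝ) ≤ W) :
    (((Finset.Ioc 0 (4 ^ (j + 1))).filter (fun p => p.Prime ∧ W ≤ omQ Q (f p))).card : ℝ) ≤ 1 / 100 * (4 ^ j / j) := by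
  set E := ∑ q ∈ Q, (1 / q : ℝ)
  have hW1 : 100 ≤ W := by
    have : (100:ℝ) ≤ W := by linarith
    exact_mod_cast this
  have h := moment_bound f hf j 100 J2 hj Q (fun q hq => ⟨(hQ q hq).1, (hQ q hq).2.2⟩) (by omega) W hW1
  set c := (((Finset.Ioc 0 (4 ^ (j + 1))).filter (fun p => p.Prime ∧ W ≤ omQ Q (f p))).card : ℝ)
  have hc0 : 0 ≤ c := by positivity
  have hs : ∑ q ∈ Q, (1 + 1 / (q:ℝ)) / q ≤ 1.01 * E := by
    rw [Finset.mul_sum]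
    apply Finset.sum_le_sum
    intro q hq
    have hq1 : (100:ℝ) ≤ q := by exact_mod_cast (hQ q hq).2.1
    have : 1 / (q:ℝ) ≤ 1 / 100 := by gcongr
    calc (1 + 1 / (q:ℝ)) / q = (1 + 1 / (q:ℝ)) * (1 / q) := by ring
      _ ≤ 1.01 * (1 / q) := by gcongr; norm_num at *; linarith
  have hs0 : 0 ≤ ∑ q ∈ Q, (1 + 1 / (q:ℝ)) / q := Finset.sum_nonneg (fun _ _ => by positivity)
  have hw : 1.2 * E ≤ ((W + 1 - 100 : ℕ) : ℝ) := by
    rw [Nat.cast_sub (by omega)]; push_cast; linarith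
  have hE0 : 0 < E := by linarith
  have h2 : c * (1.2 * E) ^ 100 ≤ 500 * (4 ^ j / (j:ℝ)) * (1.01 * E) ^ 100 := by
    calc _ ≤ c * ((W + 1 - 100 : ℕ) : ℝ) ^ 100 := by gcongr
      _ ≤ _ := h
      _ ≤ _ := by gcongr
  rw [mul_pow, mul_pow] at h2
  have hEp : 0 < E ^ 100 := by positivity
  have h3 : c * (1.2:ℝ) ^ 100 ≤ 500 * (4 ^ j / (j:ℝ)) * (1.01:ℝ) ^ 100 := by
    have : (c * (1.2:ℝ) ^ 100) * E ^ 100 ≤ (500 * (4 ^ j / (j:ℝ)) * (1.01:ℝ) ^ 100) * E ^ 100 := by linarith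
    exact le_of_mul_le_mul_right this hEp
  have h4 : (1.01:ℝ) ^ 100 * 50000 ≤ 1.2 ^ 100 := by norm_num
  have hx : 0 ≤ 4 ^ j / (j:ℝ) := by positivity
  set y := 4 ^ j / (j:ℝ)
  have h5 : c * (1.2:ℝ) ^ 100 ≤ (1 / 100 * y) * (1.2:ℝ) ^ 100 := by
    calc _ ≤ _ := h3
      _ = (1 / 100 * y) * ((1.01:ℝ) ^ 100 * 50000) := by ring
      _ ≤ _ := by gcongr
  exact le_of_mul_le_mul_right h5 (by positivity)

theorem bad_four (f : ℕ → ℕ) (hf : IsShift f) (j J2 B : ℕ) (hj : 100 ≤ j) (hJ2 : 2000 * J2 ≤ j) (hB : 5 * B + 20 ≤ j)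
    (Q : Finset ℕ) (hQ : ∀ q ∈ Q, q.Prime ∧ 100 ≤ q ∧ q ≤ 4 ^ J2)
    (w : ℕ) (hw : (w:ℝ) ≤ 0.625 * ∑ q ∈ Q, (1 / q : ℝ))
    (hE : (2 * B + 4) * Real.exp (-(0.05 * ∑ q ∈ Q, (1 / q : ℝ))) ≤ 1 / 10 ^ 8)
    (F : Finset ℕ) (hF : ∀ p ∈ F, p.Prime ∧ p ≤ 4 ^ (j + 1) ∧
      ∃ g, 2 ^ (j - B - 1) < g ∧ g ≤ 2 ^ (j + B + 2) ∧ omQ Q g ≤ w ∧ g ∣ f p) :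
    (F.card : ℝ) ≤ 1 / 100 * (4 ^ j / j) := by
  set E := ∑ q ∈ Q, (1 / q : ℝ)
  have hE0 : 0 ≤ E := Finset.sum_nonneg (fun _ _ => by positivity)
  set U := 2 ^ (j - B - 1) with hU
  set GG := (Finset.Ioc U (2 ^ (2 * B + 3) * U)).filter (fun g => omQ Q g ≤ w) with hGG
  have hjR : (100:ℝ) ≤ j := by exact_mod_cast hj
  have hVe : 2 ^ (2 * B + 3) * U = 2 ^ (j + B + 2) := by rw [hU, ← pow_add]; congr 1; omega
  have hsub : F ⊆
      GG.biUnion (fun g => (Finset.Ioc 0 (4 ^ (j + 1))).filter (fun p => p.Prime ∧ g ∣ f p)) := by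
    intro p hp
    obtain ⟨h1, h2, g, hg1, hg2, hg3, hg4⟩ := hF p hp
    simp only [hGG, Finset.mem_filter, Finset.mem_biUnion, Finset.mem_Ioc, hVe]
    exact ⟨g, ⟨⟨hg1, hg2⟩, hg3⟩, ⟨h1.pos, h2⟩, h1, hg4⟩
  have h1 : (F.card : ℝ) ≤
      ∑ g ∈ GG, (((Finset.Ioc 0 (4 ^ (j + 1))).filter (fun p => p.Prime ∧ g ∣ f p)).card : ℝ) := by
    exact_mod_cast (Finset.card_le_card hsub).trans Finset.card_biUnion_le
  have h2 : ∀ g ∈ GG, (((Finset.Ioc 0 (4 ^ (j + 1))).filter (fun p => p.Prime ∧ g ∣ f p)).card : ℝ) ≤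
      500 * (4 ^ j / j) * (hh g / g) := by
    intro g hg
    simp only [hGG, Finset.mem_filter, Finset.mem_Ioc, hVe] at hg
    apply brun' f hf j g (by omega) (lt_of_le_of_lt (Nat.zero_le _) hg.1.1)
    calc g ^ 5 ≤ (2 ^ (j + B + 2)) ^ 5 := Nat.pow_le_pow_left hg.1.2 5
      _ = 2 ^ ((j + B + 2) * 5) := by rw [← pow_mul]
      _ ≤ 2 ^ (2 * (3 * j)) := Nat.pow_le_pow_right (by norm_num) (by omega)
      _ = 4 ^ (3 * j) := by rw [pow_mul]; norm_num
  have hXe : 2 ^ (2 * B + 3 + 1) * U = 2 ^ (j + B + 3) := by rw [hU, ← pow_add]; congr 1; omega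
  have h3 := thin_sum Q U (2 * B + 3) w (2 ^ (j + B + 3))
    (by rw [hU]; calc 4 = 2 ^ 2 := by norm_num
          _ ≤ _ := Nat.pow_le_pow_right (by norm_num) (by omega)) hXe.le
  have hlog2 := Real.log_two_gt_d9
  have hlog2' := Real.log_two_lt_d9
  have hBR : (5:ℝ) * B + 20 ≤ j := by exact_mod_cast hB
  have h4 := Gam_bound Q (2 ^ (j + B + 3)) j (by linarith)
    (by push_cast; rw [Real.log_pow]; push_cast
        have : (0:ℝ) ≤ (j:ℝ) + B + 3 := by positivity
        nlinarith)
    (by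
      intro q hq
      refine ⟨(hQ q hq).1, (hQ q hq).2.1, ?_⟩
      have hq0 : (0:ℝ) < q := by exact_mod_cast (hQ q hq).1.pos
      have : Real.log q ≤ Real.log ((4:ℝ) ^ J2) := Real.log_le_log hq0 (by exact_mod_cast (hQ q hq).2.2)
      rw [Real.log_pow, show (4:ℝ) = 2 ^ 2 by norm_num, Real.log_pow] at this
      have hJR : (2000:ℝ) * J2 ≤ j := by exact_mod_cast hJ2
      have hJ0 : (0:ℝ) ≤ J2 := by positivity
      push_cast at this
      nlinarith)
  have hr : (j:ℝ) / 8 ≤ Real.log (Nat.sqrt U) := by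
    have : 2 ^ (j / 4) ≤ Nat.sqrt U := by
      rw [Nat.le_sqrt, ← pow_add]
      exact Nat.pow_le_pow_right (by norm_num) (by omega)
    have hl : Real.log ((2:ℝ) ^ (j / 4)) ≤ Real.log (Nat.sqrt U) := Real.log_le_log (by positivity) (by exact_mod_cast this)
    rw [Real.log_pow] at hl
    have h5 : j ≤ 4 * (j / 4) + 3 := by omega
    have h6 : (j:ℝ) ≤ 4 * ((j / 4 : ℕ) : ℝ) + 3 := by exact_mod_cast h5
    nlinarith
  have h2w : (2:ℝ) ^ w ≤ Real.exp (0.44 * E) := by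
    rw [← Real.exp_log (show (0:ℝ) < 2 ^ w by positivity), Real.log_pow]
    apply Real.exp_le_exp.2
    have hw0 : (0:ℝ) ≤ w := by positivity
    nlinarith
  have hG0 := Gam_nonneg Q (2 ^ (j + B + 3))
  set G := Gam Q (2 ^ (j + B + 3))
  have hexp1 := Real.exp_one_lt_d9
  have h5 : ∑ g ∈ GG, hh g / g ≤ 1 / 50000 := by
    calc _ ≤ _ := h3
      _ ≤ Real.exp (0.44 * E) * (25 * (2 * B + 4) * (3 * (2 * j) * Real.exp (-(0.49 * E))) / (j / 8)) := by
          have hG : G ≤ 3 * (2 * j) * Real.exp (-(0.49 * E)) := by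
            refine h4.trans ?_
            gcongr <;> linarith
          have hBB : ((2 * B + 3 : ℕ) : ℝ) + 1 = 2 * B + 4 := by push_cast; ring
          rw [hBB]
          gcongr
      _ = 1200 * ((2 * B + 4) * (Real.exp (0.44 * E) * Real.exp (-(0.49 * E)))) := by
          field_simp; ring
      _ = 1200 * ((2 * B + 4) * Real.exp (-(0.05 * E))) := by
          rw [← Real.exp_add]; congr 3; ring_nf
      _ ≤ 1200 * (1 / 10 ^ 8) := by gcongr
      _ ≤ _ := by norm_num
  calc _ ≤ _ := h1
    _ ≤ _ := Finset.sum_le_sum h2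
    _ = 500 * (4 ^ j / (j:ℝ)) * ∑ g ∈ GG, hh g / g := by rw [Finset.mul_sum]
    _ ≤ 500 * (4 ^ j / (j:ℝ)) * (1 / 50000) := by gcongr
    _ = _ := by ring

end LargeOrd


namespace LargeOrd

theorem omQ_add_le (Q : Finset ℕ) (d e : ℕ) (hno : ¬ ∃ q ∈ Q, q ^ 2 ∣ d * e) :
    omQ Q d + omQ Q e ≤ omQ Q (d * e) := by
  unfold omQ
  rw [← Finset.card_union_of_disjoint]
  · apply Finset.card_le_card
    intro q hq
    simp only [Finset.mem_union, Finset.mem_filter] at hq ⊢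
    rcases hq with h | h
    · exact ⟨h.1, h.2.mul_right _⟩
    · exact ⟨h.1, h.2.mul_left _⟩
  · rw [Finset.disjoint_left]
    intro q h1 h2
    simp only [Finset.mem_filter] at h1 h2
    exact hno ⟨q, h1.1, by rw [sq]; exact mul_dvd_mul h1.2 h2.2⟩

theorem bad_shift (f : ℕ → ℕ) (hf : IsShift f) (o : ℕ → ℕ) (j J1 J2 B : ℕ) (hj : 100 ≤ j) (hJ1 : 9 ≤ J1)
    (hJ2 : 2000 * J2 ≤ j) (hB : 5 * B + 20 ≤ j)
    (Q : Finset ℕ) (hQ : ∀ q ∈ Q, q.Prime ∧ 4 ^ J1 < q ∧ q ≤ 4 ^ J2)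
    (hE0 : 2000 ≤ ∑ q ∈ Q, (1 / q : ℝ))
    (hE : (2 * B + 4) * Real.exp (-(0.05 * ∑ q ∈ Q, (1 / q : ℝ))) ≤ 1 / 10 ^ 8)
    (F : Finset ℕ) (hF : ∀ p ∈ F, p.Prime ∧ 4 ^ j < p ∧ p ≤ 4 ^ (j + 1) ∧ o p ∣ f p ∧ 2 ^ (j - B) < o p ∧ o p ≤ 2 ^ (j + B)) :
    (F.card : ℝ) ≤ 3 / 100 * (4 ^ j / j) := by
  have hQ' : ∀ q ∈ Q, q.Prime ∧ 100 ≤ q ∧ q ≤ 4 ^ J2 := by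
    intro q hq
    refine ⟨(hQ q hq).1, ?_, (hQ q hq).2.2⟩
    have : 4 ^ 9 ≤ 4 ^ J1 := Nat.pow_le_pow_right (by norm_num) hJ1
    have := (hQ q hq).2.1
    omega
  set E := ∑ q ∈ Q, (1 / q : ℝ) with hEdef
  set W := ⌈1.25 * E⌉₊ with hWdef
  have hW : 1.25 * E ≤ W := Nat.le_ceil _
  have hW2 : (W : ℝ) < 1.25 * E + 1 := Nat.ceil_lt_add_one (by linarith)
  have hW1 : 1 ≤ W := by
    have : (1:ℝ) ≤ W := by linarith
    exact_mod_cast this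
  have b2 := bad_two f hf j J1 J2 (by omega) hJ1 hJ2 Q hQ
  have b3 := bad_three f hf j J2 (by omega) hJ2 Q hQ' hE0 W hW
  set F2 := (Finset.Ioc 0 (4 ^ (j + 1))).filter (fun p => p.Prime ∧ ∃ q ∈ Q, q ^ 2 ∣ f p) with hF2
  set F3 := (Finset.Ioc 0 (4 ^ (j + 1))).filter (fun p => p.Prime ∧ W ≤ omQ Q (f p)) with hF3
  set F4 := (F \ F2) \ F3 with hF4
  have b4 := bad_four f hf j J2 B hj hJ2 hB Q hQ' ((W - 1) / 2) (by
      have h1 : (((W - 1) / 2 : ℕ) : ℝ) ≤ ((W - 1 : ℕ) : ℝ) / 2 := Nat.cast_div_le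
      rw [Nat.cast_sub hW1] at h1
      push_cast at h1
      linarith) hE F4 (by
      intro p hp
      simp only [hF4, Finset.mem_sdiff] at hp
      obtain ⟨⟨hpF, hp2⟩, hp3⟩ := hp
      obtain ⟨hpp, hlo, hhi, hdv, ho1, ho2⟩ := hF p hpF
      refine ⟨hpp, hhi, ?_⟩
      obtain ⟨e, he⟩ := hdv
      obtain ⟨s1, s2⟩ := shift_bounds f hf j p hpp hlo hhi
      have hn2 : ¬ ∃ q ∈ Q, q ^ 2 ∣ f p := by
        intro h
        exact hp2 (by rw [hF2, Finset.mem_filter, Finset.mem_Ioc]; exact ⟨⟨hpp.pos, hhi⟩, hpp, h⟩)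
      have hn3 : omQ Q (f p) < W := by
        by_contra h
        exact hp3 (by rw [hF3, Finset.mem_filter, Finset.mem_Ioc]; exact ⟨⟨hpp.pos, hhi⟩, hpp, not_lt.1 h⟩)
      have hadd := omQ_add_le Q (o p) e (by rw [← he]; exact hn2)
      rw [← he] at hadd
      have opos : 0 < o p := lt_of_le_of_lt (Nat.zero_le _) ho1
      have e1 : 2 ^ (j - B - 1) < e := by
        by_contra h
        push Not at h
        have h3 : f p ≤ 2 ^ (j + B) * 2 ^ (j - B - 1) := by rw [he]; exact Nat.mul_le_mul ho2 h
        rw [← pow_add] at h3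
        have h4 : 2 ^ (j + B + (j - B - 1)) < 2 ^ (2 * j) := Nat.pow_lt_pow_right (by norm_num) (by omega)
        have h5 : (2:ℕ) ^ (2 * j) = 4 ^ j := by rw [pow_mul]; norm_num
        omega
      have e2 : e ≤ 2 ^ (j + B + 2) := by
        by_contra h
        push Not at h
        have h3 : 2 ^ (j - B) * 2 ^ (j + B + 2) < f p := by
          rw [he]; exact Nat.mul_lt_mul_of_lt_of_lt ho1 h
        rw [← pow_add] at h3
        have h5 : (2:ℕ) ^ (j - B + (j + B + 2)) = 4 ^ (j + 1) := by
          rw [show j - B + (j + B + 2) = 2 * (j + 1) by omega, pow_mul]; norm_num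
        omega
      by_cases hc : omQ Q (o p) ≤ (W - 1) / 2
      · refine ⟨o p, lt_of_le_of_lt (Nat.pow_le_pow_right (by norm_num) (by omega)) ho1,
          ho2.trans (Nat.pow_le_pow_right (by norm_num) (by omega)), hc, ⟨e, he⟩⟩
      · exact ⟨e, e1, e2, by omega, ⟨o p, by rw [he, mul_comm]⟩⟩)
  have hsub : F ⊆ (F2 ∪ F3) ∪ F4 := by
    intro p hp
    simp only [hF4, Finset.mem_union, Finset.mem_sdiff]
    tauto
  have hcard : F.card ≤ (F2.card + F3.card) + F4.card :=
    (Finset.card_le_card hsub).trans ((Finset.card_union_le _ _).trans (Nat.add_le_add_right (Finset.card_union_le _ _) _))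
  have hcard' : (F.card : ℝ) ≤ (F2.card + F3.card) + F4.card := by exact_mod_cast hcard
  linarith

theorem good_count (A : Matrix (Fin 2) (Fin 2) ℤ) (p0 C : ℕ)
    (hp0 : ∀ p, p.Prime → p0 < p → matOrd A p ∣ p - 1 ∨ matOrd A p ∣ p + 1)
    (hC : ∀ (z : ℕ) (P : Finset ℕ), (∀ p ∈ P, p.Prime ∧ matOrd A p ≤ z) → P.card ≤ C * z ^ 2)
    (j J1 J2 B : ℕ) (hj : 100 ≤ j) (hjp : p0 ≤ 4 ^ j) (hJ1 : 9 ≤ J1)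
    (hJ2 : 2000 * J2 ≤ j) (hB : 5 * B + 20 ≤ j) (hBC : 40 * C * j ≤ 4 ^ B)
    (Q : Finset ℕ) (hQ : ∀ q ∈ Q, q.Prime ∧ 4 ^ J1 < q ∧ q ≤ 4 ^ J2)
    (hE0 : 2000 ≤ ∑ q ∈ Q, (1 / q : ℝ))
    (hE : (2 * B + 4) * Real.exp (-(0.05 * ∑ q ∈ Q, (1 / q : ℝ))) ≤ 1 / 10 ^ 8) :
    (1 / 4 : ℝ) * 4 ^ j / j ≤
      (((Finset.Ioc (4 ^ j) (4 ^ (j + 1))).filter (fun p => p.Prime ∧ 2 ^ (j + B) < matOrd A p)).card : ℝ) := by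
  set I := (Finset.Ioc (4 ^ j) (4 ^ (j + 1))).filter Nat.Prime with hI
  set G := (Finset.Ioc (4 ^ j) (4 ^ (j + 1))).filter (fun p => p.Prime ∧ 2 ^ (j + B) < matOrd A p) with hG
  set T := I.filter (fun p => matOrd A p ≤ 2 ^ (j - B)) with hT
  set M1 := I.filter (fun p => matOrd A p ∣ p - 1 ∧ 2 ^ (j - B) < matOrd A p ∧ matOrd A p ≤ 2 ^ (j + B)) with hM1
  set M2 := I.filter (fun p => matOrd A p ∣ p + 1 ∧ 2 ^ (j - B) < matOrd A p ∧ matOrd A p ≤ 2 ^ (j + B)) with hM2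
  have hpb := primes_block j (by omega)
  have b1 := bad_shift (fun p => p - 1) (Or.inl rfl) (matOrd A) j J1 J2 B hj hJ1 hJ2 hB Q hQ hE0 hE M1 (by
    intro p hp
    simp only [hM1, hI, Finset.mem_filter, Finset.mem_Ioc] at hp
    exact ⟨hp.1.2, hp.1.1.1, hp.1.1.2, hp.2⟩)
  have b2 := bad_shift (fun p => p + 1) (Or.inr rfl) (matOrd A) j J1 J2 B hj hJ1 hJ2 hB Q hQ hE0 hE M2 (by
    intro p hp
    simp only [hM2, hI, Finset.mem_filter, Finset.mem_Ioc] at hp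
    exact ⟨hp.1.2, hp.1.1.1, hp.1.1.2, hp.2⟩)
  have hjR : (100:ℝ) ≤ j := by exact_mod_cast hj
  have bT : (T.card : ℝ) ≤ 1 / 40 * (4 ^ j / j) := by
    have h := hC (2 ^ (j - B)) T (by
      intro p hp
      simp only [hT, hI, Finset.mem_filter] at hp
      exact ⟨hp.1.2, hp.2⟩)
    have h1 : 40 * T.card * j ≤ 4 ^ j := by
      calc 40 * T.card * j ≤ 40 * (C * (2 ^ (j - B)) ^ 2) * j := by gcongr
        _ = (40 * C * j) * 4 ^ (j - B) := by
          rw [← pow_mul, mul_comm (j - B) 2, pow_mul]; norm_num; ring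
        _ ≤ 4 ^ B * 4 ^ (j - B) := by gcongr
        _ = 4 ^ j := by rw [← pow_add]; congr 1; omega
    have h2 : (40:ℝ) * T.card * j ≤ 4 ^ j := by exact_mod_cast h1
    rw [← mul_div_assoc, le_div_iff₀ (by linarith)]
    linarith
  have hsub : I ⊆ ((T ∪ M1) ∪ M2) ∪ G := by
    intro p hp
    have hp' := hp
    simp only [hI, Finset.mem_filter, Finset.mem_Ioc] at hp'
    simp only [hT, hM1, hM2, hG, Finset.mem_union, Finset.mem_filter, Finset.mem_Ioc]
    rcases le_or_gt (matOrd A p) (2 ^ (j - B)) with h | h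
    · exact Or.inl (Or.inl (Or.inl ⟨hp, h⟩))
    · rcases le_or_gt (matOrd A p) (2 ^ (j + B)) with h' | h'
      · rcases hp0 p hp'.2 (lt_of_le_of_lt hjp hp'.1.1) with hd | hd
        · exact Or.inl (Or.inl (Or.inr ⟨hp, hd, h, h'⟩))
        · exact Or.inl (Or.inr ⟨hp, hd, h, h'⟩)
      · exact Or.inr ⟨hp'.1, hp'.2, h'⟩
  have hcard : (I.card : ℝ) ≤ ((T.card + M1.card) + M2.card) + G.card := by
    have h1 := Finset.card_le_card hsub
    have h2 := Finset.card_union_le ((T ∪ M1) ∪ M2) G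
    have h3 := Finset.card_union_le (T ∪ M1) M2
    have h4 := Finset.card_union_le T M1
    exact_mod_cast (by omega : I.card ≤ ((T.card + M1.card) + M2.card) + G.card)
  have hX : (0:ℝ) ≤ 4 ^ j / j := by positivity
  have e1 : (1 / 2:ℝ) * 4 ^ j / j = 1 / 2 * (4 ^ j / j) := by ring
  have e2 : (1 / 4:ℝ) * 4 ^ j / j = 1 / 4 * (4 ^ j / j) := by ring
  rw [e1] at hpb
  rw [e2]
  linarith

end LargeOrd


namespace LargeOrd

set_option maxHeartbeats 1000000 in
theorem many_good (A : Matrix (Fin 2) (Fin 2) ℤ) (hA : A.det = 1) (htr : 2 < |A.trace|) :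
    ∃ j0 : ℕ, ∀ j ≥ j0, (1 / 4 : ℝ) * 4 ^ j / j ≤
      (((Finset.Ioc (4 ^ j) (4 ^ (j + 1))).filter
        (fun p => p.Prime ∧ 2 ^ (j + 1) * Real.exp ((j:ℝ) ^ (1 / 1000 : ℝ)) < (matOrd A p : ℝ))).card : ℝ) := by
  obtain ⟨p0, hp0⟩ := matOrd_dvd_pm A hA htr
  obtain ⟨C, hC⟩ := small_order_count A hA htr
  set K : ℝ := Real.log 4000 / 8 with hK
  have hy : Filter.Tendsto (fun j : ℕ => ((j:ℝ)) ^ (1 / 1000 : ℝ)) Filter.atTop Filter.atTop :=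
    (tendsto_rpow_atTop (by norm_num)).comp tendsto_natCast_atTop_atTop
  have e1 : ∀ᶠ y : ℝ in Filter.atTop, y ^ 1000 * Real.exp (-y) < 1 / (40 * C + 1) := by
    have := Real.tendsto_pow_mul_exp_neg_atTop_nhds_zero 1000
    exact this.eventually (gt_mem_nhds (by positivity))
  have e2 : ∀ᶠ y : ℝ in Filter.atTop, 16 * (2000 + K) / 1000 ≤ Real.log y :=
    Real.tendsto_log_atTop.eventually_ge_atTop _
  have ev : ∀ᶠ j : ℕ in Filter.atTop, 
      (((j:ℝ)) ^ (1 / 1000 : ℝ)) ^ 1000 * Real.exp (-((j:ℝ)) ^ (1 / 1000 : ℝ)) < 1 / (40 * C + 1) ∧ 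
      16 * (2000 + K) / 1000 ≤ Real.log (((j:ℝ)) ^ (1 / 1000 : ℝ)) ∧
      30 + 12 * 10 ^ 8 * Real.exp (0.05 * K) ≤ ((j:ℝ)) ^ (1 / 1000 : ℝ) ∧ 5000 + p0 ≤ j :=
    (hy.eventually e1).and ((hy.eventually e2).and ((hy.eventually_ge_atTop _).and (Filter.eventually_ge_atTop _)))
  obtain ⟨j0, hj0⟩ := Filter.eventually_atTop.1 ev
  refine ⟨j0, fun j hj => ?_⟩
  obtain ⟨h1, h2, h3, h4⟩ := hj0 j hj
  set y := ((j:ℝ)) ^ (1 / 1000 : ℝ) with hydef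
  have hjy : (j:ℝ) = y ^ 1000 := by
    rw [hydef, ← Real.rpow_natCast, ← Real.rpow_mul (by positivity)]; norm_num
  have hey : (0:ℝ) < 12 * 10 ^ 8 * Real.exp (0.05 * K) := by positivity
  have hy30 : 30 ≤ y := by linarith
  have hy0 : 0 < y := by linarith
  have hjR : (5000:ℝ) ≤ j := by exact_mod_cast (by omega : 5000 ≤ j)
  set B := ⌈2 * y⌉₊ + 1 with hB
  have hBlo : 2 * y + 1 ≤ B := by rw [hB]; push_cast; linarith [Nat.le_ceil (2 * y)]
  have hBhi : (B:ℝ) ≤ 2 * y + 2 := by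
    rw [hB]; push_cast; linarith [Nat.ceil_lt_add_one (by positivity : 0 ≤ 2 * y)]
  set J1 := Nat.sqrt j with hJ1
  set J2 := j / 2000 with hJ2
  have hJ1lo : 9 ≤ J1 := by rw [hJ1, Nat.le_sqrt]; omega
  have hJ1hi : (J1:ℝ) ^ 2 ≤ j := by
    have := Nat.sqrt_le' j
    exact_mod_cast this
  have hJ1pos : (0:ℝ) < J1 := by exact_mod_cast (by omega : 0 < J1)
  have hJ2hi : 2000 * J2 ≤ j := by omega
  have hJ2lo : (j:ℝ) / 4000 ≤ J2 := by
    rw [div_le_iff₀ (by norm_num)]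
    exact_mod_cast (by omega : j ≤ J2 * 4000)
  have hJ12 : J1 ≤ J2 := by
    have : y ^ 2 * y ^ 998 = j := by rw [hjy]; ring
    have h998 : (4000:ℝ) ^ 2 ≤ y ^ 998 := by
      calc (4000:ℝ) ^ 2 ≤ 30 ^ 10 := by norm_num
        _ ≤ 30 ^ 998 := pow_le_pow_right₀ (by norm_num) (by norm_num)
        _ ≤ y ^ 998 := by gcongr
    have hj16 : (4000:ℝ) ^ 2 ≤ j := by nlinarith
    have : (J1:ℝ) ≤ J2 := by
      refine le_trans ?_ hJ2lo
      rw [le_div_iff₀ (by norm_num)]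
      by_contra hcon
      push Not at hcon
      have : (J1:ℝ) * 4000 * (J1 * 4000) > j * j := by nlinarith
      nlinarith
    exact_mod_cast this
  set Q := (Finset.Ioc (4 ^ J1) (4 ^ J2)).filter Nat.Prime with hQ
  have hElow := recip_lower Nat.Prime (1 / 2) (by norm_num) 8 (fun i hi => primes_block i hi) J1 J2 (by omega) (by omega) hJ12
  rw [← hQ] at hElow
  set E := ∑ q ∈ Q, (1 / q : ℝ) with hE
  have hlogj : Real.log j = 1000 * Real.log y := by rw [hjy, Real.log_pow]; norm_num
  have hE1 : 1000 * Real.log y / 16 - K ≤ E := by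
    refine le_trans ?_ hElow
    have hs : Real.log J1 ≤ Real.log j / 2 := by
      have := Real.log_le_log (by positivity) hJ1hi
      rw [Real.log_pow] at this
      push_cast at this; linarith
    have hl : Real.log j - Real.log 4000 ≤ Real.log J2 := by
      rw [← Real.log_div (by linarith) (by norm_num)]
      exact Real.log_le_log (by positivity) hJ2lo
    rw [Real.log_div (ne_of_gt (lt_of_lt_of_le (by positivity) hJ2lo)) hJ1pos.ne', hK]
    rw [← hlogj]
    linarith
  have hE2000 : 2000 ≤ E := by linarith
  have hEe : (2 * B + 4) * Real.exp (-(0.05 * E)) ≤ 1 / 10 ^ 8 := by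
    have hly : 0 ≤ Real.log y := Real.log_nonneg (by linarith)
    have hexp : Real.exp (-(0.05 * E)) ≤ Real.exp (0.05 * K) * (y ^ 3)⁻¹ := by
      have : (y ^ 3)⁻¹ = Real.exp (-(3 * Real.log y)) := by
        rw [Real.exp_neg]
        congr 1
        rw [show (3:ℝ) * Real.log y = Real.log (y ^ 3) by rw [Real.log_pow]; norm_num, Real.exp_log (by positivity)]
      rw [this, ← Real.exp_add]
      apply Real.exp_le_exp.2
      linarith
    have hb : (2 * (B:ℝ) + 4) ≤ 12 * y := by linarith
    calc (2 * B + 4) * Real.exp (-(0.05 * E)) ≤ (12 * y) * (Real.exp (0.05 * K) * (y ^ 3)⁻¹) := by gcongr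
      _ = 12 * Real.exp (0.05 * K) / y ^ 2 := by field_simp
      _ ≤ 1 / 10 ^ 8 := by
        rw [div_le_div_iff₀ (by positivity) (by positivity)]
        nlinarith
  have hBj : 5 * B + 20 ≤ j := by
    have : (5:ℝ) * B + 20 ≤ j := by
      have : y * y ≤ y ^ 1000 := by
        rw [← sq]; exact pow_le_pow_right₀ (by linarith) (by norm_num)
      nlinarith
    exact_mod_cast this
  have h4B : Real.exp y * 2 ≤ 2 ^ B := by
    have : (2:ℝ) ^ B = (2:ℝ) ^ (B:ℝ) := by rw [Real.rpow_natCast]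
    rw [this, Real.rpow_def_of_pos (by norm_num)]
    calc Real.exp y * 2 = Real.exp (y + Real.log 2) := by rw [Real.exp_add, Real.exp_log (by norm_num)]
      _ ≤ _ := by
        apply Real.exp_le_exp.2
        have := Real.log_two_gt_d9
        nlinarith
  have hBC : 40 * C * j ≤ 4 ^ B := by
    have h6 : y ^ 1000 * (40 * C + 1) ≤ Real.exp y := by
      rw [Real.exp_neg, ← div_eq_mul_inv, div_lt_div_iff₀ (by positivity) (by positivity)] at h1
      linarith
    have h7 : (40 : ℝ) * C * j ≤ 4 ^ B := by
      calc (40 : ℝ) * C * j = y ^ 1000 * (40 * C) := by rw [hjy]; ring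
        _ ≤ y ^ 1000 * (40 * C + 1) := by gcongr; linarith
        _ ≤ Real.exp y := h6
        _ ≤ Real.exp y * 2 := by linarith [Real.exp_pos y]
        _ ≤ 2 ^ B := h4B
        _ ≤ 4 ^ B := by gcongr; norm_num
    exact_mod_cast h7
  have hjp : p0 ≤ 4 ^ j := by
    have : j < 4 ^ j := Nat.lt_pow_self (by norm_num)
    omega
  have hmain := good_count A p0 C hp0 hC j J1 J2 B (by omega) hjp hJ1lo hJ2hi hBj hBC Q (by
    intro q hq
    simp only [hQ, Finset.mem_filter, Finset.mem_Ioc] at hq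
    exact ⟨hq.2, hq.1⟩) hE2000 hEe
  refine hmain.trans ?_
  have hle : ((Finset.Ioc (4 ^ j) (4 ^ (j + 1))).filter (fun p => p.Prime ∧ 2 ^ (j + B) < matOrd A p)) ⊆
      ((Finset.Ioc (4 ^ j) (4 ^ (j + 1))).filter
        (fun p => p.Prime ∧ 2 ^ (j + 1) * Real.exp y < (matOrd A p : ℝ))) := by
    intro p hp
    simp only [Finset.mem_filter] at hp ⊢
    refine ⟨hp.1, hp.2.1, ?_⟩
    have h8 : ((2:ℝ)) ^ (j + B) < matOrd A p := by exact_mod_cast hp.2.2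
    refine lt_of_le_of_lt ?_ h8
    calc (2:ℝ) ^ (j + 1) * Real.exp y = 2 ^ j * (Real.exp y * 2) := by ring
      _ ≤ 2 ^ j * 2 ^ B := by gcongr
      _ = _ := (pow_add _ _ _).symm
  exact_mod_cast Finset.card_le_card hle

end LargeOrd


namespace LargeOrd

/-! ### Part 7: exceptional integers -/

theorem cover {ι : Type*} (x : ℕ) (I : Finset ι) (d : ι → ℕ) (F : Finset ℕ)
    (hF : ∀ N ∈ F, 0 < N ∧ N ≤ x ∧ ∃ i ∈ I, d i ∣ N) :
    (F.card : ℝ) ≤ ∑ i ∈ I, (x:ℝ) / d i := by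
  classical
  have hsub : F ⊆ I.biUnion (fun i => (Finset.Ioc 0 x).filter (fun N => d i ∣ N)) := by
    intro N hN
    obtain ⟨h1, h2, i, hi, h3⟩ := hF N hN
    simp only [Finset.mem_biUnion, Finset.mem_filter, Finset.mem_Ioc]
    exact ⟨i, hi, ⟨h1, h2⟩, h3⟩
  have h1 : (F.card : ℝ) ≤ ∑ i ∈ I, (((Finset.Ioc 0 x).filter (fun N => d i ∣ N)).card : ℝ) := by
    exact_mod_cast (Finset.card_le_card hsub).trans Finset.card_biUnion_le
  refine h1.trans (Finset.sum_le_sum fun i _ => ?_)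
  rw [Nat.Ioc_filter_dvd_card_eq_div]
  exact Nat.cast_div_le

theorem exc_square (x M : ℕ) (hM : 1 ≤ M) (F : Finset ℕ)
    (hF : ∀ N ∈ F, 0 < N ∧ N ≤ x ∧ ∃ b, M < b ∧ b ^ 2 ∣ N) : (F.card : ℝ) ≤ x / M := by
  have h := cover x (Finset.Ioc M x) (fun b => b ^ 2) F (by
    intro N hN
    obtain ⟨h1, h2, b, h3, h4⟩ := hF N hN
    refine ⟨h1, h2, b, ?_, h4⟩
    rw [Finset.mem_Ioc]
    refine ⟨h3, ?_⟩
    have := Nat.le_of_dvd h1 h4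
    nlinarith)
  refine h.trans ?_
  have h2 := tail_inv_sq M x hM
  calc ∑ i ∈ Finset.Ioc M x, (x:ℝ) / ((i ^ 2 : ℕ) : ℝ) = x * ∑ i ∈ Finset.Ioc M x, 1 / (i:ℝ) ^ 2 := by
        rw [Finset.mul_sum]; refine Finset.sum_congr rfl fun i _ => ?_
        push_cast; ring
    _ ≤ x * (1 / (M:ℝ)) := by gcongr
    _ = _ := by ring

theorem harm_log_le (x : ℕ) : ∑ d ∈ Finset.Icc 1 x, 1 / (d:ℝ) ≤ 1 + Real.log x := by
  have h := harmonic_le_one_add_log x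
  rw [harmonic_eq_sum_Icc] at h
  push_cast at h
  simpa [one_div] using h

theorem exc_div (x T : ℕ) (hT : 1 ≤ T) (F : Finset ℕ)
    (hF : ∀ N ∈ F, 0 < N ∧ N ≤ x ∧ T ≤ N.divisors.card) : (F.card : ℝ) ≤ x * (1 + Real.log x) / T := by
  rw [le_div_iff₀ (by positivity)]
  have h1 : F.card * T ≤ ∑ N ∈ Finset.Ioc 0 x, N.divisors.card := by
    calc F.card * T = ∑ N ∈ F, T := by rw [Finset.sum_const, smul_eq_mul]
      _ ≤ ∑ N ∈ F, N.divisors.card := Finset.sum_le_sum fun N hN => (hF N hN).2.2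
      _ ≤ _ := Finset.sum_le_sum_of_subset (fun N hN => Finset.mem_Ioc.2 ⟨(hF N hN).1, (hF N hN).2.1⟩)
  have h2 : ∑ N ∈ Finset.Ioc 0 x, N.divisors.card =
      ∑ d ∈ Finset.Icc 1 x, x / d := by
    have : ∀ N ∈ Finset.Ioc 0 x, N.divisors.card = ∑ d ∈ Finset.Icc 1 x, if d ∣ N then 1 else 0 := by
      intro N hN
      rw [Finset.mem_Ioc] at hN
      rw [Finset.sum_boole]
      simp only [Nat.cast_id]
      congr 1
      ext d
      simp only [Nat.mem_divisors, Finset.mem_filter, Finset.mem_Icc]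
      constructor
      · rintro ⟨h1, h2⟩
        exact ⟨⟨Nat.pos_of_dvd_of_pos h1 hN.1, (Nat.le_of_dvd hN.1 h1).trans hN.2⟩, h1⟩
      · rintro ⟨_, h⟩
        exact ⟨h, by omega⟩
    rw [Finset.sum_congr rfl this, Finset.sum_comm]
    refine Finset.sum_congr rfl fun d _ => ?_
    rw [Finset.sum_boole, Nat.cast_id, Nat.Ioc_filter_dvd_card_eq_div]
  rw [h2] at h1
  calc (F.card : ℝ) * T ≤ ∑ d ∈ Finset.Icc 1 x, ((x / d : ℕ) : ℝ) := by exact_mod_cast h1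
    _ ≤ ∑ d ∈ Finset.Icc 1 x, (x:ℝ) * (1 / (d:ℝ)) := by
      refine Finset.sum_le_sum fun d _ => ?_
      rw [mul_one_div]; exact Nat.cast_div_le
    _ ≤ _ := by rw [← Finset.mul_sum]; have := harm_log_le x; gcongr

theorem exc_small (o : ℕ → ℕ) (C : ℕ)
    (hC : ∀ (z : ℕ) (P : Finset ℕ), (∀ p ∈ P, p.Prime ∧ o p ≤ z) → P.card ≤ C * z ^ 2)
    (x K l : ℕ) (hK : 1 ≤ K) (hl : x < 4 ^ (l + 1)) (F : Finset ℕ)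
    (hF : ∀ N ∈ F, 0 < N ∧ N ≤ x ∧ ∃ p, p.Prime ∧ p ∣ N ∧ K * o p ^ 2 ≤ p) :
    (F.card : ℝ) ≤ x * ((l + 1) * (4 * C / K)) := by
  set Bd := (Finset.Icc 1 x).filter (fun p => p.Prime ∧ K * o p ^ 2 ≤ p) with hBd
  have h := cover x Bd (fun p => p) F (by
    intro N hN
    obtain ⟨h1, h2, p, h3, h4, h5⟩ := hF N hN
    refine ⟨h1, h2, p, ?_, h4⟩
    rw [hBd, Finset.mem_filter, Finset.mem_Icc]
    exact ⟨⟨h3.one_le, (Nat.le_of_dvd h1 h4).trans h2⟩, h3, h5⟩)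
  refine h.trans ?_
  have hmap : ∀ p ∈ Bd, Nat.log 4 p ∈ Finset.range (l + 1) := by
    intro p hp
    rw [hBd, Finset.mem_filter, Finset.mem_Icc] at hp
    rw [Finset.mem_range]
    exact Nat.log_lt_of_lt_pow (by omega) (by omega)
  rw [← Finset.sum_fiberwise_of_maps_to hmap]
  have hone : ∀ j ∈ Finset.range (l + 1), ∑ p ∈ Bd.filter (fun p => Nat.log 4 p = j), (x:ℝ) / (p:ℝ) ≤ x * (4 * C / K) := by
    intro j _
    set D := Bd.filter (fun p => Nat.log 4 p = j) with hD
    have hmem : ∀ p ∈ D, p.Prime ∧ K * o p ^ 2 ≤ p ∧ 4 ^ j ≤ p ∧ p < 4 ^ (j + 1) := by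
      intro p hp
      rw [hD, Finset.mem_filter, hBd, Finset.mem_filter, Finset.mem_Icc] at hp
      obtain ⟨⟨⟨h1, _⟩, h2, h3⟩, h4⟩ := hp
      refine ⟨h2, h3, ?_, ?_⟩
      · rw [← h4]; exact Nat.pow_log_le_self 4 (by omega)
      · rw [← h4]; exact Nat.lt_pow_succ_log_self (by norm_num) p
    have hc := hC (Nat.sqrt (4 ^ (j + 1) / K)) D (by
      intro p hp
      obtain ⟨h1, h2, h3, h4⟩ := hmem p hp
      refine ⟨h1, ?_⟩
      rw [Nat.le_sqrt', Nat.le_div_iff_mul_le hK]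
      rw [mul_comm] at h2
      omega)
    have hc2 : (D.card : ℝ) ≤ C * (4 ^ (j + 1) / K) := by
      have h5 : D.card ≤ C * (4 ^ (j + 1) / K) := hc.trans (Nat.mul_le_mul_left _ (Nat.sqrt_le' _))
      have h6 : (D.card : ℝ) ≤ C * ((4 ^ (j + 1) / K : ℕ) : ℝ) := by exact_mod_cast h5
      refine h6.trans ?_
      have : ((4 ^ (j + 1) / K : ℕ) : ℝ) ≤ ((4 ^ (j + 1) : ℕ) : ℝ) / K := Nat.cast_div_le
      push_cast at this
      gcongr
    calc ∑ p ∈ D, (x:ℝ) / (p:ℝ) ≤ ∑ p ∈ D, (x:ℝ) / 4 ^ j := by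
          refine Finset.sum_le_sum fun p hp => ?_
          have : ((4:ℝ)) ^ j ≤ p := by exact_mod_cast (hmem p hp).2.2.1
          gcongr
      _ = D.card * (x / 4 ^ j) := by rw [Finset.sum_const, nsmul_eq_mul]
      _ ≤ (C * (4 ^ (j + 1) / K)) * (x / 4 ^ j) := by gcongr
      _ = _ := by
        have : (0:ℝ) < K := by exact_mod_cast hK
        field_simp; ring
  calc _ ≤ ∑ j ∈ Finset.range (l + 1), (x:ℝ) * (4 * C / K) := Finset.sum_le_sum hone
    _ = _ := by rw [Finset.sum_const, nsmul_eq_mul, Finset.card_range]; push_cast; ring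

theorem sum_pm (x m : ℕ) (hm : 3 ≤ m) :
    ∑ p ∈ (Finset.Icc 2 x).filter (fun p => m ∣ p - 1 ∨ m ∣ p + 1), 1 / (p:ℝ) ≤ 3 * (1 + Real.log x) / m := by
  have hm0 : (0:ℝ) < m := by exact_mod_cast (by omega : 0 < m)
  set I1 := (Finset.Icc 1 x).image (fun k => k * m + 1)
  set I2 := (Finset.Icc 1 x).image (fun k => k * m - 1)
  have hsub : (Finset.Icc 2 x).filter (fun p => m ∣ p - 1 ∨ m ∣ p + 1) ⊆ I1 ∪ I2 := by
    intro p hp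
    rw [Finset.mem_filter, Finset.mem_Icc] at hp
    obtain ⟨⟨h1, h2⟩, h3⟩ := hp
    rw [Finset.mem_union, Finset.mem_image, Finset.mem_image]
    rcases h3 with ⟨k, hk⟩ | ⟨k, hk⟩
    · left
      have hk0 : 1 ≤ k := by
        rcases Nat.eq_zero_or_pos k with rfl | h
        · omega
        · exact h
      refine ⟨k, Finset.mem_Icc.2 ⟨hk0, by nlinarith [Nat.sub_le p 1]⟩, ?_⟩
      rw [mul_comm, ← hk]; omega
    · right
      have hk0 : 1 ≤ k := by
        rcases Nat.eq_zero_or_pos k with rfl | h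
        · omega
        · exact h
      refine ⟨k, Finset.mem_Icc.2 ⟨hk0, by nlinarith⟩, ?_⟩
      rw [mul_comm, ← hk]; omega
  have s1 : ∑ p ∈ I1, 1 / (p:ℝ) ≤ 1 / (m:ℝ) * (1 + Real.log x) := by
    rw [Finset.sum_image (by
      intro a _ b _ hab
      have : a * m = b * m := by simpa using hab
      exact Nat.eq_of_mul_eq_mul_right (by omega) this)]
    calc _ ≤ ∑ k ∈ Finset.Icc 1 x, 1 / (m:ℝ) * (1 / (k:ℝ)) := by
          refine Finset.sum_le_sum fun k hk => ?_
          have hk0 : (0:ℝ) < k := by exact_mod_cast (Finset.mem_Icc.1 hk).1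
          rw [one_div_mul_one_div]
          push_cast
          apply one_div_le_one_div_of_le (by positivity)
          linarith
      _ ≤ _ := by rw [← Finset.mul_sum]; have := harm_log_le x; gcongr
  have s2 : ∑ p ∈ I2, 1 / (p:ℝ) ≤ 2 / (m:ℝ) * (1 + Real.log x) := by
    rw [Finset.sum_image (by
      intro a ha b hb hab
      have ha1 := (Finset.mem_Icc.1 (Finset.mem_coe.1 ha)).1
      have hb1 := (Finset.mem_Icc.1 (Finset.mem_coe.1 hb)).1
      have h1 : 1 ≤ a * m := by nlinarith
      have h2 : 1 ≤ b * m := by nlinarith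
      have h3 : a * m - 1 = b * m - 1 := hab
      have : a * m = b * m := by omega
      exact Nat.eq_of_mul_eq_mul_right (by omega) this)]
    calc _ ≤ ∑ k ∈ Finset.Icc 1 x, 2 / (m:ℝ) * (1 / (k:ℝ)) := by
          refine Finset.sum_le_sum fun k hk => ?_
          have hk1 := (Finset.mem_Icc.1 hk).1
          have hk1R : (1:ℝ) ≤ k := by exact_mod_cast hk1
          have hmR : (3:ℝ) ≤ m := by exact_mod_cast hm
          rw [Nat.cast_sub (by nlinarith), div_mul_div_comm, mul_one]
          push_cast
          rw [div_le_div_iff₀ (by nlinarith) (by positivity)]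
          nlinarith
      _ ≤ _ := by rw [← Finset.mul_sum]; have := harm_log_le x; gcongr
  have hnn : ∀ (s : Finset ℕ), 0 ≤ ∑ p ∈ s, 1 / (p:ℝ) := fun s => Finset.sum_nonneg (fun _ _ => by positivity)
  calc _ ≤ ∑ p ∈ I1 ∪ I2, 1 / (p:ℝ) := Finset.sum_le_sum_of_subset_of_nonneg hsub (fun _ _ _ => by positivity)
    _ ≤ ∑ p ∈ I1, 1 / (p:ℝ) + ∑ p ∈ I2, 1 / (p:ℝ) := by
      rw [← Finset.sum_union_inter]
      linarith [hnn (I1 ∩ I2)]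
    _ ≤ _ := by
      have : 3 * (1 + Real.log x) / m = 1 / (m:ℝ) * (1 + Real.log x) + 2 / (m:ℝ) * (1 + Real.log x) := by ring
      linarith

theorem exc_gcd (o : ℕ → ℕ) (p0 : ℕ) (hp0 : ∀ p, p.Prime → p0 < p → o p ∣ p - 1 ∨ o p ∣ p + 1)
    (x M : ℕ) (hx : 1 ≤ x) (hM : 2 ≤ M) (F : Finset ℕ)
    (hF : ∀ N ∈ F, 0 < N ∧ N ≤ x ∧ ∃ p p', p.Prime ∧ p'.Prime ∧ p ≠ p' ∧ p0 < p ∧ p0 < p' ∧ p ∣ N ∧ p' ∣ N ∧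
      M < Nat.gcd (o p) (o p')) :
    (F.card : ℝ) ≤ x * (9 * (1 + Real.log x) ^ 2 / M) := by
  set P : ℕ → Finset ℕ := fun m => (Finset.Icc 2 x).filter (fun p => m ∣ p - 1 ∨ m ∣ p + 1) with hP
  have h := cover x ((Finset.Ioc M (x + 1)).sigma (fun m => P m ×ˢ P m)) (fun i => i.2.1 * i.2.2) F (by
    intro N hN
    obtain ⟨h1, h2, p, p', hp, hp', hne, h3, h4, h5, h6, h7⟩ := hF N hN
    have hpx : p ≤ x := (Nat.le_of_dvd h1 h5).trans h2
    have hpx' : p' ≤ x := (Nat.le_of_dvd h1 h6).trans h2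
    have d1 := hp0 p hp h3
    have d2 := hp0 p' hp' h4
    have hop : o p ≤ x + 1 := by
      rcases d1 with h | h
      · have := Nat.le_of_dvd (by have := hp.two_le; omega) h; omega
      · have := Nat.le_of_dvd (by omega) h; omega
    have hop0 : 0 < o p := by
      rcases Nat.eq_zero_or_pos (o p) with h | h
      · rw [h] at d1
        have := hp.two_le
        rcases d1 with h | h
        · have := zero_dvd_iff.1 h; omega
        · have := zero_dvd_iff.1 h; omega
      · exact h
    refine ⟨h1, h2, ⟨Nat.gcd (o p) (o p'), (p, p')⟩, ?_, ?_⟩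
    · rw [Finset.mem_sigma]
      refine ⟨Finset.mem_Ioc.2 ⟨h7, (Nat.gcd_le_left _ hop0).trans hop⟩, ?_⟩
      rw [Finset.mem_product]
      simp only [hP, Finset.mem_filter, Finset.mem_Icc]
      refine ⟨⟨⟨hp.two_le, hpx⟩, ?_⟩, ⟨hp'.two_le, hpx'⟩, ?_⟩
      · exact d1.imp (Nat.gcd_dvd_left _ _).trans (Nat.gcd_dvd_left _ _).trans
      · exact d2.imp (Nat.gcd_dvd_right _ _).trans (Nat.gcd_dvd_right _ _).trans
    · exact Nat.Coprime.mul_dvd_of_dvd_of_dvd ((Nat.coprime_primes hp hp').2 hne) h5 h6)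
  refine h.trans ?_
  rw [Finset.sum_sigma]
  have hlog : 0 ≤ 1 + Real.log x := by
    have := Real.log_nonneg (by exact_mod_cast hx : (1:ℝ) ≤ x); linarith
  calc _ ≤ ∑ m ∈ Finset.Ioc M (x + 1), (x * (9 * (1 + Real.log x) ^ 2)) * (1 / (m:ℝ) ^ 2) := by
        refine Finset.sum_le_sum fun m hm => ?_
        have hm3 : 3 ≤ m := by have := (Finset.mem_Ioc.1 hm).1; omega
        have hs := sum_pm x m hm3
        have e : ∑ i ∈ P m ×ˢ P m, (x:ℝ) / ((i.1 * i.2 : ℕ) : ℝ) = x * ((∑ p ∈ P m, 1 / (p:ℝ)) * (∑ p ∈ P m, 1 / (p:ℝ))) := by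
          rw [Finset.sum_mul_sum, Finset.sum_product, Finset.mul_sum]
          refine Finset.sum_congr rfl fun a _ => ?_
          rw [Finset.mul_sum]
          refine Finset.sum_congr rfl fun b _ => ?_
          push_cast
          rw [one_div_mul_one_div, mul_one_div]
        calc _ = x * ((∑ p ∈ P m, 1 / (p:ℝ)) * (∑ p ∈ P m, 1 / (p:ℝ))) := e
          _ ≤ x * ((3 * (1 + Real.log x) / m) * (3 * (1 + Real.log x) / m)) := by
            have : 0 ≤ ∑ p ∈ P m, 1 / (p:ℝ) := Finset.sum_nonneg (fun _ _ => by positivity)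
            gcongr
          _ = _ := by ring
    _ ≤ (x * (9 * (1 + Real.log x) ^ 2)) * (1 / (M:ℝ)) := by
      rw [← Finset.mul_sum]
      have := tail_inv_sq M (x + 1) (by omega)
      gcongr
    _ = _ := by ring

theorem exc_none (x Y : ℕ) (G : Finset ℕ) (hG : ∀ p ∈ G, p.Prime ∧ p ≤ Y) (hY : Y ≤ x)
    (hE : 0 < ∑ p ∈ G, (1 / p : ℝ)) (F : Finset ℕ)
    (hF : ∀ N ∈ F, 0 < N ∧ N ≤ x ∧ ∀ p ∈ G, ¬ p ∣ N) :
    (F.card : ℝ) ≤ x * (3 / ∑ p ∈ G, (1 / p : ℝ)) := by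
  set E := ∑ p ∈ G, (1 / p : ℝ) with hEdef
  set I := Finset.Ioc 0 x with hI
  have hGY : (G.card : ℝ) ≤ x := by
    have : G ⊆ Finset.Ioc 0 Y := fun p hp => Finset.mem_Ioc.2 ⟨(hG p hp).1.pos, (hG p hp).2⟩
    have h := Finset.card_le_card this
    rw [Nat.card_Ioc] at h
    exact_mod_cast (by omega : G.card ≤ x)
  have cnt : ∀ d : ℕ, ∑ N ∈ I, (if d ∣ N then (1:ℝ) else 0) = ((x / d : ℕ) : ℝ) := by
    intro d
    rw [Finset.sum_boole, hI, Nat.Ioc_filter_dvd_card_eq_div]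
  set w : ℕ → ℝ := fun N => ∑ p ∈ G, (if p ∣ N then (1:ℝ) else 0) with hw
  have hs1 : x * E - G.card ≤ ∑ N ∈ I, w N := by
    rw [hw, Finset.sum_comm, hEdef, Finset.mul_sum]
    simp_rw [cnt]
    have : (G.card : ℝ) = ∑ p ∈ G, (1:ℝ) := by simp
    rw [this, ← Finset.sum_sub_distrib]
    refine Finset.sum_le_sum fun p hp => ?_
    have h := Nat.lt_floor_add_one ((x:ℝ) / p)
    rw [Nat.floor_div_eq_div] at h
    rw [mul_one_div]; linarith
  have hs2 : ∑ N ∈ I, w N ^ 2 ≤ x * E ^ 2 + x * E := by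
    have e1 : ∀ N ∈ I, w N ^ 2 = ∑ p ∈ G, ∑ q ∈ G, (if p ∣ N ∧ q ∣ N then (1:ℝ) else 0) := by
      intro N _
      rw [hw, sq, Finset.sum_mul_sum]
      refine Finset.sum_congr rfl fun p _ => Finset.sum_congr rfl fun q _ => ?_
      by_cases h1 : p ∣ N <;> by_cases h2 : q ∣ N <;> simp [h1, h2]
    rw [Finset.sum_congr rfl e1, Finset.sum_comm]
    have e2 : ∀ p ∈ G, ∑ N ∈ I, ∑ q ∈ G, (if p ∣ N ∧ q ∣ N then (1:ℝ) else 0) ≤ x * (1 / p) * E + x * (1 / p) := by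
      intro p hp
      rw [Finset.sum_comm]
      have e3 : ∀ q ∈ G, ∑ N ∈ I, (if p ∣ N ∧ q ∣ N then (1:ℝ) else 0) ≤ x * (1 / p) * (1 / q) + (if p = q then x * (1 / p : ℝ) else 0) := by
        intro q hq
        by_cases hpq : p = q
        · subst hpq
          simp only [and_self, if_true]
          rw [cnt]
          have : ((x / p : ℕ) : ℝ) ≤ x / p := Nat.cast_div_le
          have h0 : (0:ℝ) ≤ x * (1 / p) * (1 / p) := by positivity
          rw [mul_one_div (x:ℝ) (p:ℝ)] at *
          linarith
        · rw [if_neg hpq, add_zero]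
          have : ∀ N ∈ I, (if p ∣ N ∧ q ∣ N then (1:ℝ) else 0) = if p * q ∣ N then (1:ℝ) else 0 := by
            intro N _
            congr 1
            have hc := (Nat.coprime_primes (hG p hp).1 (hG q hq).1).2 hpq
            apply propext
            exact ⟨fun h => hc.mul_dvd_of_dvd_of_dvd h.1 h.2, fun h => ⟨(dvd_mul_right _ _).trans h, (dvd_mul_left _ _).trans h⟩⟩
          rw [Finset.sum_congr rfl this, cnt]
          have : ((x / (p * q) : ℕ) : ℝ) ≤ x / (p * q : ℕ) := Nat.cast_div_le
          push_cast at this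
          calc _ ≤ _ := this
            _ = _ := by rw [mul_assoc, one_div_mul_one_div, mul_one_div]
      refine (Finset.sum_le_sum e3).trans (le_of_eq ?_)
      rw [Finset.sum_add_distrib, ← Finset.mul_sum, Finset.sum_ite_eq, if_pos hp]
    refine (Finset.sum_le_sum e2).trans (le_of_eq ?_)
    rw [Finset.sum_add_distrib, ← Finset.sum_mul, ← Finset.mul_sum]
    ring
  have hvar : ∑ N ∈ I, (w N - E) ^ 2 ≤ 3 * x * E := by
    have e : ∑ N ∈ I, (w N - E) ^ 2 = ∑ N ∈ I, w N ^ 2 - 2 * E * ∑ N ∈ I, w N + x * E ^ 2 := by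
      have : ∀ N ∈ I, (w N - E) ^ 2 = w N ^ 2 - 2 * E * w N + E ^ 2 := fun N _ => by ring
      rw [Finset.sum_congr rfl this, Finset.sum_add_distrib, Finset.sum_sub_distrib, ← Finset.mul_sum]
      congr 1
      rw [Finset.sum_const, hI, Nat.card_Ioc, nsmul_eq_mul]; simp
    rw [e]
    nlinarith
  have hFb : (F.card : ℝ) * E ^ 2 ≤ 3 * x * E := by
    refine le_trans ?_ hvar
    calc (F.card : ℝ) * E ^ 2 = ∑ N ∈ F, (w N - E) ^ 2 := by
          have : ∀ N ∈ F, (w N - E) ^ 2 = E ^ 2 := by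
            intro N hN
            have : w N = 0 := Finset.sum_eq_zero (fun p hp => if_neg ((hF N hN).2.2 p hp))
            rw [this]; ring
          rw [Finset.sum_congr rfl this, Finset.sum_const, nsmul_eq_mul]
      _ ≤ _ := Finset.sum_le_sum_of_subset_of_nonneg
          (fun N hN => Finset.mem_Ioc.2 ⟨(hF N hN).1, (hF N hN).2.1⟩) (fun _ _ _ => sq_nonneg _)
  rw [← mul_div_assoc, le_div_iff₀ hE]
  nlinarith

end LargeOrd


namespace LargeOrd

theorem gcd_prod_le (a : ℕ) (o : ℕ → ℕ) (M : ℕ) (P : Finset ℕ) (h : ∀ q ∈ P, Nat.gcd a (o q) ≤ M) 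
    (ha : 0 < a) :
    Nat.gcd a (∏ q ∈ P, o q) ≤ M ^ P.card := by
  classical
  induction P using Finset.induction_on with
  | empty => simp
  | insert p P hp ih =>
    rw [Finset.prod_insert hp, Finset.card_insert_of_notMem hp, pow_succ, mul_comm _ M]
    have h1 := Nat.gcd_mul_right_dvd_mul_gcd a (o p) (∏ q ∈ P, o q)
    refine (Nat.le_of_dvd (Nat.mul_pos (Nat.gcd_pos_of_pos_left _ ha) (Nat.gcd_pos_of_pos_left _ ha)) h1).trans ?_
    exact Nat.mul_le_mul (h p (Finset.mem_insert_self _ _)) (ih (fun q hq => h q (Finset.mem_insert_of_mem hq)))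

theorem prod_le_lcm (o : ℕ → ℕ) (M : ℕ) (hM : 1 ≤ M) (P : Finset ℕ) (hpos : ∀ p ∈ P, 0 < o p)
    (h : ∀ p ∈ P, ∀ q ∈ P, p ≠ q → Nat.gcd (o p) (o q) ≤ M) :
    ∏ p ∈ P, o p ≤ P.lcm o * M ^ (P.card ^ 2) := by
  classical
  induction P using Finset.induction_on with
  | empty => simp
  | insert p P hp ih =>
    have ih' := ih (fun q hq => hpos q (Finset.mem_insert_of_mem hq))
      (fun q hq r hr => h q (Finset.mem_insert_of_mem hq) r (Finset.mem_insert_of_mem hr))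
    have hp0 := hpos p (Finset.mem_insert_self _ _)
    rw [Finset.prod_insert hp, Finset.card_insert_of_notMem hp, Finset.lcm_insert]
    have hg : Nat.gcd (o p) (P.lcm o) ≤ M ^ P.card := by
      refine le_trans ?_ (gcd_prod_le (o p) o M P (fun q hq => h p (Finset.mem_insert_self _ _) q
        (Finset.mem_insert_of_mem hq) (by rintro rfl; exact hp hq)) hp0)
      apply Nat.le_of_dvd (Nat.gcd_pos_of_pos_left _ hp0)
      apply Nat.gcd_dvd_gcd_of_dvd_right
      exact Finset.lcm_dvd (fun q hq => Finset.dvd_prod_of_mem o hq)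
    have hgl := Nat.gcd_mul_lcm (o p) (P.lcm o)
    show _ ≤ Nat.lcm (o p) (P.lcm o) * _
    calc o p * ∏ q ∈ P, o q ≤ o p * (P.lcm o * M ^ (P.card ^ 2)) := Nat.mul_le_mul_left _ ih'
      _ = (Nat.gcd (o p) (P.lcm o) * Nat.lcm (o p) (P.lcm o)) * M ^ (P.card ^ 2) := by rw [hgl, mul_assoc]
      _ ≤ (M ^ P.card * Nat.lcm (o p) (P.lcm o)) * M ^ (P.card ^ 2) := by gcongr
      _ = Nat.lcm (o p) (P.lcm o) * M ^ (P.card + P.card ^ 2) := by rw [pow_add]; ring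
      _ ≤ Nat.lcm (o p) (P.lcm o) * M ^ ((P.card + 1) ^ 2) :=
        Nat.mul_le_mul_left _ (Nat.pow_le_pow_right hM (by nlinarith))

theorem det_bound (o : ℕ → ℕ) (N a b p0 K M Ma w Om ps : ℕ) (R : ℝ) (hN : b ^ 2 * a = N) (ha : Squarefree a)
    (hb : b ≤ Ma) (hw : a.primeFactors.card ≤ w) (hK : 1 ≤ K) (hM : 1 ≤ M)
    (hpos : ∀ p ∈ a.primeFactors, p0 < p → 0 < o p)
    (hsmall : ∀ p ∈ a.primeFactors, p0 < p → p ≤ K * o p ^ 2)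
    (hgcd : ∀ p ∈ a.primeFactors, ∀ q ∈ a.primeFactors, p0 < p → p0 < q → p ≠ q → Nat.gcd (o p) (o q) ≤ M)
    (hps : ps ∈ a.primeFactors) (hps0 : p0 < ps) (hR : 0 ≤ R) (hgain : R * ps ≤ (o ps : ℝ) ^ 2)
    (hOm : 0 < Om) (hdvd : ∀ p ∈ a.primeFactors, p0 < p → o p ∣ Om) :
    R * N ≤ (Ma:ℝ) ^ 2 * (((p0 + 1) * K : ℝ)) ^ w * (M:ℝ) ^ (2 * w ^ 2) * (Om:ℝ) ^ 2 := by
  set P := a.primeFactors.filter (fun p => p0 < p) with hP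
  have hmem : ∀ p ∈ P, p ∈ a.primeFactors ∧ p0 < p := fun p hp => by rwa [hP, Finset.mem_filter] at hp
  have hPw : P.card ≤ w := (Finset.card_filter_le _ _).trans hw
  have hpsP : ps ∈ P := by rw [hP, Finset.mem_filter]; exact ⟨hps, hps0⟩
  have hprod : ∏ p ∈ P, o p ≤ Om * M ^ (w ^ 2) := by
    refine (prod_le_lcm o M hM P (fun p hp => hpos p (hmem p hp).1 (hmem p hp).2)
      (fun p hp q hq => hgcd p (hmem p hp).1 q (hmem q hq).1 (hmem p hp).2 (hmem q hq).2)).trans ?_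
    refine Nat.mul_le_mul ?_ (Nat.pow_le_pow_right hM (Nat.pow_le_pow_left hPw 2))
    exact Nat.le_of_dvd hOm (Finset.lcm_dvd (fun p hp => hdvd p (hmem p hp).1 (hmem p hp).2))
  have hprodR : (∏ p ∈ P, (o p : ℝ)) ≤ Om * (M:ℝ) ^ (w ^ 2) := by exact_mod_cast hprod
  have hKR : (1:ℝ) ≤ K := by exact_mod_cast hK
  have hMR : (1:ℝ) ≤ M := by exact_mod_cast hM
  have ha1 : (a:ℝ) ≤ (p0 + 1 : ℝ) ^ w * ∏ p ∈ P, (p:ℝ) := by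
    have e : a = (∏ p ∈ P, p) * ∏ p ∈ a.primeFactors.filter (fun p => ¬ p0 < p), p := by
      rw [hP, Finset.prod_filter_mul_prod_filter_not]
      exact (Nat.prod_primeFactors_of_squarefree ha).symm
    have h2 : ∏ p ∈ a.primeFactors.filter (fun p => ¬ p0 < p), p ≤ (p0 + 1) ^ w := by
      calc _ ≤ ∏ p ∈ a.primeFactors.filter (fun p => ¬ p0 < p), (p0 + 1) :=
            Finset.prod_le_prod' (fun p hp => by rw [Finset.mem_filter] at hp; omega)
        _ = (p0 + 1) ^ (a.primeFactors.filter (fun p => ¬ p0 < p)).card := by rw [Finset.prod_const]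
        _ ≤ _ := Nat.pow_le_pow_right (by omega) ((Finset.card_filter_le _ _).trans hw)
    have h3 : a ≤ (p0 + 1) ^ w * ∏ p ∈ P, p := by
      calc a = _ := e
        _ ≤ (∏ p ∈ P, p) * (p0 + 1) ^ w := Nat.mul_le_mul_left _ h2
        _ = _ := mul_comm _ _
    have h4 := (Nat.cast_le (α := ℝ)).2 h3
    push_cast at h4
    exact h4
  have hgainP : R * ∏ p ∈ P, (p:ℝ) ≤ (K:ℝ) ^ w * (∏ p ∈ P, (o p:ℝ)) ^ 2 := by
    rw [← Finset.mul_prod_erase P _ hpsP, ← Finset.mul_prod_erase P (fun p => (o p:ℝ)) hpsP]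
    have h1 : ∏ p ∈ P.erase ps, (p:ℝ) ≤ (K:ℝ) ^ w * (∏ p ∈ P.erase ps, (o p:ℝ)) ^ 2 := by
      calc ∏ p ∈ P.erase ps, (p:ℝ) ≤ ∏ p ∈ P.erase ps, ((K:ℝ) * (o p:ℝ) ^ 2) := by
            refine Finset.prod_le_prod (fun _ _ => by positivity) (fun p hp => ?_)
            have hp' := hmem p (Finset.mem_of_mem_erase hp)
            exact_mod_cast hsmall p hp'.1 hp'.2
        _ = (K:ℝ) ^ (P.erase ps).card * (∏ p ∈ P.erase ps, (o p:ℝ)) ^ 2 := by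
            rw [Finset.prod_mul_distrib, Finset.prod_const, Finset.prod_pow]
        _ ≤ _ := by
            gcongr
            exact (Finset.card_le_card (Finset.erase_subset _ _)).trans hPw
    calc R * (ps * ∏ p ∈ P.erase ps, (p:ℝ)) = (R * ps) * ∏ p ∈ P.erase ps, (p:ℝ) := by ring
      _ ≤ (o ps : ℝ) ^ 2 * ((K:ℝ) ^ w * (∏ p ∈ P.erase ps, (o p:ℝ)) ^ 2) := by gcongr
      _ = _ := by ring
  have hbR : (b:ℝ) ≤ Ma := by exact_mod_cast hb
  calc R * N = (b:ℝ) ^ 2 * (R * a) := by rw [← hN]; push_cast; ring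
    _ ≤ (Ma:ℝ) ^ 2 * (R * ((p0 + 1 : ℝ) ^ w * ∏ p ∈ P, (p:ℝ))) := by gcongr
    _ = (Ma:ℝ) ^ 2 * (p0 + 1 : ℝ) ^ w * (R * ∏ p ∈ P, (p:ℝ)) := by ring
    _ ≤ (Ma:ℝ) ^ 2 * (p0 + 1 : ℝ) ^ w * ((K:ℝ) ^ w * (Om * (M:ℝ) ^ (w ^ 2)) ^ 2) := by
      have h0 : 0 ≤ ∏ p ∈ P, (o p:ℝ) := Finset.prod_nonneg (fun _ _ => by positivity)
      refine mul_le_mul_of_nonneg_left (hgainP.trans ?_) (by positivity)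
      gcongr
    _ = _ := by rw [mul_pow, mul_pow, ← pow_mul]; ring

theorem two_pow_omega (N : ℕ) (hN : N ≠ 0) : 2 ^ N.primeFactors.card ≤ N.divisors.card := by
  rw [Nat.card_divisors hN, ← Finset.prod_const]
  refine Finset.prod_le_prod' (fun p hp => ?_)
  have := (Nat.prime_of_mem_primeFactors hp).factorization_pos_of_dvd hN (Nat.dvd_of_mem_primeFactors hp)
  omega

/-- the numerical inequality used at the end -/
theorem numeric (p0 : ℕ) : ∃ l0 : ℕ, ∀ l ≥ l0, ∀ x w : ℕ, 1 ≤ x → x < 4 ^ (l + 1) → 2 ^ w ≤ l ^ 2 →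
    (l:ℝ) ^ 2 * ((p0 + 1) * ((l ^ 3 : ℕ):ℝ)) ^ w * ((l ^ 3 : ℕ):ℝ) ^ (2 * w ^ 2) *
      Real.exp (2 * Real.log x ^ (1 / 16000 : ℝ)) ≤
    Real.exp (2 * (Nat.sqrt (l / 2) : ℝ) ^ (1 / 1000 : ℝ)) := by
  have hu : Filter.Tendsto (fun l : ℕ => ((l:ℝ)) ^ (1 / 8000 : ℝ)) Filter.atTop Filter.atTop :=
    (tendsto_rpow_atTop (by norm_num)).comp tendsto_natCast_atTop_atTop
  have e : ∀ n : ℕ, ∀ᶠ u : ℝ in Filter.atTop, Real.log u ^ n ≤ 1 / (200 * 8000 ^ 3) * u := by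
    intro n
    have := (Real.isLittleO_pow_log_id_atTop (n := n)).bound (show (0:ℝ) < 1 / (200 * 8000 ^ 3) by positivity)
    filter_upwards [this, Filter.eventually_ge_atTop (1:ℝ)] with u h1 h2
    rw [Real.norm_eq_abs, Real.norm_eq_abs, id, abs_of_nonneg (by linarith : 0 ≤ u)] at h1
    exact (le_abs_self _).trans h1
  have ev := (hu.eventually (e 3)).and ((hu.eventually_ge_atTop 3).and (Filter.eventually_ge_atTop (100 + p0)))
  obtain ⟨l0, hl0⟩ := Filter.eventually_atTop.1 ev
  refine ⟨l0, fun l hl x w hx hxl hw => ?_⟩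
  obtain ⟨h3, hu3, hl1⟩ := hl0 l hl
  set u := ((l:ℝ)) ^ (1 / 8000 : ℝ) with hudef
  have hlR : (100:ℝ) + p0 ≤ l := by exact_mod_cast hl1
  have hp0R : (0:ℝ) ≤ p0 := by positivity
  have hl0' : (0:ℝ) < l := by linarith
  set lam := Real.log l with hlam
  have hlu : lam = 8000 * Real.log u := by
    rw [hudef, Real.log_rpow hl0']; ring
  have hlam1 : 1 ≤ lam := by
    rw [hlam, Real.le_log_iff_exp_le hl0']
    have := Real.exp_one_lt_d9
    linarith
  have hlexp : (l:ℝ) = Real.exp lam := (Real.exp_log hl0').symm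
  have hw3 : (w:ℝ) ≤ 3 * lam := by
    have h1 : (2:ℝ) ^ w ≤ (l:ℝ) ^ 2 := by exact_mod_cast hw
    have h2 := Real.log_le_log (by positivity) h1
    rw [Real.log_pow, Real.log_pow] at h2
    push_cast at h2
    have := Real.log_two_gt_d9
    have hw0 : (0:ℝ) ≤ w := by positivity
    nlinarith
  -- bound for log x
  have hlogx : Real.log x ^ (1 / 16000 : ℝ) ≤ u := by
    have hx1 : (1:ℝ) ≤ x := by exact_mod_cast hx
    have h1 : Real.log x ≤ (l:ℝ) ^ 2 := by
      have h2 : (x:ℝ) ≤ 4 ^ (l + 1) := by exact_mod_cast hxl.le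
      have h4 := Real.log_le_log (by linarith) h2
      rw [Real.log_pow] at h4
      have h5 : Real.log 4 ≤ 2 := by
        rw [show (4:ℝ) = 2 ^ 2 by norm_num, Real.log_pow]
        have := Real.log_two_lt_d9
        push_cast; linarith
      push_cast at h4
      nlinarith
    calc Real.log x ^ (1 / 16000 : ℝ) ≤ ((l:ℝ) ^ 2) ^ (1 / 16000 : ℝ) :=
          Real.rpow_le_rpow (Real.log_nonneg hx1) h1 (by norm_num)
      _ = u := by
        rw [hudef, ← Real.rpow_natCast, ← Real.rpow_mul hl0'.le]; norm_num
  have hJ : u ^ 2 ≤ (Nat.sqrt (l / 2) : ℝ) ^ (1 / 1000 : ℝ) := by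
    set J := Nat.sqrt (l / 2) with hJdef
    have h1 : l ≤ J ^ 4 := by
      have ha : l / 2 < (J + 1) ^ 2 := Nat.lt_succ_sqrt' _
      have hb : 6 ≤ J := by rw [hJdef, Nat.le_sqrt]; omega
      have hc : l < 2 * (J + 1) ^ 2 := by omega
      nlinarith [Nat.mul_le_mul hb hb, Nat.mul_le_mul (Nat.mul_le_mul hb hb) (Nat.le_refl (J * J))]
    have h2 : (l:ℝ) ≤ (J:ℝ) ^ 4 := by exact_mod_cast h1
    calc u ^ 2 = (l:ℝ) ^ (1 / 4000 : ℝ) := by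
          rw [hudef, ← Real.rpow_natCast, ← Real.rpow_mul hl0'.le]; norm_num
      _ ≤ ((J:ℝ) ^ 4) ^ (1 / 4000 : ℝ) := Real.rpow_le_rpow hl0'.le h2 (by norm_num)
      _ = _ := by rw [← Real.rpow_natCast, ← Real.rpow_mul (by positivity)]; norm_num
  have hpl : ((p0:ℝ) + 1) * ((l ^ 3 : ℕ):ℝ) ≤ (l:ℝ) ^ 4 := by
    push_cast
    calc ((p0:ℝ) + 1) * (l:ℝ) ^ 3 ≤ l * (l:ℝ) ^ 3 := by gcongr; linarith
      _ = _ := by ring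
  calc (l:ℝ) ^ 2 * ((p0 + 1) * ((l ^ 3 : ℕ):ℝ)) ^ w * ((l ^ 3 : ℕ):ℝ) ^ (2 * w ^ 2) *
      Real.exp (2 * Real.log x ^ (1 / 16000 : ℝ)) 
      ≤ (l:ℝ) ^ 2 * ((l:ℝ) ^ 4) ^ w * ((l:ℝ) ^ 3) ^ (2 * w ^ 2) * Real.exp (2 * u) := by
        push_cast at hpl ⊢
        gcongr
    _ = Real.exp (2 * lam + 4 * lam * w + 6 * lam * w ^ 2 + 2 * u) := by
        rw [← pow_mul, ← pow_mul, ← pow_add, ← pow_add, hlexp, ← Real.exp_nat_mul, ← Real.exp_add]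
        congr 1
        push_cast; ring
    _ ≤ Real.exp (2 * (Nat.sqrt (l / 2) : ℝ) ^ (1 / 1000 : ℝ)) := by
        apply Real.exp_le_exp.2
        have hw0 : (0:ℝ) ≤ w := by positivity
        have q1 : (w:ℝ) ^ 2 ≤ 9 * lam ^ 2 := by nlinarith
        have q2 : 4 * lam * w ≤ 12 * lam ^ 2 := by nlinarith
        have q3 : 6 * lam * w ^ 2 ≤ 54 * lam ^ 3 := by
          have := mul_le_mul_of_nonneg_left q1 (by linarith : 0 ≤ 6 * lam)
          nlinarith
        have q4 : lam ^ 2 ≤ lam ^ 3 := pow_le_pow_right₀ hlam1 (by norm_num)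
        have q5 : lam ≤ lam ^ 3 := le_self_pow₀ hlam1 (by norm_num)
        have q6 : lam ^ 3 ≤ u / 200 := by
          rw [hlu, mul_pow]
          calc 8000 ^ 3 * Real.log u ^ 3 ≤ 8000 ^ 3 * (1 / (200 * 8000 ^ 3) * u) := by gcongr
            _ = _ := by ring
        nlinarith

end LargeOrd


namespace LargeOrd

/-- primes with a large order -/
def GoodP (A : Matrix (Fin 2) (Fin 2) ℤ) (p : ℕ) : Prop :=
  p.Prime ∧ ∃ j : ℕ, 4 ^ j < p ∧ p ≤ 4 ^ (j + 1) ∧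
    2 ^ (j + 1) * Real.exp ((j:ℝ) ^ (1 / 1000 : ℝ)) < (matOrd A p : ℝ)

theorem GoodP.gain (A : Matrix (Fin 2) (Fin 2) ℤ) (p J1 : ℕ) (h : GoodP A p) (hJ : 4 ^ J1 < p) :
    Real.exp (2 * (J1:ℝ) ^ (1 / 1000 : ℝ)) * p ≤ (matOrd A p : ℝ) ^ 2 := by
  obtain ⟨hp, j, h1, h2, h3⟩ := h
  have hj : J1 ≤ j := by
    by_contra hc
    push Not at hc
    have : 4 ^ (j + 1) ≤ 4 ^ J1 := Nat.pow_le_pow_right (by norm_num) hc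
    omega
  have hjR : (J1:ℝ) ≤ j := by exact_mod_cast hj
  have h4 : (J1:ℝ) ^ (1 / 1000 : ℝ) ≤ (j:ℝ) ^ (1 / 1000 : ℝ) :=
    Real.rpow_le_rpow (by positivity) hjR (by norm_num)
  have h5 : (p:ℝ) ≤ 4 ^ (j + 1) := by exact_mod_cast h2
  calc Real.exp (2 * (J1:ℝ) ^ (1 / 1000 : ℝ)) * p 
      ≤ Real.exp (2 * (j:ℝ) ^ (1 / 1000 : ℝ)) * 4 ^ (j + 1) := by gcongr
    _ = (2 ^ (j + 1) * Real.exp ((j:ℝ) ^ (1 / 1000 : ℝ))) ^ 2 := by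
      rw [mul_pow, ← Real.exp_nat_mul, ← pow_mul, mul_comm (j + 1) 2, pow_mul]
      norm_num; ring
    _ ≤ _ := by gcongr

/-- the integers we want -/
def Wanted (A : Matrix (Fin 2) (Fin 2) ℤ) (N : ℕ) : Prop :=
  Real.sqrt N * Real.exp (Real.log N ^ (1 / 16000 : ℝ)) ≤ (matOrd A N : ℝ)

open Classical in
theorem exc_total (A : Matrix (Fin 2) (Fin 2) ℤ) (hA : A.det = 1) (htr : 2 < |A.trace|) :
    ∃ (D : ℝ) (l0 : ℕ), ∀ l ≥ l0, ∀ x : ℕ, 4 ^ l ≤ x → x < 4 ^ (l + 1) →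
      (((Finset.Ioc 0 x).filter (fun N => ¬ Wanted A N)).card : ℝ) ≤ x * (D / l + 96 / Real.log ((l / 2 : ℕ) : ℝ)) := by
  obtain ⟨p0, hp0⟩ := matOrd_dvd_pm A hA htr
  obtain ⟨C, hC⟩ := small_order_count A hA htr
  obtain ⟨j0, hj0⟩ := many_good A hA htr
  obtain ⟨l1, hl1⟩ := numeric p0
  have hj0' : ∀ j ≥ j0, (1 / 4 : ℝ) * 4 ^ j / j ≤ (((Finset.Ioc (4 ^ j) (4 ^ (j + 1))).filter (GoodP A)).card : ℝ) := by
    intro j hj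
    refine (hj0 j hj).trans ?_
    refine Nat.cast_le.2 (Finset.card_le_card ?_)
    intro p hp
    simp only [Finset.mem_filter, Finset.mem_Ioc] at hp ⊢
    exact ⟨hp.1, hp.2.1, j, hp.1.1, hp.1.2, hp.2.2⟩
  refine ⟨231 + 8 * C, l1 + p0 + 2 * (j0 + 10) ^ 2 + 200, fun l hl x hx1 hx2 => ?_⟩
  set J2 := l / 2 with hJ2
  set J1 := Nat.sqrt J2 with hJ1
  have hJ1j : j0 + 10 ≤ J1 := by rw [hJ1, Nat.le_sqrt']; omega
  have hJ12 : J1 ≤ J2 := Nat.sqrt_le_self _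
  have hx0 : 1 ≤ x := le_trans (Nat.one_le_pow _ _ (by norm_num)) hx1
  have h4J1 : l + p0 < 4 ^ J1 := by
    have h1 : J2 < (J1 + 1) ^ 2 := Nat.lt_succ_sqrt' _
    have h2 : ∀ n ≥ 10, 16 * (n + 1) ^ 2 < 4 ^ n := by
      intro n hn
      induction n, hn using Nat.le_induction with
      | base => norm_num
      | succ n hn ih =>
        have e : 4 ^ (n + 1) = 4 * 4 ^ n := by ring
        rw [e]; nlinarith
    have := h2 J1 (by omega)
    omega
  set G := (Finset.Ioc (4 ^ J1) (4 ^ J2)).filter (GoodP A) with hG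
  have hElow := recip_lower (GoodP A) (1 / 4) (by norm_num) j0 hj0' J1 J2 (by omega) (by omega) hJ12
  rw [← hG] at hElow
  have hJ2R : (1:ℝ) < J2 := by exact_mod_cast (by omega : 1 < J2)
  have hJ1R : (0:ℝ) < J1 := by exact_mod_cast (by omega : 0 < J1)
  have hlogJ2 : 0 < Real.log J2 := Real.log_pos hJ2R
  have hElow2 : Real.log J2 / 32 ≤ ∑ p ∈ G, (1 / p : ℝ) := by
    refine le_trans ?_ hElow
    rw [Real.log_div (by linarith) hJ1R.ne']
    have h1 : (J1:ℝ) ^ 2 ≤ J2 := by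
      have := Nat.sqrt_le' J2
      exact_mod_cast this
    have h2 := Real.log_le_log (by positivity) h1
    rw [Real.log_pow] at h2
    push_cast at h2
    linarith
  have hlR : (200:ℝ) ≤ l := by exact_mod_cast (by omega : 200 ≤ l)
  have hlogx : 1 + Real.log x ≤ 5 * l := by
    have h2 : (x:ℝ) ≤ 4 ^ (l + 1) := by exact_mod_cast hx2.le
    have h4 := Real.log_le_log (by exact_mod_cast hx0) h2
    rw [Real.log_pow] at h4
    have h5 : Real.log 4 ≤ 2 := by
      rw [show (4:ℝ) = 2 ^ 2 by norm_num, Real.log_pow]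
      have := Real.log_two_lt_d9
      push_cast; linarith
    push_cast at h4
    nlinarith
  have hlogx0 : 0 ≤ 1 + Real.log x := by
    have := Real.log_nonneg (by exact_mod_cast hx0 : (1:ℝ) ≤ x); linarith
  have hxR : (0:ℝ) ≤ x := by positivity
  set F := (Finset.Ioc 0 x).filter (fun N => ¬ Wanted A N) with hF
  set F1 := (Finset.Ioc 0 x).filter (fun N => ∃ b, l < b ∧ b ^ 2 ∣ N) with hF1
  set F2 := (Finset.Ioc 0 x).filter (fun N => l ^ 2 ≤ N.divisors.card) with hF2
  set F3 := (Finset.Ioc 0 x).filter (fun N => ∃ p, p.Prime ∧ p ∣ N ∧ l ^ 3 * matOrd A p ^ 2 ≤ p) with hF3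
  set F4 := (Finset.Ioc 0 x).filter (fun N => ∃ p p', p.Prime ∧ p'.Prime ∧ p ≠ p' ∧ p0 < p ∧ p0 < p' ∧ p ∣ N ∧ p' ∣ N ∧
      l ^ 3 < Nat.gcd (matOrd A p) (matOrd A p')) with hF4
  set F5 := (Finset.Ioc 0 x).filter (fun N => ∀ p ∈ G, ¬ p ∣ N) with hF5
  have hl3 : 200 ≤ l ^ 3 := le_trans (by omega : 200 ≤ l) (Nat.le_self_pow (by norm_num) l)
  have c1 : (F1.card : ℝ) ≤ x * (1 / l) := by
    have := exc_square x l (by omega) F1 (fun N hN => by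
      rw [hF1, Finset.mem_filter, Finset.mem_Ioc] at hN; exact ⟨hN.1.1, hN.1.2, hN.2⟩)
    rw [mul_one_div]; exact this
  have c2 : (F2.card : ℝ) ≤ x * (5 / l) := by
    have := exc_div x (l ^ 2) (Nat.one_le_pow _ _ (by omega)) F2 (fun N hN => by
      rw [hF2, Finset.mem_filter, Finset.mem_Ioc] at hN; exact ⟨hN.1.1, hN.1.2, hN.2⟩)
    refine this.trans ?_
    push_cast
    calc x * (1 + Real.log x) / (l:ℝ) ^ 2 ≤ x * (5 * l) / (l:ℝ) ^ 2 := by gcongr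
      _ = _ := by field_simp
  have c3 : (F3.card : ℝ) ≤ x * (8 * C / l) := by
    have := exc_small (matOrd A) C hC x (l ^ 3) l (by omega) hx2 F3 (fun N hN => by
      rw [hF3, Finset.mem_filter, Finset.mem_Ioc] at hN; exact ⟨hN.1.1, hN.1.2, hN.2⟩)
    refine this.trans ?_
    push_cast
    gcongr
    calc ((l:ℝ) + 1) * (4 * C / (l:ℝ) ^ 3) ≤ (2 * l ^ 2) * (4 * C / (l:ℝ) ^ 3) := by
          gcongr; nlinarith
      _ = _ := by field_simp; ring
  have c4 : (F4.card : ℝ) ≤ x * (225 / l) := by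
    have := exc_gcd (matOrd A) p0 hp0 x (l ^ 3) hx0 (by omega) F4 (fun N hN => by
      rw [hF4, Finset.mem_filter, Finset.mem_Ioc] at hN; exact ⟨hN.1.1, hN.1.2, hN.2⟩)
    refine this.trans ?_
    push_cast
    refine mul_le_mul_of_nonneg_left ?_ hxR
    calc 9 * (1 + Real.log x) ^ 2 / (l:ℝ) ^ 3 ≤ 9 * (5 * l) ^ 2 / (l:ℝ) ^ 3 := by gcongr
      _ = _ := by field_simp; ring
  have c5 : (F5.card : ℝ) ≤ x * (96 / Real.log J2) := by
    have := exc_none x (4 ^ J2) G (fun p hp => by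
      rw [hG, Finset.mem_filter, Finset.mem_Ioc] at hp
      exact ⟨hp.2.1, hp.1.2⟩) (le_trans (Nat.pow_le_pow_right (by norm_num) (by omega)) hx1) (by linarith) F5 (fun N hN => by
      rw [hF5, Finset.mem_filter, Finset.mem_Ioc] at hN; exact ⟨hN.1.1, hN.1.2, hN.2⟩)
    refine this.trans ?_
    refine mul_le_mul_of_nonneg_left ?_ hxR
    calc 3 / (∑ p ∈ G, (1 / p : ℝ)) ≤ 3 / (Real.log J2 / 32) := by gcongr
      _ = _ := by field_simp; ring
  have hsub : F ⊆ (((F1 ∪ F2) ∪ F3) ∪ F4) ∪ F5 := by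
    intro N hN
    rw [hF, Finset.mem_filter] at hN
    obtain ⟨hNI, hNW⟩ := hN
    by_contra hcon
    apply hNW
    simp only [Finset.mem_union, not_or] at hcon
    obtain ⟨⟨⟨⟨n1, n2⟩, n3⟩, n4⟩, n5⟩ := hcon
    simp only [hF1, hF2, hF3, hF4, hF5, Finset.mem_filter, hNI, true_and] at n1 n2 n3 n4 n5
    rw [Finset.mem_Ioc] at hNI
    push Not at n1 n2 n3 n4 n5
    obtain ⟨a, b, hab, hsq⟩ := Nat.sq_mul_squarefree N
    have ha0 : a ≠ 0 := hsq.ne_zero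
    have hb0 : b ≠ 0 := by rintro rfl; simp at hab; omega
    have haN : a ∣ N := ⟨b ^ 2, by rw [← hab, mul_comm]⟩
    have hbl : b ≤ l := by
      by_contra hc
      exact n1 b (not_le.1 hc) ⟨a, hab.symm⟩
    obtain ⟨ps, hpsG, hpsN⟩ := n5
    rw [hG, Finset.mem_filter, Finset.mem_Ioc] at hpsG
    obtain ⟨⟨hps1, hps2⟩, hpsGood⟩ := hpsG
    have hpsp := hpsGood.1
    have hpsa : ps ∣ a := by
      rw [← hab] at hpsN
      rcases (Nat.Prime.dvd_mul hpsp).1 hpsN with h | h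
      · have := Nat.le_of_dvd (Nat.pos_of_ne_zero hb0) (hpsp.dvd_of_dvd_pow h)
        omega
      · exact h
    have hw : 2 ^ a.primeFactors.card ≤ l ^ 2 := by
      have h1 := two_pow_omega N (by omega)
      have h2 : a.primeFactors.card ≤ N.primeFactors.card :=
        Finset.card_le_card (Nat.primeFactors_mono haN (by omega))
      exact ((Nat.pow_le_pow_right (by norm_num) h2).trans h1).trans n2.le
    have hOm := matOrd_pos A hA N hNI.1
    have hpf : ∀ p ∈ a.primeFactors, p.Prime ∧ p ∣ N := fun p hp =>
      ⟨Nat.prime_of_mem_primeFactors hp, (Nat.dvd_of_mem_primeFactors hp).trans haN⟩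
    have hdet := det_bound (matOrd A) N a b p0 (l ^ 3) (l ^ 3) l a.primeFactors.card (matOrd A N) ps
      (Real.exp (2 * (J1:ℝ) ^ (1 / 1000 : ℝ))) hab hsq hbl le_rfl (by omega) (by omega)
      (fun p hp _ => matOrd_pos A hA p (hpf p hp).1.pos)
      (fun p hp _ => (n3 p (hpf p hp).1 (hpf p hp).2).le)
      (fun p hp q hq h1 h2 hne => n4 p q (hpf p hp).1 (hpf q hq).1 hne h1 h2 (hpf p hp).2 (hpf q hq).2)
      (Nat.mem_primeFactors.2 ⟨hpsp, hpsa, ha0⟩) (by omega) (Real.exp_pos _).le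
      (GoodP.gain A ps J1 hpsGood hps1) hOm
      (fun p hp _ => matOrd_dvd A hA p N hNI.1 (hpf p hp).2)
    have hnum := hl1 l (by omega) x a.primeFactors.card hx0 hx2 hw
    rw [← hJ2, ← hJ1] at hnum
    set H := (l:ℝ) ^ 2 * ((p0 + 1) * ((l ^ 3 : ℕ):ℝ)) ^ a.primeFactors.card * ((l ^ 3 : ℕ):ℝ) ^ (2 * a.primeFactors.card ^ 2) with hH
    have hHpos : 0 < H := by
      have : (0:ℝ) < l := by linarith
      rw [hH]; positivity
    have hfin : Real.exp (2 * Real.log x ^ (1 / 16000 : ℝ)) * N ≤ (matOrd A N : ℝ) ^ 2 := by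
      have h1 : H * Real.exp (2 * Real.log x ^ (1 / 16000 : ℝ)) * N ≤ H * (matOrd A N : ℝ) ^ 2 :=
        (mul_le_mul_of_nonneg_right hnum (by positivity)).trans hdet
      rw [mul_assoc] at h1
      exact le_of_mul_le_mul_left h1 hHpos
    have hN1 : (1:ℝ) ≤ N := by exact_mod_cast hNI.1
    have hNx : (N:ℝ) ≤ x := by exact_mod_cast hNI.2
    have hlN : Real.log N ^ (1 / 16000 : ℝ) ≤ Real.log x ^ (1 / 16000 : ℝ) :=
      Real.rpow_le_rpow (Real.log_nonneg hN1) (Real.log_le_log (by linarith) hNx) (by norm_num)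
    unfold Wanted
    apply le_of_sq_le_sq _ (by positivity)
    rw [mul_pow, Real.sq_sqrt (by linarith), ← Real.exp_nat_mul]
    refine le_trans ?_ hfin
    rw [mul_comm]
    push_cast
    gcongr
  have hcard : F.card ≤ (((F1.card + F2.card) + F3.card) + F4.card) + F5.card := by
    have h0 := Finset.card_le_card hsub
    have h1 := Finset.card_union_le (((F1 ∪ F2) ∪ F3) ∪ F4) F5
    have h2 := Finset.card_union_le ((F1 ∪ F2) ∪ F3) F4
    have h3 := Finset.card_union_le (F1 ∪ F2) F3
    have h4 := Finset.card_union_le F1 F2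
    omega
  have hcardR : (F.card : ℝ) ≤ (((F1.card + F2.card) + F3.card) + F4.card) + F5.card := by exact_mod_cast hcard
  calc (F.card : ℝ) ≤ _ := hcardR
    _ ≤ (((x * (1 / l) + x * (5 / l)) + x * (8 * C / l)) + x * (225 / l)) + x * (96 / Real.log J2) := by gcongr
    _ = _ := by ring

open Classical in
theorem density (A : Matrix (Fin 2) (Fin 2) ℤ) (hA : A.det = 1) (htr : 2 < |A.trace|) :
    DensityOne {N | Wanted A N} := by
  obtain ⟨D, l0, h⟩ := exc_total A hA htr
  unfold DensityOne
  have hl : Filter.Tendsto (fun x : ℕ => Nat.log 4 x) Filter.atTop Filter.atTop := by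
    apply Filter.tendsto_atTop.2
    intro b
    filter_upwards [Filter.eventually_ge_atTop (4 ^ b)] with x hx
    exact Nat.le_log_of_pow_le (by norm_num) hx
  have heps : Filter.Tendsto (fun l : ℕ => D / (l:ℝ) + 96 / Real.log ((l / 2 : ℕ) : ℝ)) Filter.atTop (nhds 0) := by
    have t1 : Filter.Tendsto (fun l : ℕ => D / (l:ℝ)) Filter.atTop (nhds 0) :=
      tendsto_const_div_atTop_nhds_zero_nat D
    have t2 : Filter.Tendsto (fun l : ℕ => 96 / Real.log ((l / 2 : ℕ) : ℝ)) Filter.atTop (nhds 0) := by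
      apply Filter.Tendsto.const_div_atTop
      apply Real.tendsto_log_atTop.comp
      apply tendsto_natCast_atTop_atTop.comp
      exact Filter.tendsto_atTop.2 (fun b => by
        filter_upwards [Filter.eventually_ge_atTop (2 * b)] with x hx
        omega)
    simpa using t1.add t2
  have hlow : Filter.Tendsto (fun x : ℕ => 1 - (D / (Nat.log 4 x:ℝ) + 96 / Real.log ((Nat.log 4 x / 2 : ℕ) : ℝ))) Filter.atTop (nhds 1) := by
    have := (heps.comp hl).const_sub 1
    simpa using this
  have hset : ∀ x : ℕ, {N | Wanted A N} ∩ Set.Icc 1 x = (((Finset.Ioc 0 x).filter (Wanted A) : Finset ℕ) : Set ℕ) := by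
    intro x
    ext N
    simp only [Set.mem_inter_iff, Set.mem_ofPred_eq, Set.mem_Icc, Finset.coe_filter, Finset.mem_Ioc]
    constructor
    · rintro ⟨h1, h2, h3⟩; exact ⟨⟨by omega, h3⟩, h1⟩
    · rintro ⟨⟨h1, h2⟩, h3⟩; exact ⟨h3, by omega, h2⟩
  refine tendsto_of_tendsto_of_tendsto_of_le_of_le' hlow tendsto_const_nhds ?_ ?_
  · filter_upwards [hl.eventually_ge_atTop l0, Filter.eventually_ge_atTop 1] with x hx hx1
    have h1 := h (Nat.log 4 x) hx x (Nat.pow_log_le_self 4 (by omega)) (Nat.lt_pow_succ_log_self (by norm_num) x)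
    rw [hset, Set.ncard_coe_finset]
    have h2 := Finset.card_filter_add_card_filter_not (s := Finset.Ioc 0 x) (Wanted A)
    rw [Nat.card_Ioc] at h2
    have h3 : (((Finset.Ioc 0 x).filter (Wanted A)).card : ℝ) + (((Finset.Ioc 0 x).filter (fun N => ¬ Wanted A N)).card : ℝ) = x := by
      exact_mod_cast h2
    have hx0 : (0:ℝ) < x := by exact_mod_cast hx1
    rw [le_div_iff₀ hx0]
    linarith
  · filter_upwards [] with x
    rw [hset, Set.ncard_coe_finset]
    apply div_le_one_of_le₀ _ (by positivity)
    have := Finset.card_filter_le (Finset.Ioc 0 x) (Wanted A)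
    rw [Nat.card_Ioc] at this
    exact_mod_cast this

end LargeOrd

theorem large_order_for_almost_all
    (A : Matrix (Fin 2) (Fin 2) ℤ) (hA : A.det = 1) (htr : 2 < |A.trace|) :
    ∃ δ : ℝ, 0 < δ ∧ ∃ c : ℝ, 0 < c ∧ ∃ S : Set ℕ, DensityOne S ∧
      ∀ N ∈ S, c * Real.sqrt N * Real.exp (Real.log N ^ δ) ≤ (matOrd A N : ℝ) := by
  refine ⟨1 / 16000, by norm_num, 1, one_pos, {N | LargeOrd.Wanted A N}, LargeOrd.density A hA htr, fun N hN => ?_⟩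
  rw [one_mul]
  exact hN
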